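/- arXiv:1604.08830 — 3 statements merged into one kernel-verified Lean document; each statement's English description precedes it below -/
import Mathlib

section
/- Let n ≥ 2, −∞ < μ < 1/4 and let γ ∈ (−(n−2+α₊), α₊). Then there exist a constant c > 0 and a positive function H_γ ∈ C²(ℝⁿ₊) which is L_μ-harmonic on ℝⁿ₊ (i.e. ΔH_γ + (μ/x₁²)H_γ = 0), axially symmetric (H_γ(x) depends only on x₁ and |x|), homogeneous of degree γ (H_γ(λx) = λ^γ H_γ(x) for all λ > 0), and satisfies c⁻¹ x₁^{α₋} |x|^{γ−α₋} ≤ H_γ(x) ≤ c x₁^{α₋} |x|^{γ−α₋} for all x ∈ ℝⁿ₊. -/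
open Real Set

noncomputable def lap {n : ℕ} (u : EuclideanSpace ℝ (Fin n) → ℝ)
    (x : EuclideanSpace ℝ (Fin n)) : ℝ :=
  ∑ i : Fin n, iteratedFDeriv ℝ 2 u x ![EuclideanSpace.single i 1, EuclideanSpace.single i 1]

noncomputable def x1 {n : ℕ} (x : EuclideanSpace ℝ (Fin n)) : ℝ :=
  if h : 0 < n then x ⟨0, h⟩ else 0

def halfSpace (n : ℕ) : Set (EuclideanSpace ℝ (Fin n)) := {x | 0 < x1 x}

noncomputable def aPlus (μ : ℝ) : ℝ := 1 / 2 + Real.sqrt (1 / 4 - μ)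

noncomputable def aMinus (μ : ℝ) : ℝ := 1 / 2 - Real.sqrt (1 / 4 - μ)

noncomputable def Lam (n : ℕ) (s : ℝ) : ℝ := s * (s + n - 2)


lemma hasSum_congr' {f g : ℕ → ℝ} {a : ℝ} (h : HasSum f a) (e : ∀ k, g k = f k) : HasSum g a := by
  rwa [show g = f from funext e]

lemma summable_congr' {f g : ℕ → ℝ} (h : Summable f) (e : ∀ k, g k = f k) : Summable g := by
  rwa [show g = f from funext e]

def PolyB (c : ℕ → ℝ) : Prop := ∃ K : ℝ, ∃ m : ℕ, ∀ k : ℕ, |c k| ≤ K * ((k : ℝ) + 1) ^ m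

noncomputable def PS (c : ℕ → ℝ) (s : ℝ) : ℝ := ∑' k, c k * s ^ k

def DC (c : ℕ → ℝ) (k : ℕ) : ℝ := ((k : ℝ) + 1) * c (k + 1)

lemma PolyB.DC {c : ℕ → ℝ} (h : PolyB c) : PolyB (DC c) := by
  obtain ⟨K, m, h⟩ := h
  refine ⟨|K| * 2 ^ m, m + 1, fun k => ?_⟩
  have h1 := h (k + 1)
  have hk : (0 : ℝ) ≤ k := k.cast_nonneg
  unfold _root_.DC
  rw [abs_mul, abs_of_nonneg (by positivity)]
  have h2 : K * (((k + 1 : ℕ) : ℝ) + 1) ^ m ≤ |K| * (2 * ((k : ℝ) + 1)) ^ m := by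
    apply mul_le_mul (le_abs_self K) _ (by positivity) (by positivity)
    gcongr
    push_cast; linarith
  calc ((k : ℝ) + 1) * |c (k + 1)| ≤ ((k : ℝ) + 1) * (|K| * (2 * ((k : ℝ) + 1)) ^ m) := by
        gcongr; exact h1.trans h2
    _ = _ := by rw [mul_pow]; ring

lemma PolyB.summable_abs {c : ℕ → ℝ} (h : PolyB c) {r : ℝ} (hr : |r| < 1) :
    Summable (fun k => |c k| * |r| ^ k) := by
  obtain ⟨K, m, h⟩ := h
  have hs : Summable (fun k : ℕ => |K| * 2 ^ m * ((k : ℝ) ^ m * |r| ^ k) + |K| * |r| ^ k) := by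
    apply Summable.add
    · apply Summable.mul_left
      exact summable_pow_mul_geometric_of_norm_lt_one m (by simpa using hr)
    · apply Summable.mul_left
      exact summable_geometric_of_lt_one (abs_nonneg _) hr
  refine Summable.of_nonneg_of_le (fun k => by positivity) (fun k => ?_) hs
  have : |c k| ≤ |K| * 2 ^ m * (k : ℝ) ^ m + |K| := by
    refine (h k).trans ?_
    rcases Nat.eq_zero_or_pos k with rfl | hk
    · simp
      have : 0 ≤ |K| * 2 ^ m * (0 : ℝ) ^ m := by positivity
      linarith [le_abs_self K]
    · have hk' : (1 : ℝ) ≤ k := by exact_mod_cast hk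
      have : K * ((k : ℝ) + 1) ^ m ≤ |K| * (2 * (k : ℝ)) ^ m := by
        apply mul_le_mul (le_abs_self K) _ (by positivity) (by positivity)
        gcongr
        linarith
      rw [mul_pow] at this
      have := abs_nonneg K
      linarith
  calc _ ≤ (|K| * 2 ^ m * (k : ℝ) ^ m + |K|) * |r| ^ k := by gcongr
    _ = _ := by ring

lemma PolyB.summable {c : ℕ → ℝ} (h : PolyB c) {r : ℝ} (hr : |r| < 1) :
    Summable (fun k => c k * r ^ k) := by
  apply Summable.of_norm
  simpa [abs_mul, abs_pow] using h.summable_abs hr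

lemma PolyB.hasDerivAt {c : ℕ → ℝ} (h : PolyB c) {s : ℝ} (hs : |s| < 1) :
    HasDerivAt (PS c) (PS (_root_.DC c) s) s := by
  obtain ⟨r, hr, hr1⟩ := exists_between hs
  have hr0 : 0 < r := (abs_nonneg s).trans_lt hr
  have key := hasDerivAt_tsum_of_isPreconnected (𝕜 := ℝ) (F := ℝ)
    (g := fun (k : ℕ) (y : ℝ) => c k * y ^ k) (g' := fun (k : ℕ) (y : ℝ) => c k * (k * y ^ (k - 1)))
    (u := fun k : ℕ => |c k| * (k * r ^ (k - 1))) (t := Set.Ioo (-r) r) (y₀ := 0) (y := s)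
    ?_ isOpen_Ioo isPreconnected_Ioo ?_ ?_ ⟨by linarith, hr0⟩ ?_ (abs_lt.mp hr)
  · refine HasDerivAt.congr_deriv key ?_
    unfold PS
    rw [Summable.tsum_eq_zero_add (f := fun k : ℕ => c k * (k * s ^ (k - 1)))]
    · simp [_root_.DC]
      congr 1; ext k; ring
    · rw [← summable_nat_add_iff 1]
      refine summable_congr' (h.DC.summable hs) fun k => ?_
      simp [_root_.DC]; ring
  · rw [← summable_nat_add_iff 1]
    refine summable_congr' (h.DC.summable_abs (r := r) (by rwa [abs_of_pos hr0])) fun k => ?_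
    simp only [_root_.DC, abs_mul, abs_of_pos hr0]
    rw [abs_of_nonneg (by positivity : (0 : ℝ) ≤ (k : ℝ) + 1)]
    simp; ring
  · intro k y _
    exact (hasDerivAt_pow k y).const_mul _
  · intro k y hy
    have : |y| ≤ r := (abs_lt.mpr hy).le
    simp only [norm_mul, norm_pow, Real.norm_eq_abs, Nat.abs_cast]
    gcongr
  · exact h.summable (by simp)

lemma PolyB.contDiffOn (n : ℕ) : ∀ {c : ℕ → ℝ}, PolyB c → ContDiffOn ℝ n (PS c) (Set.Ioo (-1) 1) := by
  induction n with
  | zero =>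
    intro c h
    simp only [Nat.cast_zero, contDiffOn_zero]
    exact fun s hs => (h.hasDerivAt (abs_lt.mpr hs)).continuousAt.continuousWithinAt
  | succ n ih =>
    intro c h
    push_cast
    rw [contDiffOn_succ_iff_deriv_of_isOpen isOpen_Ioo]
    refine ⟨fun s hs => (h.hasDerivAt (abs_lt.mpr hs)).differentiableAt.differentiableWithinAt,
      by simp, ?_⟩
    exact (ih h.DC).congr fun s hs => (h.hasDerivAt (abs_lt.mpr hs)).deriv

/-- pochhammer-like product sequence -/
noncomputable def hyp (p q C e : ℝ) : ℕ → ℝ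
  | 0 => 1
  | k + 1 => hyp p q C e k * ((p + k) * (q + k) / ((C + k) * (e + k)))

lemma hyp_pos {p q C e : ℝ} (hp : 0 < p) (hq : 0 < q) (hC : 0 < C) (he : 0 < e) (k : ℕ) :
    0 < hyp p q C e k := by
  induction k with
  | zero => simp [hyp]
  | succ k ih => simp only [hyp]; positivity

lemma hyp_bdd {p q C e : ℝ} (hp : 0 < p) (hq : 0 < q) (hC : 0 < C) (he : 0 < e)
    (h : p + q = C + e) : ∃ K > 0, ∀ k, hyp p q C e k ≤ K := by
  have hs : Summable (fun k : ℕ => |p * q - C * e| / ((C + k) * (e + k))) := by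
    rw [← summable_nat_add_iff 1]
    have h0 : Summable (fun k : ℕ => |p * q - C * e| * (1 / ((k + 1 : ℕ) : ℝ) ^ 2)) :=
      ((summable_nat_add_iff 1).mpr (Real.summable_one_div_nat_pow.mpr one_lt_two)).mul_left _
    refine Summable.of_nonneg_of_le (fun k => by positivity) (fun k => ?_) h0
    rw [div_eq_mul_one_div]
    have : (0 : ℝ) < ((k + 1 : ℕ) : ℝ) := by positivity
    gcongr
    nlinarith
  refine ⟨Real.exp (∑' k : ℕ, |p * q - C * e| / ((C + k) * (e + k))), by positivity, fun k => ?_⟩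
  have : hyp p q C e k ≤ Real.exp (∑ j ∈ Finset.range k, |p * q - C * e| / ((C + j) * (e + j))) := by
    induction k with
    | zero => simp [hyp]
    | succ k ih =>
      rw [Finset.sum_range_succ, Real.exp_add]
      simp only [hyp]
      gcongr
      have h1 : (p + k) * (q + k) / ((C + k) * (e + k)) =
          (p * q - C * e) / ((C + k) * (e + k)) + 1 := by
        field_simp
        linear_combination (k : ℝ) * h
      rw [h1]
      refine le_trans ?_ (Real.add_one_le_exp _)
      gcongr
      exact le_abs_self _
  refine this.trans (Real.exp_le_exp.mpr ?_)
  exact hs.sum_le_tsum _ (fun k _ => by positivity)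

/-- binomial coefficients -/
noncomputable def bin (σ : ℝ) : ℕ → ℝ
  | 0 => 1
  | k + 1 => bin σ k * ((σ + k) / (1 + k))

lemma bin_pos {σ : ℝ} (h : 0 < σ) (k : ℕ) : 0 < bin σ k := by
  induction k with
  | zero => simp [bin]
  | succ k ih => simp only [bin]; positivity

lemma bin_polyB {σ : ℝ} (h : 0 < σ) : PolyB (bin σ) := by
  obtain ⟨m, hm⟩ := exists_nat_ge σ
  refine ⟨1, m, fun k => ?_⟩
  rw [abs_of_pos (bin_pos h k), one_mul]
  induction k with
  | zero => simp [bin]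
  | succ k ih =>
    simp only [bin]
    have h1 : (σ + k) / (1 + k) ≤ (((k : ℝ) + 2) / (k + 1)) ^ m := by
      have := one_add_mul_le_pow (a := 1 / ((k : ℝ) + 1)) (by
        have : 0 ≤ 1 / ((k : ℝ) + 1) := by positivity
        linarith) m
      have e : 1 + 1 / ((k : ℝ) + 1) = ((k : ℝ) + 2) / (k + 1) := by field_simp; ring
      rw [e] at this
      refine le_trans ?_ this
      have e2 : 1 + (m : ℝ) * (1 / ((k : ℝ) + 1)) = (m + k + 1) / (1 + k) := by field_simp; ring
      rw [e2]
      exact div_le_div_of_nonneg_right (by linarith) (by positivity)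
    calc _ ≤ ((k : ℝ) + 1) ^ m * (((k : ℝ) + 2) / (k + 1)) ^ m := by gcongr
      _ = _ := by
        rw [← mul_pow]; congr 1; push_cast; field_simp; ring

lemma bin_sum {σ : ℝ} (h : 0 < σ) {s : ℝ} (hs0 : 0 ≤ s) (hs : s < 1) :
    PS (bin σ) s = (1 - s) ^ (-σ) := by
  have hB := bin_polyB h
  have ode : ∀ y : ℝ, |y| < 1 → (1 - y) * PS (DC (bin σ)) y = σ * PS (bin σ) y := by
    intro y hy
    have e1 : PS (DC (bin σ)) y = PS (fun k => σ * bin σ k + k * bin σ k) y := by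
      unfold PS; congr 1; ext k; simp only [DC, bin]; field_simp; ring
    have hsum := hB.summable hy
    have hsumD := hB.DC.summable hy
    have e2 : HasSum (fun k : ℕ => (k : ℝ) * bin σ k * y ^ k) (y * PS (DC (bin σ)) y) := by
      rw [← hasSum_nat_add_iff' 1]
      simp only [Finset.range_one, Finset.sum_singleton, Nat.cast_zero, zero_mul, sub_zero]
      refine hasSum_congr' (hsumD.hasSum.mul_left y) fun k => ?_
      simp only [DC]; push_cast; ring
    have e3 := (hsum.hasSum.mul_left σ).add e2
    have e4 : PS (fun k => σ * bin σ k + k * bin σ k) y = σ * PS (bin σ) y + y * PS (DC (bin σ)) y := by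
      unfold PS at e3 ⊢
      rw [← e3.tsum_eq]; congr 1; ext k; ring
    rw [e4] at e1
    linear_combination e1
  have hd : ∀ y : ℝ, |y| < 1 → HasDerivAt (fun y => PS (bin σ) y * (1 - y) ^ σ) 0 y := by
    intro y hy
    have hy1 : 0 < 1 - y := by linarith [(abs_lt.mp hy).2]
    have h1 := (hB.hasDerivAt hy).mul (((hasDerivAt_id y).const_sub 1).rpow_const (p := σ)
      (Or.inl hy1.ne'))
    refine h1.congr_deriv ?_
    have := ode y hy
    simp only [id]
    rw [Real.rpow_sub_one hy1.ne']
    field_simp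
    linear_combination (1 - y) ^ σ * this
  have hc : PS (bin σ) s * (1 - s) ^ σ = PS (bin σ) 0 * (1 - 0) ^ σ := by
    have := (convex_Ioo (-1 : ℝ) 1).is_const_of_fderivWithin_eq_zero (𝕜 := ℝ)
      (f := fun y => PS (bin σ) y * (1 - y) ^ σ) (x := s) (y := 0)
      (fun y hy => (hd y (abs_lt.mpr hy)).differentiableAt.differentiableWithinAt)
      (fun y hy => by
        have h1 := (hd y (abs_lt.mpr hy)).hasFDerivAt.hasFDerivWithinAt (s := Set.Ioo (-1 : ℝ) 1)
        rw [h1.fderivWithin (isOpen_Ioo.uniqueDiffWithinAt hy)]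
        ext; simp) ⟨by linarith, hs⟩ ⟨by norm_num, by norm_num⟩
    exact this
  have h0 : PS (bin σ) 0 = 1 := by
    unfold PS
    rw [tsum_eq_single 0]
    · simp [bin]
    · intro k hk; simp [hk]
  have hs1 : 0 < 1 - s := by linarith
  rw [h0] at hc
  simp only [sub_zero, Real.one_rpow, mul_one] at hc
  rw [Real.rpow_neg hs1.le]
  exact eq_inv_of_mul_eq_one_left hc

lemma hyp_one {p q C σ : ℝ} (hσ : 0 < σ) (k : ℕ) :
    hyp p q C 1 k = hyp p q C σ k * bin σ k := by
  induction k with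
  | zero => simp [hyp, bin]
  | succ k ih =>
    simp only [hyp, bin, ih]
    have : σ + k ≠ 0 := by positivity
    field_simp

lemma hyp_inv {p q C e : ℝ} (k : ℕ) :
    hyp C e p q k = (hyp p q C e k)⁻¹ := by
  induction k with
  | zero => simp [hyp]
  | succ k ih =>
    simp only [hyp, ih, mul_inv, inv_div]

lemma exists_G {p q C σ : ℝ} (hp : 0 < p) (hq : 0 < q) (hC : 0 < C) (hσ : 0 < σ)
    (h : p + q = C + σ) : ∃ G G' G'' : ℝ → ℝ, ∃ K > (0 : ℝ),
      ContDiffOn ℝ 2 G (Set.Ioo (-1) 1) ∧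
      (∀ s, |s| < 1 → HasDerivAt G (G' s) s) ∧
      (∀ s, |s| < 1 → HasDerivAt G' (G'' s) s) ∧
      (∀ s, |s| < 1 → s * (1 - s) * G'' s + (C - (p + q + 1) * s) * G' s - p * q * G s = 0) ∧
      (∀ s, 0 ≤ s → s < 1 → K⁻¹ * (1 - s) ^ (-σ) ≤ G s ∧ G s ≤ K * (1 - s) ^ (-σ)) := by
  obtain ⟨K1, hK1, hb1⟩ := hyp_bdd hp hq hC hσ h
  obtain ⟨K2, hK2, hb2⟩ := hyp_bdd hC hσ hp hq h.symm
  set c := hyp p q C 1 with hc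
  have hcpos : ∀ k, 0 < c k := fun k => hyp_pos hp hq hC one_pos k
  have hup : ∀ k, c k ≤ K1 * bin σ k := fun k => by
    rw [hc, hyp_one hσ]; exact mul_le_mul_of_nonneg_right (hb1 k) (bin_pos hσ k).le
  have hlo : ∀ k, bin σ k ≤ K2 * c k := fun k => by
    rw [hc, hyp_one hσ]
    have h1 := hb2 k
    rw [hyp_inv] at h1
    have h2 := hyp_pos hp hq hC hσ k
    rw [inv_le_iff_one_le_mul₀ h2] at h1
    have h3 := bin_pos hσ k
    nlinarith
  have hB := bin_polyB hσ
  have hcB : PolyB c := by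
    obtain ⟨K, m, hK⟩ := hB
    refine ⟨K1 * K, m, fun k => ?_⟩
    rw [abs_of_pos (hcpos k)]
    calc c k ≤ K1 * |bin σ k| := (hup k).trans (by gcongr; exact le_abs_self _)
      _ ≤ K1 * (K * ((k : ℝ) + 1) ^ m) := by gcongr; exact hK k
      _ = _ := by ring
  refine ⟨PS c, PS (DC c), PS (DC (DC c)), max K1 K2, lt_max_of_lt_left hK1, ?_, ?_, ?_, ?_, ?_⟩
  · exact_mod_cast hcB.contDiffOn 2
  · exact fun s hs => hcB.hasDerivAt hs
  · exact fun s hs => hcB.DC.hasDerivAt hs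
  · intro s hs
    have s0 := (hcB.summable hs).hasSum
    have s1 := (hcB.DC.summable hs).hasSum
    have s2 := (hcB.DC.DC.summable hs).hasSum
    have t1 : HasSum (fun k : ℕ => (k : ℝ) * c k * s ^ k) (s * PS (DC c) s) := by
      rw [← hasSum_nat_add_iff' 1]
      simp only [Finset.range_one, Finset.sum_singleton, Nat.cast_zero, zero_mul, sub_zero]
      refine hasSum_congr' (s1.mul_left s) fun k => ?_
      simp only [DC]; push_cast; ring
    have t2 : HasSum (fun k : ℕ => (k : ℝ) * DC c k * s ^ k) (s * PS (DC (DC c)) s) := by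
      rw [← hasSum_nat_add_iff' 1]
      simp only [Finset.range_one, Finset.sum_singleton, Nat.cast_zero, zero_mul, sub_zero]
      refine hasSum_congr' (s2.mul_left s) fun k => ?_
      simp only [DC]; push_cast; ring
    have t3 : HasSum (fun k : ℕ => (k : ℝ) * ((k : ℝ) - 1) * c k * s ^ k)
        (s * (s * PS (DC (DC c)) s)) := by
      rw [← hasSum_nat_add_iff' 1]
      simp only [Finset.range_one, Finset.sum_singleton, Nat.cast_zero, zero_mul, sub_zero]
      refine hasSum_congr' (t2.mul_left s) fun k => ?_
      simp only [DC]; push_cast; ring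
    have tot := (((t2.sub t3).add (s1.mul_left C)).sub (t1.mul_left (p + q + 1))).sub
      (s0.mul_left (p * q))
    have hz : HasSum (fun _ : ℕ => (0 : ℝ)) 0 := hasSum_zero
    have := tot.unique (by
      refine hasSum_congr' (hz) fun k => ?_
      have : c (k + 1) = c k * ((p + k) * (q + k) / ((C + k) * (1 + k))) := rfl
      simp only [DC, this]
      field_simp
      ring)
    unfold PS at this ⊢
    linear_combination this
  · intro s hs0 hs
    have hsa : |s| < 1 := by rwa [abs_of_nonneg hs0]
    rw [← bin_sum hσ hs0 hs]
    have hb := hB.summable hsa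
    have hcs := hcB.summable hsa
    have hbn : 0 ≤ PS (bin σ) s := tsum_nonneg fun k => mul_nonneg (bin_pos hσ k).le (by positivity)
    have hcn : 0 ≤ PS c s := tsum_nonneg fun k => mul_nonneg (hcpos k).le (by positivity)
    constructor
    · rw [inv_mul_le_iff₀ (lt_max_of_lt_left hK1)]
      have : PS (bin σ) s ≤ K2 * PS c s := by
        unfold PS
        rw [← tsum_mul_left]
        refine hb.tsum_le_tsum (fun k => ?_) (hcs.mul_left _)
        have := mul_le_mul_of_nonneg_right (hlo k) (pow_nonneg hs0 k)
        linarith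
      exact this.trans (mul_le_mul_of_nonneg_right (le_max_right _ _) hcn)
    · have : PS c s ≤ K1 * PS (bin σ) s := by
        unfold PS
        rw [← tsum_mul_left]
        refine hcs.tsum_le_tsum (fun k => ?_) (hb.mul_left _)
        have := mul_le_mul_of_nonneg_right (hup k) (pow_nonneg hs0 k)
        linarith
      exact this.trans (mul_le_mul_of_nonneg_right (le_max_left _ _) hbn)

lemma iteratedFDeriv_two_line {E : Type*} [NormedAddCommGroup E] [NormedSpace ℝ E]
    {u : E → ℝ} {x v : E} (hu : ContDiffAt ℝ 2 u x) {f' : ℝ → ℝ} {f'' : ℝ}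
    (h1 : ∀ᶠ τ in nhds (0 : ℝ), HasDerivAt (fun τ : ℝ => u (x + τ • v)) (f' τ) τ)
    (h2 : HasDerivAt f' f'' 0) : iteratedFDeriv ℝ 2 u x ![v, v] = f'' := by
  rw [iteratedFDeriv_two_apply]
  simp only [Matrix.cons_val_zero, Matrix.cons_val_one]
  have hline : ∀ τ : ℝ, HasDerivAt (fun τ : ℝ => x + τ • v) v τ := fun τ => by
    simpa using ((hasDerivAt_id τ).smul_const v).const_add x
  have hcont : Filter.Tendsto (fun τ : ℝ => x + τ • v) (nhds 0) (nhds x) := by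
    have := (hline 0).continuousAt.tendsto
    simpa using this
  have hd : ∀ᶠ y in nhds x, DifferentiableAt ℝ u y := by
    filter_upwards [hu.eventually (by simp)] with y hy
    exact hy.differentiableAt (by simp)
  have hdf : DifferentiableAt ℝ (fderiv ℝ u) x :=
    (hu.fderiv_right (m := 1) (by norm_num)).differentiableAt (by simp)
  have e1 : ∀ᶠ τ in nhds (0 : ℝ), fderiv ℝ u (x + τ • v) v = f' τ := by
    filter_upwards [h1, hcont.eventually hd] with τ a b
    exact (b.hasFDerivAt.comp_hasDerivAt τ (hline τ)).unique a
  have e2 : HasDerivAt (fun τ : ℝ => fderiv ℝ u (x + τ • v) v) (fderiv ℝ (fderiv ℝ u) x v v) 0 := by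
    have hx : HasFDerivAt (fderiv ℝ u) (fderiv ℝ (fderiv ℝ u) x) (x + (0 : ℝ) • v) := by
      simpa using hdf.hasFDerivAt
    have := hx.comp_hasDerivAt (0 : ℝ) (hline 0)
    simpa using this.clm_apply (hasDerivAt_const (0 : ℝ) v)
  exact (e2.congr_of_eventuallyEq (Filter.EventuallyEq.symm e1)).unique h2

/-- first derivative along a line of `T^a W^b G(1 - T²/W)` -/
lemma line_first {a b : ℝ} {G G' : ℝ → ℝ} {T W : ℝ → ℝ} {ε W' τ : ℝ}
    (hT : HasDerivAt T ε τ) (hW : HasDerivAt W W' τ) (T0 : 0 < T τ) (W0 : 0 < W τ)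
    (hG : HasDerivAt G (G' (1 - T τ ^ 2 / W τ)) (1 - T τ ^ 2 / W τ)) :
    HasDerivAt (fun τ => T τ ^ a * W τ ^ b * G (1 - T τ ^ 2 / W τ))
      (T τ ^ a * W τ ^ b * ((a * ε / T τ + b * W' / W τ) * G (1 - T τ ^ 2 / W τ) +
        (-2 * T τ * ε / W τ + T τ ^ 2 * W' / W τ ^ 2) * G' (1 - T τ ^ 2 / W τ))) τ := by
  have hTa := hT.rpow_const (p := a) (Or.inl T0.ne')
  have hWb := hW.rpow_const (p := b) (Or.inl W0.ne')
  have hS := ((hT.fun_pow 2).fun_div hW W0.ne').const_sub 1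
  have hGS := hG.comp τ hS
  refine ((hTa.fun_mul hWb).fun_mul hGS).congr_deriv ?_
  simp only [Function.comp]
  rw [Real.rpow_sub_one T0.ne', Real.rpow_sub_one W0.ne']
  generalize T τ ^ a = A
  generalize W τ ^ b = B
  generalize G (1 - T τ ^ 2 / W τ) = g
  generalize G' (1 - T τ ^ 2 / W τ) = g'
  field_simp
  ring

lemma line_second {a b : ℝ} {G G' G'' : ℝ → ℝ} {T W W' : ℝ → ℝ} {ε W'' τ : ℝ}
    (hT : HasDerivAt T ε τ) (hW : HasDerivAt W (W' τ) τ) (hW' : HasDerivAt W' W'' τ)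
    (T0 : 0 < T τ) (W0 : 0 < W τ)
    (hG : HasDerivAt G (G' (1 - T τ ^ 2 / W τ)) (1 - T τ ^ 2 / W τ))
    (hG' : HasDerivAt G' (G'' (1 - T τ ^ 2 / W τ)) (1 - T τ ^ 2 / W τ)) :
    HasDerivAt (fun τ => T τ ^ a * W τ ^ b * ((a * ε / T τ + b * W' τ / W τ) * G (1 - T τ ^ 2 / W τ) +
        (-2 * T τ * ε / W τ + T τ ^ 2 * W' τ / W τ ^ 2) * G' (1 - T τ ^ 2 / W τ)))
      (T τ ^ a * W τ ^ b * (
        ((a * ε / T τ + b * W' τ / W τ) ^ 2 + (- a * ε ^ 2 / T τ ^ 2 + b * (W'' / W τ - W' τ ^ 2 / W τ ^ 2)))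
          * G (1 - T τ ^ 2 / W τ) +
        (2 * (a * ε / T τ + b * W' τ / W τ) * (-2 * T τ * ε / W τ + T τ ^ 2 * W' τ / W τ ^ 2) +
          (-2 * ε ^ 2 / W τ + 4 * T τ * ε * W' τ / W τ ^ 2 + T τ ^ 2 * W'' / W τ ^ 2
            - 2 * T τ ^ 2 * W' τ ^ 2 / W τ ^ 3)) * G' (1 - T τ ^ 2 / W τ) +
        (-2 * T τ * ε / W τ + T τ ^ 2 * W' τ / W τ ^ 2) ^ 2 * G'' (1 - T τ ^ 2 / W τ))) τ := by
  have hTa := hT.rpow_const (p := a) (Or.inl T0.ne')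
  have hWb := hW.rpow_const (p := b) (Or.inl W0.ne')
  have hS := ((hT.fun_pow 2).fun_div hW W0.ne').const_sub 1
  have hGS := hG.comp τ hS
  have hGS' := hG'.comp τ hS
  have hP := ((hasDerivAt_const τ (a * ε)).fun_div hT T0.ne').fun_add
    ((hW'.const_mul b).fun_div hW W0.ne')
  have hQ := (((hT.const_mul (-2)).mul_const ε).fun_div hW W0.ne').fun_add
    (((hT.fun_pow 2).fun_mul hW').fun_div (hW.fun_pow 2) (pow_pos W0 2).ne')
  refine ((hTa.fun_mul hWb).fun_mul ((hP.fun_mul hGS).fun_add (hQ.fun_mul hGS'))).congr_deriv ?_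
  simp only [Function.comp]
  rw [Real.rpow_sub_one T0.ne', Real.rpow_sub_one W0.ne']
  generalize T τ ^ a = A
  generalize W τ ^ b = B
  generalize G (1 - T τ ^ 2 / W τ) = g
  generalize G' (1 - T τ ^ 2 / W τ) = g'
  generalize G'' (1 - T τ ^ 2 / W τ) = g''
  field_simp
  ring

/-- existence of a positive, axially symmetric, `γ`-homogeneous
`L_μ`-harmonic `H_γ` on the half-space with two-sided bound
`c⁻¹ x₁^{α₋} |x|^{γ−α₋} ≤ H_γ ≤ c x₁^{α₋} |x|^{γ−α₋}`. -/
theorem stmt0 (n : ℕ) (hn : 2 ≤ n) (μ γ : ℝ) (hμ : μ < 1 / 4)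
    (hγ : γ ∈ Set.Ioo (-((n : ℝ) - 2 + aPlus μ)) (aPlus μ)) :
    ∃ c > (0 : ℝ), ∃ H : EuclideanSpace ℝ (Fin n) → ℝ,
      ContDiffOn ℝ 2 H (halfSpace n) ∧
      (∀ x ∈ halfSpace n, 0 < H x) ∧
      (∀ x ∈ halfSpace n, lap H x + (μ / (x1 x) ^ 2) * H x = 0) ∧
      (∀ x ∈ halfSpace n, ∀ y ∈ halfSpace n, x1 x = x1 y → ‖x‖ = ‖y‖ → H x = H y) ∧
      (∀ l : ℝ, 0 < l → ∀ x ∈ halfSpace n, H (l • x) = l ^ γ * H x) ∧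
      (∀ x ∈ halfSpace n,
        c⁻¹ * x1 x ^ aMinus μ * ‖x‖ ^ (γ - aMinus μ) ≤ H x ∧
        H x ≤ c * x1 x ^ aMinus μ * ‖x‖ ^ (γ - aMinus μ)) := by
  have hn0 : 0 < n := by omega
  have hn' : (2 : ℝ) ≤ n := by exact_mod_cast hn
  obtain ⟨hγ1, hγ2⟩ := hγ
  have hσ : 0 < Real.sqrt (1 / 4 - μ) := Real.sqrt_pos.mpr (by linarith)
  have hσ2 : Real.sqrt (1 / 4 - μ) ^ 2 = 1 / 4 - μ := Real.sq_sqrt (by linarith)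
  unfold aPlus at hγ1 hγ2
  unfold aMinus
  set σ := Real.sqrt (1 / 4 - μ) with hσdef
  obtain ⟨a, ha⟩ : ∃ a : ℝ, a = 1 / 2 + σ := ⟨_, rfl⟩
  obtain ⟨b, hb⟩ : ∃ b : ℝ, b = (γ - a) / 2 := ⟨_, rfl⟩
  have haμ : a ^ 2 - a = -μ := by rw [ha]; linear_combination hσ2
  obtain ⟨G, G', G'', K, hK, hGc, hG1, hG2, hode, hGb⟩ := exists_G (p := -b)
    (q := a + b + n / 2 - 1) (C := ((n : ℝ) - 1) / 2) (σ := σ) (by linarith) (by linarith)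
    (by linarith) hσ (by linarith)
  let i0 : Fin n := ⟨0, hn0⟩
  have hx1 : ∀ x : EuclideanSpace ℝ (Fin n), x1 x = x i0 := fun x => by simp [x1, hn0, i0]
  have hmem : ∀ x : EuclideanSpace ℝ (Fin n), x ∈ halfSpace n ↔ 0 < x i0 := fun x => by
    simp only [halfSpace, Set.mem_ofPred_eq, hx1]
  have hle : ∀ x : EuclideanSpace ℝ (Fin n), x i0 ^ 2 ≤ ‖x‖ ^ 2 := fun x => by
    rw [EuclideanSpace.real_norm_sq_eq]
    exact Finset.single_le_sum (f := fun i => x i ^ 2) (fun i _ => sq_nonneg _) (Finset.mem_univ i0)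
  have hw : ∀ x ∈ halfSpace n, 0 < ‖x‖ ^ 2 := fun x hx => by
    have := hle x
    have h2 : 0 < x i0 ^ 2 := pow_pos ((hmem x).mp hx) 2
    linarith
  have hs : ∀ x ∈ halfSpace n, 0 ≤ 1 - x i0 ^ 2 / ‖x‖ ^ 2 ∧ 1 - x i0 ^ 2 / ‖x‖ ^ 2 < 1 := by
    intro x hx
    have h1 := hw x hx
    have h2 : 0 < x i0 ^ 2 := pow_pos ((hmem x).mp hx) 2
    have h3 : x i0 ^ 2 / ‖x‖ ^ 2 ≤ 1 := (div_le_one h1).mpr (hle x)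
    have h4 : 0 < x i0 ^ 2 / ‖x‖ ^ 2 := by positivity
    constructor <;> linarith
  have hs' : ∀ x ∈ halfSpace n, |1 - x i0 ^ 2 / ‖x‖ ^ 2| < 1 := fun x hx => by
    rw [abs_of_nonneg (hs x hx).1]; exact (hs x hx).2
  have hopen : IsOpen (halfSpace n) := by
    have : halfSpace n = {x | 0 < x i0} := Set.ext hmem
    rw [this]
    exact isOpen_lt continuous_const (by fun_prop)
  let H : EuclideanSpace ℝ (Fin n) → ℝ := fun x =>
    x i0 ^ a * (‖x‖ ^ 2) ^ b * G (1 - x i0 ^ 2 / ‖x‖ ^ 2)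
  have hHc : ContDiffOn ℝ 2 H (halfSpace n) := by
    have c1 : ContDiffOn ℝ 2 (fun x : EuclideanSpace ℝ (Fin n) => x i0) (halfSpace n) := by
      fun_prop
    have c2 : ContDiffOn ℝ 2 (fun x : EuclideanSpace ℝ (Fin n) => ‖x‖ ^ 2) (halfSpace n) :=
      (contDiff_norm_sq ℝ).contDiffOn
    refine ContDiffOn.mul (ContDiffOn.mul ?_ ?_) ?_
    · exact c1.rpow_const_of_ne fun x hx => ((hmem x).mp hx).ne'
    · exact c2.rpow_const_of_ne fun x hx => (hw x hx).ne'
    · refine hGc.comp (contDiffOn_const.sub ((c1.pow 2).div c2 fun x hx => (hw x hx).ne')) ?_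
      exact fun x hx => abs_lt.mp (hs' x hx)
  have hpow : ∀ x ∈ halfSpace n, x i0 ^ a * (‖x‖ ^ 2) ^ b * (1 - (1 - x i0 ^ 2 / ‖x‖ ^ 2)) ^ (-σ) =
      x i0 ^ (1 / 2 - σ) * ‖x‖ ^ (γ - (1 / 2 - σ)) := by
    intro x hx
    have t0 : 0 < x i0 := (hmem x).mp hx
    have w0 : 0 < ‖x‖ := by have := hw x hx; by_contra h; simp_all
    rw [sub_sub_cancel, Real.div_rpow (by positivity) (by positivity), ← Real.rpow_natCast,
      ← Real.rpow_natCast, ← Real.rpow_mul t0.le, ← Real.rpow_mul w0.le, ← Real.rpow_mul w0.le,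
      mul_div_assoc', mul_right_comm, ← Real.rpow_add t0, mul_div_assoc, ← Real.rpow_sub w0]
    congr 2
    · rw [ha]; push_cast; ring
    · rw [hb, ha]; push_cast; ring
  have hbound : ∀ x ∈ halfSpace n,
        K⁻¹ * x1 x ^ (1 / 2 - σ) * ‖x‖ ^ (γ - (1 / 2 - σ)) ≤ H x ∧
        H x ≤ K * x1 x ^ (1 / 2 - σ) * ‖x‖ ^ (γ - (1 / 2 - σ)) := by
    intro x hx
    have t0 : 0 < x i0 := (hmem x).mp hx
    have w0 := hw x hx
    obtain ⟨l, u⟩ := hGb _ (hs x hx).1 (hs x hx).2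
    have hp : 0 < x i0 ^ a * (‖x‖ ^ 2) ^ b := by positivity
    rw [hx1, mul_assoc, mul_assoc, ← hpow x hx]
    constructor
    · calc _ = x i0 ^ a * (‖x‖ ^ 2) ^ b * (K⁻¹ * (1 - (1 - x i0 ^ 2 / ‖x‖ ^ 2)) ^ (-σ)) := by ring
        _ ≤ _ := mul_le_mul_of_nonneg_left l hp.le
    · calc H x ≤ x i0 ^ a * (‖x‖ ^ 2) ^ b * (K * (1 - (1 - x i0 ^ 2 / ‖x‖ ^ 2)) ^ (-σ)) :=
          mul_le_mul_of_nonneg_left u hp.le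
        _ = _ := by ring
  refine ⟨K, hK, H, hHc, ?_, ?_, ?_, ?_, hbound⟩
  · intro x hx
    have t0 : 0 < x i0 := (hmem x).mp hx
    have w0 : 0 < ‖x‖ := by have := hw x hx; by_contra h; simp_all
    refine lt_of_lt_of_le ?_ (hbound x hx).1
    rw [hx1]; positivity
  · intro x hx
    have t0 : 0 < x i0 := (hmem x).mp hx
    have w0 := hw x hx
    have hcd : ContDiffAt ℝ 2 H x := hHc.contDiffAt (hopen.mem_nhds hx)
    have key : ∀ i : Fin n, iteratedFDeriv ℝ 2 H x
        ![EuclideanSpace.single i 1, EuclideanSpace.single i 1] =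
        x i0 ^ a * (‖x‖ ^ 2) ^ b * (
        ((a * (if i = i0 then 1 else 0) / x i0 + b * (2 * x i) / ‖x‖ ^ 2) ^ 2 + (- a * (if i = i0 then 1 else 0) ^ 2 / x i0 ^ 2 + b * (2 / ‖x‖ ^ 2 - (2 * x i) ^ 2 / (‖x‖ ^ 2) ^ 2)))
          * G (1 - x i0 ^ 2 / ‖x‖ ^ 2) +
        (2 * (a * (if i = i0 then 1 else 0) / x i0 + b * (2 * x i) / ‖x‖ ^ 2) * (-2 * x i0 * (if i = i0 then 1 else 0) / ‖x‖ ^ 2 + x i0 ^ 2 * (2 * x i) / (‖x‖ ^ 2) ^ 2) +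
          (-2 * (if i = i0 then 1 else 0) ^ 2 / ‖x‖ ^ 2 + 4 * x i0 * (if i = i0 then 1 else 0) * (2 * x i) / (‖x‖ ^ 2) ^ 2 + x i0 ^ 2 * 2 / (‖x‖ ^ 2) ^ 2
            - 2 * x i0 ^ 2 * (2 * x i) ^ 2 / (‖x‖ ^ 2) ^ 3)) * G' (1 - x i0 ^ 2 / ‖x‖ ^ 2) +
        (-2 * x i0 * (if i = i0 then 1 else 0) / ‖x‖ ^ 2 + x i0 ^ 2 * (2 * x i) / (‖x‖ ^ 2) ^ 2) ^ 2 * G'' (1 - x i0 ^ 2 / ‖x‖ ^ 2)) := by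
      intro i
      obtain ⟨ε, hε⟩ : ∃ ε : ℝ, ε = if i = i0 then 1 else 0 := ⟨_, rfl⟩
      rw [← hε]
      set e : EuclideanSpace ℝ (Fin n) := EuclideanSpace.single i 1 with he
      have ee : ∀ τ : ℝ, (x + τ • e) i0 = x i0 + τ * ε := fun τ => by
        simp only [he, hε, PiLp.add_apply, PiLp.smul_apply, smul_eq_mul, PiLp.single_apply, eq_comm]
      have en : ∀ τ : ℝ, ‖x + τ • e‖ ^ 2 = ‖x‖ ^ 2 + 2 * x i * τ + τ ^ 2 := fun τ => by
        rw [norm_add_sq_real, inner_smul_right, norm_smul, mul_pow]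
        simp [he, EuclideanSpace.inner_single_right]
        ring
      have hT : ∀ τ : ℝ, HasDerivAt (fun τ => x i0 + τ * ε) ε τ := fun τ => by
        simpa using ((hasDerivAt_id τ).mul_const ε).const_add (x i0)
      have hW : ∀ τ : ℝ, HasDerivAt (fun τ => ‖x‖ ^ 2 + 2 * x i * τ + τ ^ 2) (2 * x i + 2 * τ) τ :=
        fun τ => by
          have := (((hasDerivAt_id τ).const_mul (2 * x i)).const_add (‖x‖ ^ 2)).fun_add (hasDerivAt_pow 2 τ)
          simpa using this
      have hW' : HasDerivAt (fun τ : ℝ => 2 * x i + 2 * τ) 2 0 := by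
        simpa using ((hasDerivAt_id (0 : ℝ)).const_mul 2).const_add (2 * x i)
      have hev : ∀ᶠ τ in nhds (0 : ℝ), x + τ • e ∈ halfSpace n := by
        have : Continuous fun τ : ℝ => x + τ • e := by fun_prop
        exact this.continuousAt.eventually_mem (hopen.mem_nhds (by simpa using hx))
      have h2 := line_second (a := a) (b := b) (G := G) (G' := G') (G'' := G'') (hT 0) (hW 0) hW'
        (by simpa using t0) (by simpa using w0)
        (by simpa using hG1 _ (hs' x hx)) (by simpa using hG2 _ (hs' x hx))
      refine (iteratedFDeriv_two_line hcd ?_ h2).trans ?_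
      · filter_upwards [hev] with τ hτ
        have q1 := (hmem _).mp hτ
        have q2 := hw _ hτ
        have q3 := hs' _ hτ
        rw [ee] at q1 q3
        rw [en] at q2 q3
        have := line_first (a := a) (b := b) (G := G) (G' := G') (hT τ) (hW τ) q1 q2 (hG1 _ q3)
        simp only [H, ee, en]
        exact this
      · simp
    have hode' := hode _ (hs' x hx)
    have sε : ∑ i : Fin n, (if i = i0 then (1 : ℝ) else 0) = 1 := by simp
    have sx : ∑ i : Fin n, x i ^ 2 = ‖x‖ ^ 2 := (EuclideanSpace.real_norm_sq_eq x).symm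
    have sεx : ∑ i : Fin n, (if i = i0 then (1 : ℝ) else 0) * x i = x i0 := by simp
    unfold lap
    rw [Finset.sum_congr rfl fun i _ => key i, hx1]
    simp only [H]
    generalize G (1 - x i0 ^ 2 / ‖x‖ ^ 2) = g at *
    generalize G' (1 - x i0 ^ 2 / ‖x‖ ^ 2) = g' at *
    generalize G'' (1 - x i0 ^ 2 / ‖x‖ ^ 2) = g'' at *
    generalize (‖x‖ ^ 2) ^ b = B at *
    generalize x i0 ^ a = A at *
    generalize hww : ‖x‖ ^ 2 = w at *
    generalize htt : x i0 = t at *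
    have lin : ∀ i : Fin n, A * B * (
        ((a * (if i = i0 then 1 else 0) / t + b * (2 * x i) / w) ^ 2 + (- a * (if i = i0 then 1 else 0) ^ 2 / t ^ 2 + b * (2 / w - (2 * x i) ^ 2 / w ^ 2)))
          * g +
        (2 * (a * (if i = i0 then 1 else 0) / t + b * (2 * x i) / w) * (-2 * t * (if i = i0 then 1 else 0) / w + t ^ 2 * (2 * x i) / w ^ 2) +
          (-2 * (if i = i0 then 1 else 0) ^ 2 / w + 4 * t * (if i = i0 then 1 else 0) * (2 * x i) / w ^ 2 + t ^ 2 * 2 / w ^ 2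
            - 2 * t ^ 2 * (2 * x i) ^ 2 / w ^ 3)) * g' +
        (-2 * t * (if i = i0 then 1 else 0) / w + t ^ 2 * (2 * x i) / w ^ 2) ^ 2 * g'') =
        (A * B * ((a ^ 2 - a) / t ^ 2 * g + (- 4 * a / w - 2 / w) * g' + 4 * t ^ 2 / w ^ 2 * g''))
          * (if i = i0 then 1 else 0) +
        (A * B * (4 * a * b / (t * w) * g + (4 * a * t / w ^ 2 - 8 * b * t / w ^ 2 + 8 * t / w ^ 2) * g'
          - 8 * t ^ 3 / w ^ 3 * g'')) * ((if i = i0 then 1 else 0) * x i) +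
        (A * B * ((4 * b ^ 2 / w ^ 2 - 4 * b / w ^ 2) * g + (8 * b * t ^ 2 / w ^ 3 - 8 * t ^ 2 / w ^ 3) * g'
          + 4 * t ^ 4 / w ^ 4 * g'')) * x i ^ 2 +
        A * B * (2 * b / w * g + 2 * t ^ 2 / w ^ 2 * g') := by
      intro i
      have hε : (if i = i0 then (1 : ℝ) else 0) ^ 2 = if i = i0 then 1 else 0 := by split_ifs <;> simp
      generalize (if i = i0 then (1 : ℝ) else 0) = ε at *
      generalize x i = y
      have t0' := t0.ne'
      have w0' := w0.ne'
      have : ∀ r s : ℝ, r - s = (A * B * ((a ^ 2 - a) / t ^ 2 * g + (- 4 * a / w - 2 / w) * g' + 4 * t ^ 2 / w ^ 2 * g'')) * (ε ^ 2 - ε) → r = s := by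
        intro r s h
        rw [hε, sub_self, mul_zero] at h
        linarith
      apply this
      field_simp
      ring
    rw [Finset.sum_congr rfl fun i _ => lin i]
    simp only [Finset.sum_add_distrib, ← Finset.mul_sum, sε, sεx, sx, Finset.sum_const,
      Finset.card_univ, Fintype.card_fin, nsmul_eq_mul]
    have hμ' : μ = a - a ^ 2 := by linarith
    rw [hμ']
    have hfin : ∀ r : ℝ, r = 4 * A * B / w * ((1 - t ^ 2 / w) * (1 - (1 - t ^ 2 / w)) * g'' +
        (((n : ℝ) - 1) / 2 - (-b + (a + b + n / 2 - 1) + 1) * (1 - t ^ 2 / w)) * g' -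
        -b * (a + b + n / 2 - 1) * g) → r = 0 := fun r h => by rw [h, hode', mul_zero]
    apply hfin
    have t0' := t0.ne'
    have w0' := w0.ne'
    field_simp
    ring
  · intro x hx y hy h1 h2
    rw [hx1, hx1] at h1
    simp only [H, h1, h2]
  · intro l hl x hx
    have t0 : 0 < x i0 := (hmem x).mp hx
    have w0 := hw x hx
    have hl' : l ^ γ = l ^ a * (l ^ 2) ^ b := by
      rw [← Real.rpow_natCast, ← Real.rpow_mul hl.le, ← Real.rpow_add hl]
      congr 1; rw [hb]; push_cast; ring
    simp only [H, PiLp.smul_apply, smul_eq_mul, norm_smul, mul_pow, Real.norm_eq_abs, sq_abs]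
    rw [Real.mul_rpow hl.le t0.le, Real.mul_rpow (by positivity) w0.le,
      mul_div_mul_left _ _ (pow_pos hl 2).ne', hl']
    ring
end

section
/- Let n ≥ 2, −∞ < μ < 1/4 and 1 < p < p_c := 1 + 2/(n−2+α₊). Then there exists a positive classical solution u of Δu + (μ/x₁²)u = u^p on ℝⁿ₊ which is axially symmetric, homogeneous of degree −2/(p−1), and satisfies, for some c > 0, c⁻¹ x₁^{α₊} |x|^{−α₊−2/(p−1)} ≤ u(x) ≤ c x₁^{α₊} |x|^{−α₊−2/(p−1)} for all x ∈ ℝⁿ₊; moreover u is unique: any two positive, axially symmetric solutions homogeneous of degree −2/(p−1) each satisfying such a two-sided bound (with possibly different constants c) are equal. -/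
open Real Set

/-- A positive, axially symmetric, `(−2/(p−1))`-homogeneous classical solution of
`Δu + (μ/x₁²)u = u^p` on the half-space with two-sided bound
`c⁻¹ x₁^{α₊} |x|^{−α₊−2/(p−1)} ≤ u ≤ c x₁^{α₊} |x|^{−α₊−2/(p−1)}`. -/
def IsSepSolPlus (n : ℕ) (μ p : ℝ) (u : EuclideanSpace ℝ (Fin n) → ℝ) : Prop :=
  ContDiffOn ℝ 2 u (halfSpace n) ∧
  (∀ x ∈ halfSpace n, 0 < u x) ∧
  (∀ x ∈ halfSpace n, lap u x + (μ / (x1 x) ^ 2) * u x = u x ^ p) ∧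
  (∀ x ∈ halfSpace n, ∀ y ∈ halfSpace n, x1 x = x1 y → ‖x‖ = ‖y‖ → u x = u y) ∧
  (∀ l : ℝ, 0 < l → ∀ x ∈ halfSpace n, u (l • x) = l ^ (-(2 / (p - 1))) * u x) ∧
  (∃ c > (0 : ℝ), ∀ x ∈ halfSpace n,
    c⁻¹ * x1 x ^ aPlus μ * ‖x‖ ^ (-(aPlus μ) - 2 / (p - 1)) ≤ u x ∧
    u x ≤ c * x1 x ^ aPlus μ * ‖x‖ ^ (-(aPlus μ) - 2 / (p - 1)))


section
open Filter Topology

lemma hda {f g : ℝ → ℝ} {a b x : ℝ} (h : HasDerivAt f a x) (hf : ∀ y, g y = f y) (hab : b = a) :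
    HasDerivAt g b x := by
  have : g = f := funext hf
  rw [this, hab]; exact h

lemma iter2_line {n : ℕ} (u : EuclideanSpace ℝ (Fin n) → ℝ) (x v : EuclideanSpace ℝ (Fin n))
    (hu : ContDiffAt ℝ 2 u x) (d : ℝ → ℝ) (d2 : ℝ)
    (h1 : ∀ᶠ h in 𝓝 (0 : ℝ), HasDerivAt (fun h : ℝ => u (x + h • v)) (d h) h)
    (h2 : HasDerivAt d d2 0) : iteratedFDeriv ℝ 2 u x ![v, v] = d2 := by
  rw [iteratedFDeriv_two_apply]
  simp only [Matrix.cons_val_zero, Matrix.cons_val_one]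
  have hd : ∀ᶠ y in 𝓝 x, DifferentiableAt ℝ u y := by
    have := hu.eventually (by simp)
    filter_upwards [this] with y hy using hy.differentiableAt (by norm_num)
  have hline : ∀ h : ℝ, HasDerivAt (fun h : ℝ => x + h • v) v h := by
    intro h
    have := ((hasDerivAt_id h).smul_const v).const_add x
    simpa using this
  have hcont : Tendsto (fun h : ℝ => x + h • v) (𝓝 0) (𝓝 x) := by
    have := (hline 0).continuousAt.tendsto
    simpa using this
  have heq : d =ᶠ[𝓝 0] fun h => fderiv ℝ u (x + h • v) v := by
    filter_upwards [h1, hcont.eventually hd] with h hh hdh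
    have := hdh.hasFDerivAt.comp_hasDerivAt h (hline h)
    exact hh.unique this
  have hfd : DifferentiableAt ℝ (fderiv ℝ u) x :=
    (hu.fderiv_right (m := 1) (by norm_num)).differentiableAt (by norm_num)
  have hfd' : HasFDerivAt (fderiv ℝ u) (fderiv ℝ (fderiv ℝ u) x) (x + (0 : ℝ) • v) := by
    simpa using hfd.hasFDerivAt
  have h3 := hfd'.comp_hasDerivAt (0 : ℝ) (hline 0)
  have h4 := h3.clm_apply (hasDerivAt_const (0 : ℝ) v)
  simp only [map_zero, add_zero] at h4
  have h5 := h4.congr_of_eventuallyEq heq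
  exact h5.unique h2

/-- the reduced variable (squared tangential part over the squared first coordinate). -/
noncomputable def etaV {n : ℕ} (x : EuclideanSpace ℝ (Fin n)) : ℝ := ‖x‖ ^ 2 / (x1 x) ^ 2 - 1

lemma x1_eq {n : ℕ} (hn : 0 < n) (x : EuclideanSpace ℝ (Fin n)) : x1 x = x ⟨0, hn⟩ := by
  simp [x1, hn]

lemma x1_contDiff {n : ℕ} : ContDiff ℝ 2 (x1 : EuclideanSpace ℝ (Fin n) → ℝ) := by
  by_cases hn : 0 < n
  · have : (x1 : EuclideanSpace ℝ (Fin n) → ℝ) = fun x => x ⟨0, hn⟩ := by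
      funext x; exact x1_eq hn x
    rw [this]; fun_prop
  · have : (x1 : EuclideanSpace ℝ (Fin n) → ℝ) = fun x => 0 := by
      funext x; simp [x1, hn]
    rw [this]; fun_prop

lemma halfSpace_open (n : ℕ) : IsOpen (halfSpace n) :=
  isOpen_lt continuous_const x1_contDiff.continuous

lemma etaV_contDiffAt {n : ℕ} {x : EuclideanSpace ℝ (Fin n)} (hx : x ∈ halfSpace n) :
    ContDiffAt ℝ 2 etaV x := by
  have h0 : (x1 x) ^ 2 ≠ 0 := pow_ne_zero _ (ne_of_gt hx)
  unfold etaV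
  have h1 : ContDiffAt ℝ 2 (fun x : EuclideanSpace ℝ (Fin n) => ‖x‖ ^ 2) x :=
    (contDiff_norm_sq ℝ).contDiffAt
  have h2 : ContDiffAt ℝ 2 (fun x : EuclideanSpace ℝ (Fin n) => x1 x ^ 2) x :=
    (x1_contDiff.pow 2).contDiffAt
  exact (h1.div h2 h0).sub contDiffAt_const

lemma sepU_contDiffAt {n : ℕ} {x : EuclideanSpace ℝ (Fin n)} (hx : x ∈ halfSpace n) (s : ℝ)
    (W : ℝ → ℝ) (hW : ContDiffAt ℝ 2 W (etaV x)) :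
    ContDiffAt ℝ 2 (fun x : EuclideanSpace ℝ (Fin n) => x1 x ^ (-s) * W (etaV x)) x := by
  have h1 : ContDiffAt ℝ 2 (fun x : EuclideanSpace ℝ (Fin n) => x1 x ^ (-s)) x :=
    x1_contDiff.contDiffAt.rpow_const_of_ne (ne_of_gt hx)
  exact h1.mul (hW.comp x (etaV_contDiffAt hx))

lemma norm_line {n : ℕ} (x : EuclideanSpace ℝ (Fin n)) (i : Fin n) (h : ℝ) :
    ‖x + h • EuclideanSpace.single i (1 : ℝ)‖ ^ 2 = ‖x‖ ^ 2 + 2 * h * x i + h ^ 2 := by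
  rw [norm_add_sq_real]
  simp [inner_smul_right, norm_smul, EuclideanSpace.inner_single_right]
  ring

lemma x1_line_ne {n : ℕ} (hn : 0 < n) (x : EuclideanSpace ℝ (Fin n)) (i : Fin n)
    (hi : i ≠ ⟨0, hn⟩) (h : ℝ) : x1 (x + h • EuclideanSpace.single i (1 : ℝ)) = x1 x := by
  simp [x1_eq hn, Ne.symm hi]

lemma x1_line_zero {n : ℕ} (hn : 0 < n) (x : EuclideanSpace ℝ (Fin n)) (h : ℝ) :
    x1 (x + h • EuclideanSpace.single ⟨0, hn⟩ (1 : ℝ)) = x1 x + h := by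
  simp [x1_eq hn]

lemma hasDeriv_two (W : ℝ → ℝ) (z : ℝ) (hW : ContDiffAt ℝ 2 W z) :
    (∀ᶠ y in 𝓝 z, HasDerivAt W (deriv W y) y) ∧ HasDerivAt (deriv W) (deriv (deriv W) z) z := by
  constructor
  · have := hW.eventually (by simp)
    filter_upwards [this] with y hy using (hy.differentiableAt (by norm_num)).hasDerivAt
  · have : ContDiffAt ℝ 1 (deriv W) z := by
      have h := (hW.fderiv_right (m := 1) (by norm_num))
      have h2 : deriv W = fun y => (fderiv ℝ W y) 1 := by
        funext y; exact (fderiv_apply_one_eq_deriv).symm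
      rw [h2]
      exact h.clm_apply contDiffAt_const
    exact (this.differentiableAt (by norm_num)).hasDerivAt

lemma lap_formula {n : ℕ} (hn : 0 < n) {x : EuclideanSpace ℝ (Fin n)} (hx : x ∈ halfSpace n) (s : ℝ)
    (W : ℝ → ℝ) (hW : ContDiffAt ℝ 2 W (etaV x)) :
    lap (fun x : EuclideanSpace ℝ (Fin n) => x1 x ^ (-s) * W (etaV x)) x
      = x1 x ^ (-s - 2) * (4 * etaV x * (1 + etaV x) * deriv (deriv W) (etaV x)
        + (2 * ((n : ℝ) - 1) + (6 + 4 * s) * etaV x) * deriv W (etaV x)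
        + s * (s + 1) * W (etaV x)) := by
  have hx0 : 0 < x1 x := hx
  have hu := sepU_contDiffAt hx s W hW
  obtain ⟨hW1, hW2⟩ := hasDeriv_two W _ hW
  set i0 : Fin n := ⟨0, hn⟩ with hi0
  set z := etaV x with hz
  set r2 := ‖x‖ ^ 2 with hr2
  have hzr : r2 = (1 + z) * x1 x ^ 2 := by
    rw [hz, etaV]; field_simp; ring
  have hpow : x1 x ^ (-s) = x1 x ^ (-s - 2) * x1 x ^ 2 := by
    rw [← Real.rpow_natCast (x1 x) 2, ← Real.rpow_add hx0]; congr 1; push_cast; ring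
  have hpow1 : x1 x ^ (-s - 1) = x1 x ^ (-s - 2) * x1 x := by
    nth_rewrite 3 [← Real.rpow_one (x1 x)]
    rw [← Real.rpow_add hx0]; congr 1; ring
  have htan : ∀ i : Fin n, i ≠ i0 →
      iteratedFDeriv ℝ 2 (fun x : EuclideanSpace ℝ (Fin n) => x1 x ^ (-s) * W (etaV x)) x
        ![EuclideanSpace.single i 1, EuclideanSpace.single i 1]
      = x1 x ^ (-s - 2) * (deriv (deriv W) z * 4 * (x i) ^ 2 / x1 x ^ 2 + 2 * deriv W z) := by
    intro i hi
    have hphi : ∀ h : ℝ, HasDerivAt (fun h : ℝ => (r2 + 2 * h * x i + h ^ 2) / x1 x ^ 2 - 1)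
        ((2 * x i + 2 * h) / x1 x ^ 2) h := by
      intro h
      have h1 : HasDerivAt (fun h : ℝ => r2 + 2 * h * x i + h ^ 2) (2 * x i + 2 * h) h := by
        have := ((((hasDerivAt_id h).const_mul 2).mul_const (x i)).const_add r2).add
          ((hasDerivAt_id h).pow 2)
        exact hda this (fun y => by simp) (by simp)
      exact (h1.div_const _).sub_const 1
    have hphi0 : (r2 + 2 * 0 * x i + 0 ^ 2) / x1 x ^ 2 - 1 = z := by
      simp [hz, etaV, hr2]
    apply iter2_line _ _ _ hu
      (fun h => x1 x ^ (-s) * (deriv W ((r2 + 2 * h * x i + h ^ 2) / x1 x ^ 2 - 1) *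
        ((2 * x i + 2 * h) / x1 x ^ 2)))
    · have hc : Tendsto (fun h : ℝ => (r2 + 2 * h * x i + h ^ 2) / x1 x ^ 2 - 1) (𝓝 0) (𝓝 z) := by
        have := (hphi 0).continuousAt.tendsto
        rwa [hphi0] at this
      filter_upwards [hc.eventually hW1] with h hh
      have := (hh.comp h (hphi h)).const_mul (x1 x ^ (-s))
      refine hda this (fun h' => ?_) rfl
      simp only [x1_line_ne hn x i hi, etaV, norm_line, Function.comp, hr2]
    · have hW2' : HasDerivAt (deriv W) (deriv (deriv W) z)
          ((r2 + 2 * 0 * x i + 0 ^ 2) / x1 x ^ 2 - 1) := by rw [hphi0]; exact hW2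
      have hl : HasDerivAt (fun h : ℝ => (2 * x i + 2 * h) / x1 x ^ 2) (2 / x1 x ^ 2) 0 := by
        have := (((hasDerivAt_id (0:ℝ)).const_mul 2).const_add (2 * x i)).div_const (x1 x ^ 2)
        exact hda this (fun y => by simp) (by simp)
      have := ((hW2'.comp (0:ℝ) (hphi 0)).mul hl).const_mul (x1 x ^ (-s))
      refine hda this (fun y => rfl) ?_
      simp only [Function.comp, hphi0]
      rw [hpow]; field_simp; ring
  have hnor : iteratedFDeriv ℝ 2 (fun x : EuclideanSpace ℝ (Fin n) => x1 x ^ (-s) * W (etaV x)) x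
        ![EuclideanSpace.single i0 1, EuclideanSpace.single i0 1]
      = x1 x ^ (-s - 2) * (4 * z ^ 2 * deriv (deriv W) z + (4 * s + 6) * z * deriv W z
          + s * (s + 1) * W z) := by
    set b := x1 x with hb
    have hxi : x i0 = b := by rw [hb, x1_eq hn]
    have hne : ∀ᶠ h in 𝓝 (0:ℝ), b + h ≠ 0 := by
      have : Tendsto (fun h : ℝ => b + h) (𝓝 0) (𝓝 (b + 0)) := by
        apply Continuous.tendsto; fun_prop
      exact this.eventually_ne (by simpa using hx0.ne')
    have hphi : ∀ h : ℝ, b + h ≠ 0 →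
        HasDerivAt (fun h : ℝ => (r2 + 2 * h * b + h ^ 2) / (b + h) ^ 2 - 1)
        (-2 * z * b ^ 2 / (b + h) ^ 3) h := by
      intro h hh
      have h1 : HasDerivAt (fun h : ℝ => r2 + 2 * h * b + h ^ 2) (2 * b + 2 * h) h := by
        have := ((((hasDerivAt_id h).const_mul 2).mul_const b).const_add r2).add
          ((hasDerivAt_id h).pow 2)
        exact hda this (fun y => by simp) (by simp)
      have h2 : HasDerivAt (fun h : ℝ => (b + h) ^ 2) (2 * (b + h)) h := by
        have := ((hasDerivAt_id h).const_add b).pow 2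
        exact hda this (fun y => by simp) (by simp)
      have := (h1.div h2 (pow_ne_zero 2 hh)).sub_const 1
      refine hda this (fun y => rfl) ?_
      rw [hzr]; field_simp; ring
    have hphi0 : (r2 + 2 * 0 * b + 0 ^ 2) / (b + 0) ^ 2 - 1 = z := by
      simp [hz, etaV, hr2, hb]
    have hpw : ∀ (q h : ℝ), b + h ≠ 0 → HasDerivAt (fun h : ℝ => (b + h) ^ q)
        (q * (b + h) ^ (q - 1)) h := by
      intro q h hh
      have := ((hasDerivAt_id h).const_add b).rpow_const (p := q) (Or.inl hh)
      exact hda this (fun y => by simp) (by simp)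
    apply iter2_line _ _ _ hu
      (fun h => (-s) * (b + h) ^ (-s - 1) * W ((r2 + 2 * h * b + h ^ 2) / (b + h) ^ 2 - 1) +
        (b + h) ^ (-s) * (deriv W ((r2 + 2 * h * b + h ^ 2) / (b + h) ^ 2 - 1) *
        (-2 * z * b ^ 2 / (b + h) ^ 3)))
    · have hc : Tendsto (fun h : ℝ => (r2 + 2 * h * b + h ^ 2) / (b + h) ^ 2 - 1)
          (𝓝 0) (𝓝 z) := by
        have := (hphi 0 (by simpa using hx0.ne')).continuousAt.tendsto
        rwa [hphi0] at this
      filter_upwards [hc.eventually hW1, hne] with h hh hh2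
      have := (hpw (-s) h hh2).mul (hh.comp h (hphi h hh2))
      refine hda this (fun h' => ?_) rfl
      have e := x1_line_zero hn x h'
      simp only [e, etaV, norm_line, Function.comp, hr2, Pi.mul_apply, hi0, ← hb]
      rw [← hi0, hxi]
    · have hW1' : HasDerivAt W (deriv W z)
          ((r2 + 2 * 0 * b + 0 ^ 2) / (b + 0) ^ 2 - 1) := by rw [hphi0]; exact hW1.self_of_nhds
      have hW2' : HasDerivAt (deriv W) (deriv (deriv W) z)
          ((r2 + 2 * 0 * b + 0 ^ 2) / (b + 0) ^ 2 - 1) := by rw [hphi0]; exact hW2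
      have hb0 : b + 0 ≠ 0 := by simpa using hx0.ne'
      have hl : HasDerivAt (fun h : ℝ => -2 * z * b ^ 2 / (b + h) ^ 3) (6 * z / b ^ 2) 0 := by
        have h2 : HasDerivAt (fun h : ℝ => (b + h) ^ 3) (3 * (b + 0) ^ 2) 0 := by
          have := ((hasDerivAt_id (0:ℝ)).const_add b).pow 3
          exact hda this (fun y => by simp) (by simp)
        have := (hasDerivAt_const (0:ℝ) (-2 * z * b ^ 2)).div h2 (pow_ne_zero 3 hb0)
        refine hda this (fun y => rfl) ?_
        have := hx0.ne'
        field_simp; simp; field_simp; ring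
      have := (((hpw (-s - 1) 0 hb0).const_mul (-s)).mul (hW1'.comp (0:ℝ) (hphi 0 hb0))).add
        ((hpw (-s) 0 hb0).mul ((hW2'.comp (0:ℝ) (hphi 0 hb0)).mul hl))
      refine hda this (fun y => rfl) ?_
      simp only [Function.comp, Pi.mul_apply]
      rw [hphi0]
      simp only [add_zero]
      rw [show -s - 1 - 1 = -s - 2 by ring, hpow, hpow1]; 
      have := hx0.ne'
      field_simp; ring
  unfold lap
  rw [← Finset.add_sum_erase _ _ (Finset.mem_univ i0), hnor,
    Finset.sum_congr rfl (fun i hi => htan i (Finset.ne_of_mem_erase hi)), ← Finset.mul_sum,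
    Finset.sum_add_distrib, ← Finset.sum_div, ← Finset.mul_sum]
  have hs : ∑ i ∈ Finset.univ.erase i0, (x i) ^ 2 = z * x1 x ^ 2 := by
    have h1 : ∑ i, (x i) ^ 2 = r2 := by
      rw [hr2, EuclideanSpace.norm_sq_eq]; simp
    rw [← Finset.add_sum_erase _ _ (Finset.mem_univ i0)] at h1
    have : x i0 = x1 x := by rw [x1_eq hn]
    rw [this] at h1
    linarith
  rw [hs]
  simp only [Finset.sum_const, Finset.card_erase_of_mem (Finset.mem_univ i0), Finset.card_univ,
    Fintype.card_fin, nsmul_eq_mul]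
  rw [Nat.cast_sub (by omega)]
  have := hx0.ne'
  push_cast
  field_simp
  ring

lemma hasDerivAt_posPart_sq (x : ℝ) : HasDerivAt (fun y : ℝ => max y 0 ^ 2) (2 * max x 0) x := by
  rcases lt_trichotomy x 0 with hx | hx | hx
  · have h : (fun y : ℝ => max y 0 ^ 2) =ᶠ[𝓝 x] fun _ => (0 : ℝ) := by
      filter_upwards [Iio_mem_nhds hx] with y hy
      rw [max_eq_right (le_of_lt (mem_Iio.mp hy))]; simp
    rw [max_eq_right hx.le, mul_zero]
    exact (hasDerivAt_const x (0 : ℝ)).congr_of_eventuallyEq h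
  · subst hx
    have : (fun y : ℝ => max y 0 ^ 2) =O[𝓝 0] fun y => ‖y - 0‖ ^ 2 := by
      apply Asymptotics.isBigO_of_le
      intro y
      simp only [sub_zero, norm_pow, norm_norm]
      gcongr
      rw [Real.norm_eq_abs, Real.norm_eq_abs, abs_of_nonneg (le_max_right _ _)]
      exact max_le (le_abs_self _) (abs_nonneg _)
    have h := this.hasFDerivAt (𝕜 := ℝ) (by norm_num)
    have h2 := h.hasDerivAt
    simpa using h2
  · have h : (fun y : ℝ => max y 0 ^ 2) =ᶠ[𝓝 x] fun y => y ^ 2 := by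
      filter_upwards [Ioi_mem_nhds hx] with y hy
      rw [max_eq_left (le_of_lt (mem_Ioi.mp hy))]
    rw [max_eq_left hx.le]
    have h2 := (hasDerivAt_pow 2 x).congr_of_eventuallyEq h
    simpa using h2

lemma ode_le (N s m p c₀ : ℝ) (hN : 1 / 2 ≤ N) (hm : 0 < m) (hp : 1 < p)
    (W V W' V' W'' V'' : ℝ → ℝ)
    (hW1 : ∀ z, 0 < z → HasDerivAt W (W' z) z) (hV1 : ∀ z, 0 < z → HasDerivAt V (V' z) z)
    (hW2 : ∀ z, 0 < z → HasDerivAt W' (W'' z) z) (hV2 : ∀ z, 0 < z → HasDerivAt V' (V'' z) z)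
    (hW0 : ∀ z, 0 < z → 0 < W z) (hV0 : ∀ z, 0 < z → 0 < V z)
    (hW : ∀ z, 0 < z → 4 * z * (1 + z) * W'' z + (4 * N + (6 + 4 * s) * z) * W' z + c₀ * W z
      = W z ^ p)
    (hV : ∀ z, 0 < z → 4 * z * (1 + z) * V'' z + (4 * N + (6 + 4 * s) * z) * V' z + c₀ * V z
      = V z ^ p)
    (C : ℝ) (hC : 0 < C)
    (hWb : ∀ z, 0 < z → W z ≤ C * (1 + z) ^ (-((s + (1 + m) / 2) / 2)))
    (hVb : ∀ z, 0 < z → V z ≤ C * (1 + z) ^ (-((s + (1 + m) / 2) / 2)))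
    (hVl : ∀ z, 0 < z → C⁻¹ * (1 + z) ^ (-((s + (1 + m) / 2) / 2)) ≤ V z)
    (hs : 0 < s)
    (hWd : Tendsto (fun z => √z * W' z) (𝓝[>] 0) (𝓝 0))
    (hVd : Tendsto (fun z => √z * V' z) (𝓝[>] 0) (𝓝 0)) :
    ∀ z, 0 < z → W z ≤ V z := by
  set k := (s + (1 + m) / 2) / 2 with hk
  have hk0 : 0 < k := by positivity
  set b := s + 3 / 2 - N with hb
  set P : ℝ → ℝ := fun z => z ^ N * (1 + z) ^ b with hP
  have hP0 : ∀ z, 0 < z → 0 < P z := fun z hz => by simp only [hP]; positivity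
  have hPd : ∀ z, 0 < z → HasDerivAt P (P z * (N / z + b / (1 + z))) z := by
    intro z hz
    have h1 := (hasDerivAt_id z).rpow_const (p := N) (Or.inl hz.ne')
    have h2 := ((hasDerivAt_id z).const_add 1).rpow_const (p := b) (Or.inl (by simp; positivity))
    refine hda (h1.mul h2) (fun y => rfl) ?_
    simp only [id, hP]
    have e1 : z ^ (N - 1) = z ^ N / z := by rw [Real.rpow_sub_one hz.ne']
    have e2 : (1 + z) ^ (b - 1) = (1 + z) ^ b / (1 + z) := by
      rw [Real.rpow_sub_one (by positivity)]
    rw [e1, e2]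
    field_simp
  set R : ℝ → ℝ := fun z => P z * (W' z * V z - W z * V' z) with hR
  set ρ : ℝ → ℝ := fun z => W z / V z with hρ
  have hρd : ∀ z, 0 < z → HasDerivAt ρ (R z / (P z * V z ^ 2)) z := by
    intro z hz
    have h0 := hV0 z hz
    have h1 := hP0 z hz
    refine hda ((hW1 z hz).div (hV1 z hz) h0.ne') (fun y => rfl) ?_
    simp only [hR]
    field_simp
  have hRd : ∀ z, 0 < z → HasDerivAt R (P z / (4 * z * (1 + z)) * (W z ^ p * V z - W z * V z ^ p)) z := by
    intro z hz
    refine hda ((hPd z hz).mul (((hW2 z hz).mul (hV1 z hz)).sub ((hW1 z hz).mul (hV2 z hz))))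
      (fun y => rfl) ?_
    rw [← hW z hz, ← hV z hz]
    simp only [Pi.sub_apply, Pi.mul_apply, hb]
    field_simp
    ring
  have hsign : ∀ z, 0 < z → 1 < ρ z → 0 < P z / (4 * z * (1 + z)) * (W z ^ p * V z - W z * V z ^ p) := by
    intro z hz h1
    have hv := hV0 z hz
    have hw := hW0 z hz
    have hlt : V z < W z := by
      simp only [hρ] at h1
      rwa [one_lt_div hv] at h1
    have hPz := hP0 z hz
    apply mul_pos (by positivity)
    have e1 : W z ^ p = W z ^ (p - 1) * W z := by
      rw [Real.rpow_sub_one hw.ne']; field_simp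
    have e2 : V z ^ p = V z ^ (p - 1) * V z := by
      rw [Real.rpow_sub_one hv.ne']; field_simp
    have hlt2 : V z ^ (p - 1) < W z ^ (p - 1) :=
      Real.rpow_lt_rpow hv.le hlt (by linarith)
    rw [e1, e2]
    have : W z ^ (p - 1) * W z * V z - W z * (V z ^ (p - 1) * V z)
        = W z * V z * (W z ^ (p - 1) - V z ^ (p - 1)) := by ring
    rw [this]
    apply mul_pos (by positivity); linarith
  have hρb : ∀ z, 0 < z → ρ z ≤ C ^ 2 := by
    intro z hz
    simp only [hρ]
    rw [div_le_iff₀ (hV0 z hz)]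
    calc W z ≤ C * (1 + z) ^ (-k) := hWb z hz
      _ = C ^ 2 * (C⁻¹ * (1 + z) ^ (-k)) := by field_simp
      _ ≤ C ^ 2 * V z := by gcongr; exact hVl z hz
  have hρ0 : ∀ z, 0 < z → 0 < ρ z := fun z hz => div_pos (hW0 z hz) (hV0 z hz)
  set B : ℝ → ℝ := fun z => R z * max (ρ z - 1) 0 ^ 2 with hB
  set B' : ℝ → ℝ := fun z => P z / (4 * z * (1 + z)) * (W z ^ p * V z - W z * V z ^ p)
      * max (ρ z - 1) 0 ^ 2 + R z * (2 * max (ρ z - 1) 0 * (R z / (P z * V z ^ 2))) with hB'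
  have hBd : ∀ z, 0 < z → HasDerivAt B (B' z) z := by
    intro z hz
    have h1 := (hasDerivAt_posPart_sq (ρ z - 1)).comp z ((hρd z hz).sub_const 1)
    exact hda ((hRd z hz).mul h1) (fun y => rfl) rfl
  have hBn : ∀ z, 0 < z → 0 ≤ B' z := by
    intro z hz
    have hv := hV0 z hz
    have hPz := hP0 z hz
    have h2 : 0 ≤ R z * (2 * max (ρ z - 1) 0 * (R z / (P z * V z ^ 2))) := by
      have : R z * (2 * max (ρ z - 1) 0 * (R z / (P z * V z ^ 2)))
        = R z ^ 2 * (2 * max (ρ z - 1) 0) / (P z * V z ^ 2) := by field_simp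
      rw [this]
      have := le_max_right (ρ z - 1) 0
      positivity
    simp only [hB']
    rcases le_or_gt (ρ z) 1 with h1 | h1
    · rw [max_eq_right (by linarith : ρ z - 1 ≤ 0)]
      simp
    · have := hsign z hz h1
      positivity
  have hBp : ∀ z, 0 < z → 1 < ρ z → 0 < B' z := by
    intro z hz h1
    have hv := hV0 z hz
    have hPz := hP0 z hz
    have h2 : 0 ≤ R z * (2 * max (ρ z - 1) 0 * (R z / (P z * V z ^ 2))) := by
      have : R z * (2 * max (ρ z - 1) 0 * (R z / (P z * V z ^ 2)))
        = R z ^ 2 * (2 * max (ρ z - 1) 0) / (P z * V z ^ 2) := by field_simp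
      rw [this]
      have := le_max_right (ρ z - 1) 0
      positivity
    simp only [hB']
    have h3 := hsign z hz h1
    have h4 : 0 < max (ρ z - 1) 0 := lt_max_of_lt_left (by linarith)
    have := mul_pos h3 (pow_pos h4 2)
    linarith
  have hBm : MonotoneOn B (Ioi 0) := by
    apply monotoneOn_of_deriv_nonneg (convex_Ioi 0)
    · intro z hz; exact (hBd z hz).continuousAt.continuousWithinAt
    · intro z hz
      rw [interior_Ioi] at hz
      exact (hBd z hz).differentiableAt.differentiableWithinAt
    · intro z hz
      rw [interior_Ioi] at hz
      rw [(hBd z hz).deriv]; exact hBn z hz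
  have hsmall : ∀ᶠ z in 𝓝[>] (0:ℝ), 0 < z ∧ z < 1 := by
    exact Ioo_mem_nhdsGT (by norm_num)
  have hRb : ∀ᶠ z in 𝓝[>] (0:ℝ), |R z| ≤ (2 ^ |b| * C) * (|√z * W' z| + |√z * V' z|) := by
    filter_upwards [hsmall] with z hz
    obtain ⟨hz, hz1⟩ := hz
    have hX : (1 + z) ^ (-k) ≤ 1 := Real.rpow_le_one_of_one_le_of_nonpos (by linarith) (by linarith)
    have hw : W z ≤ C := (hWb z hz).trans (by nlinarith)
    have hv : V z ≤ C := (hVb z hz).trans (by nlinarith)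
    have e : P z = z ^ (N - 1 / 2) * (1 + z) ^ b * √z := by
      simp only [hP]
      rw [Real.sqrt_eq_rpow, mul_right_comm, ← Real.rpow_add hz]; congr 2; ring
    have e2 : R z = (z ^ (N - 1 / 2) * (1 + z) ^ b) * ((√z * W' z) * V z - W z * (√z * V' z)) := by
      simp only [hR]; rw [e]; ring
    have e3 : z ^ (N - 1 / 2) ≤ 1 := Real.rpow_le_one hz.le hz1.le (by linarith)
    have e4 : (1 + z) ^ b ≤ 2 ^ |b| := by
      calc (1 + z) ^ b ≤ (1 + z) ^ |b| :=
            Real.rpow_le_rpow_of_exponent_le (by linarith) (le_abs_self b)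
        _ ≤ 2 ^ |b| := Real.rpow_le_rpow (by linarith) (by linarith) (abs_nonneg _)
    have e5 : z ^ (N - 1 / 2) * (1 + z) ^ b ≤ 2 ^ |b| := by
      calc z ^ (N - 1 / 2) * (1 + z) ^ b ≤ 1 * 2 ^ |b| := by gcongr
        _ = _ := one_mul _
    rw [e2, abs_mul, abs_of_pos (by positivity : 0 < z ^ (N - 1 / 2) * (1 + z) ^ b), mul_assoc (2 ^ |b|)]
    apply mul_le_mul e5 _ (abs_nonneg _) (by positivity)
    calc |√z * W' z * V z - W z * (√z * V' z)| ≤ |√z * W' z * V z| + |W z * (√z * V' z)| := abs_sub _ _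
      _ = |√z * W' z| * V z + W z * |√z * V' z| := by
        rw [abs_mul _ (V z), abs_mul (W z), abs_of_pos (hV0 z hz), abs_of_pos (hW0 z hz)]
      _ ≤ |√z * W' z| * C + C * |√z * V' z| := by gcongr
      _ = _ := by ring
  have hR0 : Tendsto R (𝓝[>] 0) (𝓝 0) := by
    rw [tendsto_zero_iff_abs_tendsto_zero]
    apply squeeze_zero' (Eventually.of_forall fun z => abs_nonneg _) hRb
    have := (hWd.abs.add hVd.abs).const_mul (2 ^ |b| * C)
    simpa using this
  have hB0 : Tendsto B (𝓝[>] 0) (𝓝 0) := by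
    have hbd : ∀ᶠ z in 𝓝[>] (0:ℝ), |B z| ≤ |R z| * (C ^ 2) ^ 2 := by
      filter_upwards [hsmall] with z hz
      simp only [hB]
      rw [abs_mul, abs_of_nonneg (sq_nonneg (max (ρ z - 1) 0))]
      gcongr
      apply max_le _ (by positivity)
      have := hρb z hz.1
      linarith
    rw [tendsto_zero_iff_abs_tendsto_zero]
    apply squeeze_zero' (Eventually.of_forall fun z => abs_nonneg _) hbd
    have := hR0.abs.mul_const ((C ^ 2) ^ 2)
    simpa using this
  have hBnn : ∀ z, 0 < z → 0 ≤ B z := by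
    intro z hz
    apply le_of_tendsto hB0
    filter_upwards [Ioo_mem_nhdsGT hz] with y hy
    exact hBm hy.1 hz hy.2.le
  intro z0 hz0
  by_contra hcon
  push Not at hcon
  have hρ1 : 1 < ρ z0 := by
    simp only [hρ]; rwa [one_lt_div (hV0 z0 hz0)]
  obtain ⟨z1, hz01, hBz1⟩ : ∃ z1, z0 < z1 ∧ 0 < B z1 := by
    have h0 := (hBd z0 hz0).tendsto_slope.mono_left
      (nhdsWithin_mono z0 (fun y (hy : z0 < y) => (ne_of_gt hy : y ≠ z0)))
    have h1 : ∀ᶠ y in 𝓝[>] z0, 0 < slope B z0 y := h0.eventually_const_lt (hBp z0 hz0 hρ1)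
    obtain ⟨z1, h2, h3⟩ := (h1.and self_mem_nhdsWithin).exists
    rw [slope_def_field] at h2
    have h3' : z0 < z1 := h3
    have h4 := (div_pos_iff_of_pos_right (by linarith : 0 < z1 - z0)).mp h2
    have h5 := hBnn z0 hz0
    exact ⟨z1, h3, by linarith⟩
  have hz1 : 0 < z1 := hz0.trans hz01
  have hright : ∀ z, z1 ≤ z → 1 < ρ z ∧ 0 < R z := by
    intro z hz
    have hz' : 0 < z := hz1.trans_le hz
    have h1 : 0 < B z := hBz1.trans_le (hBm hz1 hz' hz)
    simp only [hB] at h1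
    constructor
    · by_contra h2
      push Not at h2
      rw [max_eq_right (by linarith : ρ z - 1 ≤ 0)] at h1
      simp at h1
    · exact pos_of_mul_pos_left h1 (sq_nonneg _)
  have hRm : MonotoneOn R (Ici z1) := by
    apply monotoneOn_of_deriv_nonneg (convex_Ici z1)
    · intro z hz; exact (hRd z (hz1.trans_le hz)).continuousAt.continuousWithinAt
    · intro z hz
      rw [interior_Ici] at hz
      exact (hRd z (hz1.trans hz)).differentiableAt.differentiableWithinAt
    · intro z hz
      rw [interior_Ici] at hz
      rw [(hRd z (hz1.trans hz)).deriv]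
      exact (hsign z (hz1.trans hz) (hright z (le_of_lt hz)).1).le
  have hPV : ∀ z, 0 < z → P z * V z ^ 2 ≤ C ^ 2 * (1 + z) := by
    intro z hz
    have hX : 1 ≤ 1 + z := by linarith
    have hX0 : 0 < 1 + z := by linarith
    calc P z * V z ^ 2 ≤ ((1 + z) ^ N * (1 + z) ^ b) * (C * (1 + z) ^ (-k)) ^ 2 := by
          simp only [hP]
          have := (hV0 z hz).le
          gcongr
          · linarith
          · exact hVb z hz
      _ = C ^ 2 * (1 + z) ^ (1 - m / 2) := by
          rw [mul_pow, ← Real.rpow_natCast ((1 + z) ^ (-k)) 2, ← Real.rpow_mul hX0.le,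
            ← Real.rpow_add hX0, mul_left_comm, ← Real.rpow_add hX0]
          congr 2; rw [hk, hb]; push_cast; ring
      _ ≤ C ^ 2 * (1 + z) ^ (1 : ℝ) := by
          gcongr
          linarith
      _ = _ := by rw [Real.rpow_one]
  set e := R z1 / C ^ 2 with he
  have he0 : 0 < e := div_pos (hright z1 le_rfl).2 (by positivity)
  have hmono : MonotoneOn (fun z => ρ z - e * Real.log (1 + z)) (Ici z1) := by
    have hd : ∀ z, 0 < z → HasDerivAt (fun z => ρ z - e * Real.log (1 + z))
        (R z / (P z * V z ^ 2) - e * (1 / (1 + z))) z := by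
      intro z hz
      have h1 := ((hasDerivAt_id z).const_add 1).log (by simp; positivity)
      exact (hρd z hz).sub (h1.const_mul e)
    apply monotoneOn_of_deriv_nonneg (convex_Ici z1)
    · intro z hz; exact (hd z (hz1.trans_le hz)).continuousAt.continuousWithinAt
    · intro z hz
      rw [interior_Ici] at hz
      exact (hd z (hz1.trans hz)).differentiableAt.differentiableWithinAt
    · intro z hz
      rw [interior_Ici] at hz
      have hz' : 0 < z := hz1.trans hz
      rw [(hd z hz').deriv]
      have h1 : R z1 ≤ R z := hRm (mem_Ici.mpr le_rfl) (mem_Ici.mpr (le_of_lt hz)) (le_of_lt hz)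
      have h2 := hPV z hz'
      have h3 := hP0 z hz'
      have h4 := hV0 z hz'
      have h5 := (hright z1 le_rfl).2
      have : e * (1 / (1 + z)) ≤ R z / (P z * V z ^ 2) := by
        calc e * (1 / (1 + z)) = R z1 / (C ^ 2 * (1 + z)) := by rw [he]; field_simp
          _ ≤ R z1 / (P z * V z ^ 2) := by gcongr
          _ ≤ R z / (P z * V z ^ 2) := by gcongr
      linarith
  have hlim : Tendsto (fun z : ℝ => e * Real.log (1 + z)) atTop atTop := by
    apply Tendsto.const_mul_atTop he0
    exact Real.tendsto_log_atTop.comp (tendsto_atTop_add_const_left _ _ tendsto_id)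
  obtain ⟨z2, h1, h2⟩ := ((hlim.eventually_gt_atTop
    (C ^ 2 - (ρ z1 - e * Real.log (1 + z1)))).and (eventually_ge_atTop z1)).exists
  have h3 := hmono (by simp : z1 ∈ Ici z1) h2 h2
  have h4 := hρb z2 (hz1.trans_le h2)
  simp only at h3
  linarith

/-- base point `(1, h, 0, …)`. -/
noncomputable def ptV {n : ℕ} (hn : 2 ≤ n) (h : ℝ) : EuclideanSpace ℝ (Fin n) :=
  EuclideanSpace.single ⟨0, by omega⟩ (1 : ℝ) + h • EuclideanSpace.single ⟨1, by omega⟩ (1 : ℝ)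

lemma x1_ptV {n : ℕ} (hn : 2 ≤ n) (h : ℝ) : x1 (ptV hn h) = 1 := by
  rw [x1_eq (by omega : 0 < n)]
  simp [ptV]

lemma norm_ptV {n : ℕ} (hn : 2 ≤ n) (h : ℝ) : ‖ptV hn h‖ ^ 2 = 1 + h ^ 2 := by
  unfold ptV
  rw [norm_line]
  simp

lemma ptV_mem {n : ℕ} (hn : 2 ≤ n) (h : ℝ) : ptV hn h ∈ halfSpace n := by
  simp [halfSpace, x1_ptV]

lemma ptV_contDiff {n : ℕ} (hn : 2 ≤ n) : ContDiff ℝ 2 (ptV hn) := by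
  unfold ptV; fun_prop

lemma etaV_ptV {n : ℕ} (hn : 2 ≤ n) (h : ℝ) : etaV (ptV hn h) = h ^ 2 := by
  rw [etaV, x1_ptV, norm_ptV]; ring

lemma x1_le_norm {n : ℕ} (hn : 0 < n) (x : EuclideanSpace ℝ (Fin n)) : |x1 x| ≤ ‖x‖ := by
  rw [x1_eq hn, ← Real.norm_eq_abs]
  exact PiLp.norm_apply_le x _

lemma etaV_nonneg {n : ℕ} (hn : 0 < n) {x : EuclideanSpace ℝ (Fin n)} (hx : x ∈ halfSpace n) :
    0 ≤ etaV x := by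
  have hx0 : 0 < x1 x := hx
  have h1 := x1_le_norm hn x
  rw [abs_of_pos hx0] at h1
  rw [etaV, sub_nonneg, one_le_div (by positivity)]
  gcongr

lemma x1_smul {n : ℕ} (hn : 0 < n) (l : ℝ) (x : EuclideanSpace ℝ (Fin n)) :
    x1 (l • x) = l * x1 x := by
  simp [x1_eq hn]

lemma sep_repr {n : ℕ} (hn : 2 ≤ n) (μ p : ℝ) (u : EuclideanSpace ℝ (Fin n) → ℝ)
    (hu : IsSepSolPlus n μ p u) {x : EuclideanSpace ℝ (Fin n)} (hx : x ∈ halfSpace n) :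
    u x = x1 x ^ (-(2 / (p - 1))) * u (ptV hn (√(etaV x))) := by
  obtain ⟨-, -, -, hsym, hhom, -⟩ := hu
  have hx0 : 0 < x1 x := hx
  have hn0 : 0 < n := by omega
  have hy1 : x1 ((x1 x)⁻¹ • x) = 1 := by rw [x1_smul hn0]; field_simp
  have hy : (x1 x)⁻¹ • x ∈ halfSpace n := by simp [halfSpace, hy1]
  have h1 := hhom (x1 x) hx0 _ hy
  rw [smul_smul, mul_inv_cancel₀ hx0.ne', one_smul] at h1
  rw [h1]
  congr 1
  apply hsym _ hy _ (ptV_mem hn _)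
  · rw [hy1, x1_ptV]
  · rw [← sq_eq_sq₀ (norm_nonneg _) (norm_nonneg _), norm_ptV, Real.sq_sqrt (etaV_nonneg hn0 hx),
      norm_smul, norm_inv, Real.norm_eq_abs, abs_of_pos hx0, etaV]
    field_simp; ring

lemma sep_profile {n : ℕ} (hn : 2 ≤ n) (μ p : ℝ) (u : EuclideanSpace ℝ (Fin n) → ℝ)
    (hu : IsSepSolPlus n μ p u) (W : ℝ → ℝ) (hWdef : W = fun z => u (ptV hn (√z))) :
    (∀ z, 0 < z → HasDerivAt W (deriv W z) z) ∧
    (∀ z, 0 < z → HasDerivAt (deriv W) (deriv (deriv W) z) z) ∧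
    (∀ z, 0 < z → 0 < W z) ∧
    (∀ z, 0 < z → 4 * z * (1 + z) * deriv (deriv W) z
      + (4 * (((n : ℝ) - 1) / 2) + (6 + 4 * (2 / (p - 1))) * z) * deriv W z
      + (2 / (p - 1) * (2 / (p - 1) + 1) + μ) * W z = W z ^ p) ∧
    (∃ c > (0 : ℝ), ∀ z, 0 < z → c⁻¹ * (1 + z) ^ (-((2 / (p - 1) + aPlus μ) / 2)) ≤ W z ∧
      W z ≤ c * (1 + z) ^ (-((2 / (p - 1) + aPlus μ) / 2))) ∧
    Tendsto (fun z => √z * deriv W z) (𝓝[>] 0) (𝓝 0) := by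
  have hrepr := fun x (hx : x ∈ halfSpace n) => sep_repr hn μ p u hu hx
  obtain ⟨hreg, hpos, hpde, hsym, hhom, c, hc, hbd⟩ := hu
  set s := 2 / (p - 1) with hs
  have hn0 : 0 < n := by omega
  set U : ℝ → ℝ := fun h => u (ptV hn h) with hU
  have hUc : ContDiff ℝ 2 U := by
    rw [contDiff_iff_contDiffAt]
    intro h
    exact (hreg.contDiffAt ((halfSpace_open n).mem_nhds (ptV_mem hn h))).comp h
      (ptV_contDiff hn).contDiffAt
  have hWU : W = U ∘ Real.sqrt := hWdef
  have hWc : ∀ z, 0 < z → ContDiffAt ℝ 2 W z := by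
    intro z hz
    rw [hWU]
    exact hUc.contDiffAt.comp z (Real.contDiffAt_sqrt hz.ne')
  have hWd : ∀ z, 0 < z → HasDerivAt W (deriv W z) z := fun z hz =>
    (hasDeriv_two W z (hWc z hz)).1.self_of_nhds
  refine ⟨hWd, fun z hz => (hasDeriv_two W z (hWc z hz)).2,
    fun z hz => by rw [hWdef]; exact hpos _ (ptV_mem hn _), ?_, ?_, ?_⟩
  · intro z hz
    set x := ptV hn (√z) with hx
    have hxm : x ∈ halfSpace n := ptV_mem hn _
    have hxe : etaV x = z := by rw [hx, etaV_ptV, Real.sq_sqrt hz.le]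
    have hx1 : x1 x = 1 := x1_ptV hn _
    have h1 := hpde x hxm
    have heq : u =ᶠ[𝓝 x] fun x => x1 x ^ (-s) * W (etaV x) := by
      filter_upwards [(halfSpace_open n).mem_nhds hxm] with y hy
      rw [hrepr y hy, hWdef]
    have h2 : lap u x = lap (fun x => x1 x ^ (-s) * W (etaV x)) x := by
      unfold lap
      rw [(heq.iteratedFDeriv ℝ 2).self_of_nhds]
    rw [h2, lap_formula hn0 hxm s W (by rw [hxe]; exact hWc z hz), hxe, hx1] at h1
    have h3 : u x = W z := by rw [hWdef]
    rw [h3] at h1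
    simp only [one_rpow, one_mul, one_pow, div_one] at h1
    rw [← h1]; ring
  · refine ⟨c, hc, fun z hz => ?_⟩
    have h1 := hbd _ (ptV_mem hn (√z))
    have h2 : ‖ptV hn (√z)‖ ^ (-(aPlus μ) - s) = (1 + z) ^ (-((s + aPlus μ) / 2)) := by
      have h3 := norm_ptV hn (√z)
      rw [Real.sq_sqrt hz.le] at h3
      rw [← h3, ← Real.rpow_natCast _ 2, ← Real.rpow_mul (norm_nonneg _)]
      congr 1; push_cast; ring
    rw [x1_ptV, h2] at h1
    simp only [one_rpow, mul_one] at h1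
    rw [hWdef]; exact h1
  · have hev : deriv U 0 = 0 := by
      have h1 : (fun h => U (-h)) = U := by
        funext h
        simp only [hU]
        apply hsym _ (ptV_mem hn _) _ (ptV_mem hn _)
        · rw [x1_ptV, x1_ptV]
        · rw [← sq_eq_sq₀ (norm_nonneg _) (norm_nonneg _), norm_ptV, norm_ptV]; ring
      have h2 := deriv_comp_neg U 0
      rw [h1, neg_zero] at h2
      linarith
    have hcd : Continuous (deriv U) := hUc.continuous_deriv (by norm_num)
    have hd : ∀ z, 0 < z → deriv W z = deriv U (√z) * (1 / (2 * √z)) := by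
      intro z hz
      have h1 := (hUc.differentiable (by norm_num) (√z)).hasDerivAt.comp z
        (Real.hasDerivAt_sqrt hz.ne')
      rw [hWU]; exact h1.deriv
    have h1 : Tendsto (fun z => deriv U (√z) / 2) (𝓝[>] 0) (𝓝 0) := by
      have : Continuous (fun z => deriv U (√z) / 2) := by fun_prop
      have h2 := this.tendsto 0
      simp only [Real.sqrt_zero, hev, zero_div] at h2
      exact h2.mono_left nhdsWithin_le_nhds
    refine h1.congr' ?_
    filter_upwards [self_mem_nhdsWithin] with z hz
    have hz' : 0 < z := hz
    rw [hd z hz']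
    have : 0 < √z := Real.sqrt_pos.mpr hz'
    field_simp

lemma sep_le {n : ℕ} (hn : 2 ≤ n) (μ p : ℝ) (hμ : μ < 1 / 4) (hp1 : 1 < p)
    (u v : EuclideanSpace ℝ (Fin n) → ℝ)
    (hu : IsSepSolPlus n μ p u) (hv : IsSepSolPlus n μ p v) :
    ∀ z, 0 < z → u (ptV hn (√z)) ≤ v (ptV hn (√z)) := by
  obtain ⟨a1, a2, a3, a4, ⟨c, hc, a5⟩, a6⟩ := sep_profile hn μ p u hu _ rfl
  obtain ⟨b1, b2, b3, b4, ⟨d, hd, b5⟩, b6⟩ := sep_profile hn μ p v hv _ rfl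
  have hm : 0 < 2 * √(1 / 4 - μ) := by
    have := Real.sqrt_pos.mpr (by linarith : 0 < 1 / 4 - μ)
    linarith
  have hα : aPlus μ = (1 + 2 * √(1 / 4 - μ)) / 2 := by rw [aPlus]; ring
  have hN : (1 : ℝ) / 2 ≤ ((n : ℝ) - 1) / 2 := by
    have : (2 : ℝ) ≤ n := by exact_mod_cast hn
    linarith
  rw [hα] at a5 b5
  have hs : 0 < 2 / (p - 1) := div_pos two_pos (by linarith)
  refine ode_le (((n : ℝ) - 1) / 2) (2 / (p - 1)) (2 * √(1 / 4 - μ)) p _ hN hm hp1 _ _ _ _ _ _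
    a1 b1 a2 b2 a3 b3 a4 b4 (max c d) (lt_max_of_lt_left hc) ?_ ?_ ?_ hs a6 b6
  · intro z hz
    refine (a5 z hz).2.trans ?_
    gcongr; exact le_max_left _ _
  · intro z hz
    refine (b5 z hz).2.trans ?_
    gcongr; exact le_max_right _ _
  · intro z hz
    refine le_trans ?_ (b5 z hz).1
    gcongr; exact le_max_right _ _

lemma sep_unique {n : ℕ} (hn : 2 ≤ n) (μ p : ℝ) (hμ : μ < 1 / 4) (hp1 : 1 < p)
    (u v : EuclideanSpace ℝ (Fin n) → ℝ)
    (hu : IsSepSolPlus n μ p u) (hv : IsSepSolPlus n μ p v) : Set.EqOn u v (halfSpace n) := by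
  have hcont : ∀ w : EuclideanSpace ℝ (Fin n) → ℝ, IsSepSolPlus n μ p w →
      Continuous (fun h => w (ptV hn h)) := by
    intro w hw
    rw [continuous_iff_continuousAt]
    intro h
    exact (hw.1.continuousOn.continuousAt ((halfSpace_open n).mem_nhds (ptV_mem hn h))).comp
      (ptV_contDiff hn).continuous.continuousAt
  have h1 : ∀ h, 0 < h → u (ptV hn h) = v (ptV hn h) := by
    intro h hh
    have e : √(h ^ 2) = h := Real.sqrt_sq hh.le
    have h2 := sep_le hn μ p hμ hp1 u v hu hv (h ^ 2) (by positivity)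
    have h3 := sep_le hn μ p hμ hp1 v u hv hu (h ^ 2) (by positivity)
    rw [e] at h2 h3
    exact le_antisymm h2 h3
  have h2 : ∀ h, 0 ≤ h → u (ptV hn h) = v (ptV hn h) := by
    have hcl : IsClosed {h | u (ptV hn h) = v (ptV hn h)} :=
      isClosed_eq (hcont u hu) (hcont v hv)
    have hsub : closure (Ioi (0:ℝ)) ⊆ {h | u (ptV hn h) = v (ptV hn h)} :=
      hcl.closure_subset_iff.mpr (fun h hh => h1 h hh)
    rw [closure_Ioi] at hsub
    exact fun h hh => hsub hh
  intro x hx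
  rw [sep_repr hn μ p u hu hx, sep_repr hn μ p v hv hx, h2 _ (Real.sqrt_nonneg _)]

lemma cmp_super (k : ℕ) (P P' g : ℝ → ℝ) (hP : ∀ t, 0 ≤ t → HasDerivAt P (P' t) t)
    (hg : Continuous g) (h : ∀ t, 0 ≤ t → g t ≤ ((k : ℝ) + 1) / 2 * P t + t * P' t) (z : ℝ) (hz : 0 ≤ z) :
    ∫ σ in (0:ℝ)..1, 2 * σ ^ k * g (z * σ ^ 2) ≤ P z := by
  have hd : ∀ σ : ℝ, HasDerivAt (fun σ : ℝ => σ ^ (k + 1) * P (z * σ ^ 2))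
      (2 * σ ^ k * (((k : ℝ) + 1) / 2 * P (z * σ ^ 2) + z * σ ^ 2 * P' (z * σ ^ 2))) σ := by
    intro σ
    have h1 : HasDerivAt (fun σ : ℝ => z * σ ^ 2) (z * (2 * σ)) σ := by
      refine hda ((hasDerivAt_pow 2 σ).const_mul z) (fun _ => rfl) (by norm_num)
    have h2 := (hP (z * σ ^ 2) (by positivity)).comp σ h1
    refine hda ((hasDerivAt_pow (k + 1) σ).mul h2) (fun _ => rfl) ?_
    simp only [Nat.add_sub_cancel, Function.comp]; push_cast; ring
  have := intervalIntegral.integral_le_sub_of_hasDeriv_right_of_le (a := 0) (b := 1)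
    (φ := fun σ => 2 * σ ^ k * g (z * σ ^ 2)) zero_le_one
    (fun σ _ => (hd σ).continuousAt.continuousWithinAt)
    (fun σ _ => (hd σ).hasDerivWithinAt)
    ((by fun_prop : Continuous (fun σ : ℝ => 2 * σ ^ k * g (z * σ ^ 2))).integrableOn_Icc)
    (fun σ hσ => by
      have := hσ.1.le
      exact mul_le_mul_of_nonneg_left (h _ (by positivity)) (by positivity))
  simpa using this

lemma cmp_sub (k : ℕ) (P P' g : ℝ → ℝ) (hP : ∀ t, 0 ≤ t → HasDerivAt P (P' t) t)
    (hg : Continuous g) (h : ∀ t, 0 ≤ t → ((k : ℝ) + 1) / 2 * P t + t * P' t ≤ g t) (z : ℝ) (hz : 0 ≤ z) :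
    P z ≤ ∫ σ in (0:ℝ)..1, 2 * σ ^ k * g (z * σ ^ 2) := by
  have := cmp_super k (fun t => - P t) (fun t => - P' t) (fun t => - g t) (fun t ht => (hP t ht).neg)
    hg.neg (fun t ht => by nlinarith [h t ht]) z hz
  simp only [mul_neg, intervalIntegral.integral_neg] at this
  linarith

open MeasureTheory in
lemma dlin (k : ℕ) (g : ℝ → ℝ) (hg : Continuous g) (hg0 : ∀ t, 0 ≤ g t) (z : ℝ) :
    ∫⁻ σ in Ioc (0:ℝ) 1, ENNReal.ofReal (2 * σ ^ k * g (z * σ ^ 2))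
      = ENNReal.ofReal (∫ σ in (0:ℝ)..1, 2 * σ ^ k * g (z * σ ^ 2)) := by
  rw [intervalIntegral.integral_of_le zero_le_one, ofReal_integral_eq_lintegral_ofReal]
  · exact ((by fun_prop : Continuous (fun σ : ℝ => 2 * σ ^ k * g (z * σ ^ 2))).integrableOn_Icc
      (a := 0) (b := 1)).mono_set Ioc_subset_Icc_self
  · refine (ae_restrict_iff' measurableSet_Ioc).2 (Eventually.of_forall fun σ hσ => ?_)
    have := hσ.1.le
    have := hg0 (z * σ ^ 2)
    positivity

open MeasureTheory in
lemma vlin (v P e : ℝ → ℝ) (hv : ∀ t, 0 ≤ t → HasDerivAt v (-(e t * P t)) t)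
    (he : ∀ t, 0 ≤ e t) (hP : ∀ t, 0 ≤ t → 0 ≤ P t) (hlim : Tendsto v atTop (𝓝 0)) (η : ℝ) (hη : 0 ≤ η) :
    ∫⁻ z in Ioi η, ENNReal.ofReal (e z * P z) = ENNReal.ofReal (v η) := by
  have hd : ∀ x ∈ Ici η, HasDerivAt v (-(e x * P x)) x := fun x hx => hv x (hη.trans hx)
  have hn : ∀ x ∈ Ioi η, -(e x * P x) ≤ 0 := fun x hx => by
    have := mul_nonneg (he x) (hP x (hη.trans (mem_Ioi.mp hx).le)); linarith
  have h1 := integral_Ioi_of_hasDerivAt_of_nonpos' hd hn hlim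
  have h2 := integrableOn_Ioi_deriv_of_nonpos' hd hn hlim
  rw [integral_neg] at h1
  have h3 : v η = ∫ x in Ioi η, e x * P x := by linarith
  rw [h3, ofReal_integral_eq_lintegral_ofReal]
  · exact (integrable_neg_iff.1 h2)
  · refine (ae_restrict_iff' measurableSet_Ioi).2 (Eventually.of_forall fun σ hσ => ?_)
    exact mul_nonneg (he σ) (hP σ (hη.trans (mem_Ioi.mp hσ).le))

open MeasureTheory in
lemma fp_exists (k : ℕ) (G : ℝ → ℝ → ℝ) (e gp gm vp vm Pp Pp' Pm Pm' : ℝ → ℝ)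
    (hG : Continuous (Function.uncurry G)) (hmono : ∀ z, Monotone (G z)) (hgp : Continuous gp)
    (hgm : Continuous gm) (he : Continuous e) (he0 : ∀ z, 0 ≤ e z) (hgm0 : ∀ z, 0 ≤ gm z)
    (hGp : ∀ z w, G z w ≤ gp z) (hGm : ∀ z w, gm z ≤ G z w)
    (hPp : ∀ t, 0 ≤ t → HasDerivAt Pp (Pp' t) t)
    (hPm : ∀ t, 0 ≤ t → HasDerivAt Pm (Pm' t) t)
    (hsup : ∀ t, 0 ≤ t → gp t ≤ ((k : ℝ) + 1) / 2 * Pp t + t * Pp' t)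
    (hsub : ∀ t, 0 ≤ t → ((k : ℝ) + 1) / 2 * Pm t + t * Pm' t ≤ gm t)
    (hPm0 : ∀ t, 0 ≤ t → 0 ≤ Pm t)
    (hvp : ∀ t, 0 ≤ t → HasDerivAt vp (-(e t * Pp t)) t)
    (hvm : ∀ t, 0 ≤ t → HasDerivAt vm (-(e t * Pm t)) t)
    (hvp0 : ∀ t, 0 ≤ t → 0 ≤ vp t)
    (hlp : Tendsto vp atTop (𝓝 0)) (hlm : Tendsto vm atTop (𝓝 0)) :
    ∃ v : ℝ → ℝ, Continuous v ∧ (∀ z, 0 ≤ z → vm z ≤ v z ∧ v z ≤ vp z) ∧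
      ∀ η, 0 ≤ η → v η = v 0 - ∫ z in (0:ℝ)..η, e z * ∫ σ in (0:ℝ)..1, 2 * σ ^ k * G (z * σ ^ 2) (v (z * σ ^ 2)) := by
  have hG0 : ∀ z w, 0 ≤ G z w := fun z w => (hgm0 z).trans (hGm z w)
  have hgp0 : ∀ z, 0 ≤ gp z := fun z => (hG0 z 0).trans (hGp z 0)
  have hPp0 : ∀ t, 0 ≤ t → 0 ≤ Pp t := fun t ht => by
    refine le_trans ?_ (cmp_super k Pp Pp' gp hPp hgp hsup t ht)
    refine intervalIntegral.integral_nonneg zero_le_one fun σ hσ => ?_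
    have := hσ.1
    have := hgp0 (t * σ ^ 2)
    positivity
  set K : ENNReal := ENNReal.ofReal (vp 0) with hK
  let Dl : (ℝ → ENNReal) → ℝ → ENNReal := fun w z =>
    ∫⁻ σ in Ioc (0:ℝ) 1, ENNReal.ofReal (2 * σ ^ k * G (z * σ ^ 2) (min (w (z * σ ^ 2)) K).toReal)
  let T : (ℝ → ENNReal) → ℝ → ENNReal := fun w η => ∫⁻ z in Ioi (max η 0), ENNReal.ofReal (e z) * Dl w z
  have hDlmono : ∀ w₁ w₂ : ℝ → ENNReal, w₁ ≤ w₂ → ∀ z, Dl w₁ z ≤ Dl w₂ z := by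
    intro w₁ w₂ h z
    refine setLIntegral_mono' measurableSet_Ioc fun σ hσ => ?_
    refine ENNReal.ofReal_le_ofReal ?_
    have := hσ.1.le
    refine mul_le_mul_of_nonneg_left (hmono _ ?_) (by positivity)
    refine ENNReal.toReal_mono ?_ (min_le_min_right _ (h _))
    exact ne_top_of_le_ne_top ENNReal.ofReal_ne_top (min_le_right _ _)
  have hTmono : Monotone T := by
    intro w₁ w₂ h η
    exact lintegral_mono fun z => mul_le_mul_right (hDlmono _ _ h z) _
  have hDlp : ∀ w z, 0 ≤ z → Dl w z ≤ ENNReal.ofReal (Pp z) := by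
    intro w z hz
    calc Dl w z ≤ ∫⁻ σ in Ioc (0:ℝ) 1, ENNReal.ofReal (2 * σ ^ k * gp (z * σ ^ 2)) := by
          refine setLIntegral_mono' measurableSet_Ioc fun σ hσ => ?_
          refine ENNReal.ofReal_le_ofReal ?_
          have := hσ.1.le
          exact mul_le_mul_of_nonneg_left (hGp _ _) (by positivity)
      _ = _ := dlin k gp hgp hgp0 z
      _ ≤ _ := ENNReal.ofReal_le_ofReal (cmp_super k Pp Pp' gp hPp hgp hsup z hz)
  have hDlm : ∀ w z, 0 ≤ z → ENNReal.ofReal (Pm z) ≤ Dl w z := by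
    intro w z hz
    calc ENNReal.ofReal (Pm z) ≤ ENNReal.ofReal (∫ σ in (0:ℝ)..1, 2 * σ ^ k * gm (z * σ ^ 2)) :=
          ENNReal.ofReal_le_ofReal (cmp_sub k Pm Pm' gm hPm hgm hsub z hz)
      _ = ∫⁻ σ in Ioc (0:ℝ) 1, ENNReal.ofReal (2 * σ ^ k * gm (z * σ ^ 2)) := (dlin k gm hgm hgm0 z).symm
      _ ≤ _ := by
          refine setLIntegral_mono' measurableSet_Ioc fun σ hσ => ?_
          refine ENNReal.ofReal_le_ofReal ?_
          have := hσ.1.le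
          exact mul_le_mul_of_nonneg_left (hGm _ _) (by positivity)
  have hTp : ∀ w η, 0 ≤ η → T w η ≤ ENNReal.ofReal (vp η) := by
    intro w η hη
    rw [← vlin vp Pp e hvp he0 hPp0 hlp η hη]
    simp only [T, max_eq_left hη]
    refine setLIntegral_mono' measurableSet_Ioi fun z hz => ?_
    rw [ENNReal.ofReal_mul (he0 z)]
    exact mul_le_mul_right (hDlp w z (hη.trans (mem_Ioi.mp hz).le)) _
  have hTm : ∀ w η, 0 ≤ η → ENNReal.ofReal (vm η) ≤ T w η := by
    intro w η hη
    rw [← vlin vm Pm e hvm he0 hPm0 hlm η hη]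
    simp only [T, max_eq_left hη]
    refine setLIntegral_mono' measurableSet_Ioi fun z hz => ?_
    rw [ENNReal.ofReal_mul (he0 z)]
    exact mul_le_mul_right (hDlm w z (hη.trans (mem_Ioi.mp hz).le)) _
  have hTanti : ∀ w, Antitone (T w) := by
    intro w a b hab
    exact lintegral_mono_set (Ioi_subset_Ioi (max_le_max_right _ hab))
  set w : ℝ → ENNReal := OrderHom.lfp (⟨T, hTmono⟩ : (ℝ → ENNReal) →o (ℝ → ENNReal)) with hwdef
  have hw : T w = w := OrderHom.map_lfp (⟨T, hTmono⟩ : (ℝ → ENNReal) →o (ℝ → ENNReal))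
  have hwanti : Antitone w := by rw [← hw]; exact hTanti w
  have hwK : ∀ z, w z ≤ K := by
    intro z
    have h1 : w z = w (max z 0) := by
      rw [← hw]; simp only [T]; rw [max_eq_left (le_max_right z 0)]
    rw [h1]
    refine (hwanti (le_max_right z 0)).trans ?_
    have := hTp w 0 le_rfl
    rwa [hw] at this
  have hwtop : ∀ z, w z ≠ ⊤ := fun z => ne_top_of_le_ne_top ENNReal.ofReal_ne_top (hwK z)
  have hwmeas : Measurable w := hwanti.measurable
  set v : ℝ → ℝ := fun z => (w z).toReal with hv
  have hDlv : ∀ z, Dl w z = ∫⁻ σ in Ioc (0:ℝ) 1, ENNReal.ofReal (2 * σ ^ k * G (z * σ ^ 2) (v (z * σ ^ 2))) := by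
    intro z; simp only [Dl, min_eq_left (hwK _)]; rfl
  have hvmeas : Measurable v := hwmeas.ennreal_toReal
  have hDlmeas : Measurable (Dl w) := by
    have : Dl w = fun z => ∫⁻ σ in Ioc (0:ℝ) 1, ENNReal.ofReal (2 * σ ^ k * G (z * σ ^ 2) (v (z * σ ^ 2))) :=
      funext hDlv
    rw [this]
    refine Measurable.lintegral_prod_right'
      (f := fun q : ℝ × ℝ => ENNReal.ofReal (2 * q.2 ^ k * G (q.1 * q.2 ^ 2) (v (q.1 * q.2 ^ 2)))) ?_
    have h1 : Measurable (fun q : ℝ × ℝ => q.1 * q.2 ^ 2) := by fun_prop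
    have h2 : Measurable (fun q : ℝ × ℝ => G (q.1 * q.2 ^ 2) (v (q.1 * q.2 ^ 2))) :=
      hG.measurable.comp (h1.prodMk (hvmeas.comp h1))
    have h3 : Measurable (fun q : ℝ × ℝ => 2 * q.2 ^ k) := by fun_prop
    exact (h3.mul h2).ennreal_ofReal
  set Hl : ℝ → ENNReal := fun z => ENNReal.ofReal (e z) * Dl w z with hHl
  have hHlmeas : Measurable Hl := (he.measurable.ennreal_ofReal).mul hDlmeas
  have hwH : ∀ η, 0 ≤ η → w η = ∫⁻ z in Ioi η, Hl z := by
    intro η hη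
    conv_lhs => rw [← hw]
    simp only [T, max_eq_left hη]; rfl
  have hHtop : ∀ z, 0 ≤ z → Hl z < ⊤ := fun z hz =>
    ENNReal.mul_lt_top ENNReal.ofReal_lt_top ((hDlp w z hz).trans_lt ENNReal.ofReal_lt_top)
  have hintg : IntegrableOn (fun z => (Hl z).toReal) (Ioi 0) := by
    refine integrable_toReal_of_lintegral_ne_top hHlmeas.aemeasurable ?_
    rw [← hwH 0 le_rfl]; exact hwtop 0
  have hvH : ∀ η, 0 ≤ η → v η = ∫ z in Ioi η, (Hl z).toReal := by
    intro η hη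
    rw [integral_toReal hHlmeas.aemeasurable, ← hwH η hη]
    exact (ae_restrict_iff' measurableSet_Ioi).2 (Eventually.of_forall fun z hz =>
      hHtop z (hη.trans (mem_Ioi.mp hz).le))
  have hvcont : Continuous v := by
    have h1 : v = (fun b => ∫ z in Ioi b, (Hl z).toReal) ∘ (fun z => max z 0) := by
      funext z
      have h1 : w z = w (max z 0) := by
        rw [← hw]; simp only [T]; rw [max_eq_left (le_max_right z 0)]
      simp only [Function.comp]
      rw [← hvH _ (le_max_right z 0)]
      simp only [hv, h1]
    rw [h1]
    exact (IntegrableOn.continuousOn_Ici_primitive_Ioi hintg).comp_continuous (by fun_prop)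
      (fun z => le_max_right z 0)
  refine ⟨v, hvcont, fun z hz => ⟨?_, ?_⟩, fun η hη => ?_⟩
  · have := hTm w z hz
    rw [hw] at this
    exact (ENNReal.ofReal_le_iff_le_toReal (hwtop z)).1 this
  · have := hTp w z hz
    rw [hw] at this
    exact ENNReal.toReal_le_of_le_ofReal (hvp0 z hz) this
  · have h2 := intervalIntegral.integral_Ioi_sub_Ioi' hintg (hintg.mono_set (Ioi_subset_Ioi hη))
    rw [← hvH 0 le_rfl, ← hvH η hη] at h2
    have h3 : ∀ z, (Hl z).toReal
        = e z * ∫ σ in (0:ℝ)..1, 2 * σ ^ k * G (z * σ ^ 2) (v (z * σ ^ 2)) := by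
      intro z
      have hgc : Continuous (fun t => G t (v t)) := hG.comp (continuous_id.prodMk hvcont)
      have h4 := dlin k (fun t => G t (v t)) hgc (fun t => hG0 _ _) z
      simp only [hHl, hDlv, ENNReal.toReal_mul]
      rw [h4, ENNReal.toReal_ofReal (he0 z), ENNReal.toReal_ofReal]
      refine intervalIntegral.integral_nonneg zero_le_one fun σ hσ => ?_
      have := hσ.1
      have := hG0 (z * σ ^ 2) (v (z * σ ^ 2))
      positivity
    simp only [h3] at h2
    linarith

noncomputable def Dop (k : ℕ) (g : ℝ → ℝ) (z : ℝ) : ℝ := ∫ σ in (0:ℝ)..1, 2 * σ ^ k * g (z * σ ^ 2)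

lemma Dop_cont (k : ℕ) (g : ℝ → ℝ) (hg : Continuous g) : Continuous (Dop k g) := by
  unfold Dop
  apply intervalIntegral.continuous_parametric_intervalIntegral_of_continuous'
  simp only [Function.uncurry_def]
  fun_prop

lemma Dop_congr (k : ℕ) (f g : ℝ → ℝ) (h : ∀ z, 0 ≤ z → f z = g z) (z : ℝ) (hz : 0 ≤ z) :
    Dop k f z = Dop k g z := by
  unfold Dop
  refine intervalIntegral.integral_congr fun σ _ => ?_
  rw [h _ (by positivity)]

lemma Dop_deriv (k : ℕ) (g g' : ℝ → ℝ) (hg : ∀ t, HasDerivAt g (g' t) t) (hg' : Continuous g') (z : ℝ) :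
    HasDerivAt (Dop k g) (Dop (k + 2) g' z) z ∧
    ((k : ℝ) + 1) / 2 * Dop k g z + z * Dop (k + 2) g' z = g z := by
  have hgc : Continuous g := continuous_iff_continuousAt.2 fun t => (hg t).continuousAt
  constructor
  · obtain ⟨C, hC⟩ := (isCompact_Icc (a := -(|z| + 1)) (b := |z| + 1)).exists_bound_of_continuousOn
      hg'.continuousOn
    have := intervalIntegral.hasDerivAt_integral_of_dominated_loc_of_deriv_le (a := 0) (b := 1)
      (μ := MeasureTheory.volume)
      (F := fun z σ => 2 * σ ^ k * g (z * σ ^ 2)) (F' := fun z σ => 2 * σ ^ (k + 2) * g' (z * σ ^ 2))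
      (x₀ := z) (s := Metric.ball z 1) (bound := fun _ => 2 * C) (Metric.ball_mem_nhds z one_pos)
      (Eventually.of_forall fun y => (by fun_prop : Continuous fun σ : ℝ => 2 * σ ^ k * g (y * σ ^ 2)).aestronglyMeasurable)
      ((by fun_prop : Continuous fun σ : ℝ => 2 * σ ^ k * g (z * σ ^ 2)).intervalIntegrable 0 1)
      ((by fun_prop : Continuous fun σ : ℝ => 2 * σ ^ (k + 2) * g' (z * σ ^ 2)).aestronglyMeasurable)
      (Eventually.of_forall fun σ hσ y hy => by
        rw [uIoc_of_le zero_le_one] at hσ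
        have h0 := hσ.1.le
        have h1 := hσ.2
        have hy1 : |y| ≤ |z| + 1 := by
          have h2 : |y - z| < 1 := by simpa [Real.dist_eq] using hy
          have h3 : |y| ≤ |y - z| + |z| := by simpa using abs_add_le (y - z) z
          linarith
        have hs : σ ^ 2 ≤ 1 := by nlinarith
        have hs2 : |y * σ ^ 2| ≤ |z| + 1 := by
          rw [abs_mul, abs_of_nonneg (by positivity : 0 ≤ σ ^ 2)]
          nlinarith [abs_nonneg y, sq_nonneg σ]
        have h4 := hC _ (abs_le.1 hs2)
        rw [norm_mul]
        have h5 : σ ^ (k + 2) ≤ 1 := pow_le_one₀ h0 h1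
        have h6 : ‖2 * σ ^ (k + 2)‖ ≤ 2 := by
          rw [Real.norm_of_nonneg (by positivity)]; linarith
        exact mul_le_mul h6 h4 (norm_nonneg _) (by norm_num))
      (by simp)
      (Eventually.of_forall fun σ hσ y hy => by
        have h1 : HasDerivAt (fun y : ℝ => y * σ ^ 2) (σ ^ 2) y := by
          simpa using (hasDerivAt_id y).mul_const (σ ^ 2)
        have h2 := ((hg (y * σ ^ 2)).comp y h1).const_mul (2 * σ ^ k)
        exact hda h2 (fun _ => rfl) (by ring))
    exact this.2
  · have hd : ∀ σ : ℝ, HasDerivAt (fun σ : ℝ => σ ^ (k + 1) * g (z * σ ^ 2))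
        (((k : ℝ) + 1) / 2 * (2 * σ ^ k * g (z * σ ^ 2)) + z * (2 * σ ^ (k + 2) * g' (z * σ ^ 2))) σ := by
      intro σ
      have h1 : HasDerivAt (fun σ : ℝ => z * σ ^ 2) (z * (2 * σ)) σ := by
        refine hda ((hasDerivAt_pow 2 σ).const_mul z) (fun _ => rfl) (by norm_num)
      have h2 := (hg (z * σ ^ 2)).comp σ h1
      refine hda ((hasDerivAt_pow (k + 1) σ).mul h2) (fun _ => rfl) ?_
      simp only [Nat.add_sub_cancel, Function.comp]; push_cast; ring
    have h3 := intervalIntegral.integral_eq_sub_of_hasDerivAt (a := 0) (b := 1) (fun σ _ => hd σ)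
      ((by fun_prop : Continuous fun σ : ℝ => (((k : ℝ) + 1) / 2 * (2 * σ ^ k * g (z * σ ^ 2)) +
        z * (2 * σ ^ (k + 2) * g' (z * σ ^ 2)))).intervalIntegrable 0 1)
    rw [intervalIntegral.integral_add
      ((by fun_prop : Continuous fun σ : ℝ => (((k : ℝ) + 1) / 2 * (2 * σ ^ k * g (z * σ ^ 2)))).intervalIntegrable 0 1)
      ((by fun_prop : Continuous fun σ : ℝ => (z * (2 * σ ^ (k + 2) * g' (z * σ ^ 2)))).intervalIntegrable 0 1),
      intervalIntegral.integral_const_mul, intervalIntegral.integral_const_mul] at h3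
    simpa [Dop] using h3

lemma prim_deriv (q : ℝ → ℝ) (hq : Continuous q) (c z : ℝ) :
    HasDerivAt (fun z => c + ∫ t in (0:ℝ)..z, q t) (q z) z :=
  (intervalIntegral.integral_hasDerivAt_right (hq.intervalIntegrable _ _)
    (hq.stronglyMeasurableAtFilter _ _) hq.continuousAt).const_add c

lemma regularity (k : ℕ) (F : ℝ → ℝ → ℝ) (e v : ℝ → ℝ)
    (hF : ∀ z, 0 ≤ z → ∀ a, 0 < a → ContDiffAt ℝ 1 (Function.uncurry F) (z, a))
    (he : ContDiffOn ℝ 1 e (Ioi (-1))) (hv : Continuous v) (hv0 : ∀ z, 0 ≤ z → 0 < v z)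
    (hintg : ∀ η, 0 ≤ η → v η = v 0 - ∫ z in (0:ℝ)..η, e z * Dop k (fun z => F z (v z)) z) :
    ∃ v2 P : ℝ → ℝ, (∀ z, 0 ≤ z → v2 z = v z) ∧ ∀ z, 0 ≤ z → ContDiffAt ℝ 2 v2 z ∧
      (∀ᶠ y in 𝓝 z, HasDerivAt v2 (-(e y * P y)) y) ∧
      ∃ P', HasDerivAt P P' z ∧ ((k : ℝ) + 1) / 2 * P z + z * P' = F z (v z) := by
  set e0 : ℝ → ℝ := fun z => e (max z 0) with he0
  have hm : ∀ z : ℝ, (-1:ℝ) < max z 0 := fun z => lt_of_lt_of_le (by norm_num) (le_max_right z 0)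
  have he0c : Continuous e0 := he.continuousOn.comp_continuous (by fun_prop) hm
  set f0 : ℝ → ℝ := fun z => F (max z 0) (v (max z 0)) with hf0
  have hf0c : Continuous f0 := by
    refine continuous_iff_continuousAt.2 fun z => ?_
    have h1 := (hF (max z 0) (le_max_right z 0) _ (hv0 _ (le_max_right z 0))).continuousAt
    have h2 : Continuous (fun z : ℝ => (max z 0, v (max z 0))) := by fun_prop
    exact ContinuousAt.comp (g := Function.uncurry F) (f := fun z : ℝ => (max z 0, v (max z 0))) h1
      h2.continuousAt
  have hD0c := Dop_cont k f0 hf0c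
  set v1 : ℝ → ℝ := fun η => v 0 + ∫ z in (0:ℝ)..η, -(e0 z * Dop k f0 z) with hv1
  have hq0 : Continuous (fun z => -(e0 z * Dop k f0 z)) := (he0c.mul hD0c).neg
  have hv1d : ∀ z, HasDerivAt v1 (-(e0 z * Dop k f0 z)) z := fun z => prim_deriv _ hq0 _ z
  have hv1v : ∀ z, 0 ≤ z → v1 z = v z := by
    intro z hz
    rw [hintg z hz]
    simp only [hv1, intervalIntegral.integral_neg, ← sub_eq_add_neg]
    congr 1
    refine intervalIntegral.integral_congr fun t ht => ?_
    rw [uIcc_of_le hz] at ht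
    simp only [he0, max_eq_left ht.1]
    congr 1
    exact Dop_congr k _ _ (fun y hy => by simp only [hf0, max_eq_left hy]) t ht.1
  have hv1c : ContDiff ℝ 1 v1 := by
    rw [contDiff_one_iff_deriv]
    refine ⟨fun z => (hv1d z).differentiableAt, ?_⟩
    have : deriv v1 = fun z => -(e0 z * Dop k f0 z) := funext fun z => (hv1d z).deriv
    rw [this]; exact hq0
  set f1 : ℝ → ℝ := fun z => F z (v1 z) with hf1
  have hf1c : ∀ z, 0 ≤ z → ContDiffAt ℝ 1 f1 z := by
    intro z hz
    have h1 := hF z hz (v1 z) (by rw [hv1v z hz]; exact hv0 z hz)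
    exact ContDiffAt.comp (g := Function.uncurry F) (f := fun z => (z, v1 z)) z h1
      (contDiffAt_id.prodMk hv1c.contDiffAt)
  have hq1 : Continuous (fun z => deriv f1 (max z 0)) := by
    refine continuous_iff_continuousAt.2 fun z => ?_
    have h1 : ContinuousAt (deriv f1) (max z 0) := by
      have h2 : ContDiffAt ℝ 1 f1 (max z 0) := hf1c _ (le_max_right z 0)
      exact (h2.fderiv_right (m := 0) (by norm_num)).continuousAt.clm_apply continuousAt_const
    exact ContinuousAt.comp (g := deriv f1) (f := fun z => max z 0) h1 (by fun_prop)
  set g : ℝ → ℝ := fun z => f1 0 + ∫ t in (0:ℝ)..z, deriv f1 (max t 0) with hg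
  have hgd : ∀ z, HasDerivAt g (deriv f1 (max z 0)) z := fun z => prim_deriv _ hq1 _ z
  have hgc : Continuous g := continuous_iff_continuousAt.2 fun t => (hgd t).continuousAt
  have hgf : ∀ z, 0 ≤ z → g z = F z (v z) := by
    intro z hz
    have h1 : ∫ t in (0:ℝ)..z, deriv f1 (max t 0) = f1 z - f1 0 := by
      refine intervalIntegral.integral_eq_sub_of_hasDerivAt (fun t ht => ?_) (hq1.intervalIntegrable _ _)
      rw [uIcc_of_le hz] at ht
      rw [max_eq_left ht.1]
      exact ((hf1c t ht.1).differentiableAt (by norm_num)).hasDerivAt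
    rw [← hv1v z hz]
    change f1 0 + ∫ t in (0:ℝ)..z, deriv f1 (max t 0) = f1 z
    rw [h1]; ring
  have hD1 := fun z => Dop_deriv k g _ hgd hq1 z
  set P : ℝ → ℝ := Dop k g with hP
  have hPc : ContDiff ℝ 1 P := by
    rw [contDiff_one_iff_deriv]
    refine ⟨fun z => (hD1 z).1.differentiableAt, ?_⟩
    have : deriv P = fun z => Dop (k + 2) (fun z => deriv f1 (max z 0)) z :=
      funext fun z => (hD1 z).1.deriv
    rw [this]; exact Dop_cont _ _ hq1
  set v2 : ℝ → ℝ := fun η => v 0 + ∫ z in (0:ℝ)..η, -(e z * P z) with hv2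
  have hq2 : ContDiffOn ℝ 1 (fun z => -(e z * P z)) (Ioi (-1)) := (he.mul hPc.contDiffOn).neg
  have hv2d : ∀ z ∈ Ioi (-1:ℝ), HasDerivAt v2 (-(e z * P z)) z := by
    intro z hz
    have hsub : uIcc 0 z ⊆ Ioi (-1:ℝ) := by
      intro t ht
      rcases mem_uIcc.1 ht with h | h
      · exact lt_of_lt_of_le (by norm_num) h.1
      · exact lt_of_lt_of_le hz h.1
    refine (intervalIntegral.integral_hasDerivAt_right
      ((hq2.continuousOn.mono hsub).intervalIntegrable)
      (hq2.continuousOn.stronglyMeasurableAtFilter isOpen_Ioi z hz)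
      (hq2.continuousOn.continuousAt (isOpen_Ioi.mem_nhds hz))).const_add _
  have hv2c : ContDiffOn ℝ 2 v2 (Ioi (-1)) := by
    have : (2 : WithTop ℕ∞) = 1 + 1 := by norm_num
    rw [this, contDiffOn_succ_iff_deriv_of_isOpen isOpen_Ioi]
    refine ⟨fun z hz => (hv2d z hz).differentiableAt.differentiableWithinAt, by simp, ?_⟩
    exact hq2.congr fun z hz => (hv2d z hz).deriv
  refine ⟨v2, P, fun z hz => ?_, fun z hz => ?_⟩
  · rw [hintg z hz]
    simp only [hv2, intervalIntegral.integral_neg, ← sub_eq_add_neg]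
    congr 1
    refine intervalIntegral.integral_congr fun t ht => ?_
    rw [uIcc_of_le hz] at ht
    congr 1
    exact Dop_congr k _ _ hgf t ht.1
  · have hz' : z ∈ Ioi (-1:ℝ) := lt_of_lt_of_le (by norm_num) hz
    refine ⟨hv2c.contDiffAt (isOpen_Ioi.mem_nhds hz'), ?_, _, (hD1 z).1, ?_⟩
    · filter_upwards [isOpen_Ioi.mem_nhds hz'] with y hy using hv2d y hy
    · rw [(hD1 z).2, hgf z hz]

noncomputable def Yf (m z : ℝ) : ℝ := (1 + z) ^ (-(m / 2))
noncomputable def kM (s m : ℝ) : ℝ := (s + (1 - m) / 2) / 2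
noncomputable def kP (s m : ℝ) : ℝ := (s + (1 + m) / 2) / 2
noncomputable def cZ (s m : ℝ) : ℝ := s * (s + 1) + (1 - m ^ 2) / 4
noncomputable def Psi (s m A z : ℝ) : ℝ := (1 + z) ^ (-(kM s m)) * Real.exp (-(A * Yf m z))
noncomputable def eF (N m A z : ℝ) : ℝ := (1 + z) ^ (N - 1 - m / 2) * Real.exp (2 * A * Yf m z)
noncomputable def Qf (s m N A z : ℝ) : ℝ :=
  (z * A ^ 2 * m ^ 2 * Yf m z ^ 2 + 2 * N * A * m * Yf m z + 2 * N * m + (cZ s m - 4 * N * kP s m)) / (1 + z)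
noncomputable def Lop (s m N : ℝ) (W : ℝ → ℝ) (z : ℝ) : ℝ :=
  4 * z * (1 + z) * deriv (deriv W) z + (4 * N + (6 + 4 * s) * z) * deriv W z + cZ s m * W z

lemma rpow_hd (a z : ℝ) (hz : -1 < z) :
    HasDerivAt (fun z : ℝ => (1 + z) ^ a) (a * (1 + z) ^ a / (1 + z)) z := by
  have h0 : 0 < 1 + z := by linarith
  have h1 : HasDerivAt (fun z : ℝ => 1 + z) 1 z := (hasDerivAt_id z).const_add 1
  refine hda (h1.rpow_const (p := a) (Or.inl h0.ne')) (fun _ => rfl) ?_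
  rw [Real.rpow_sub_one h0.ne']; ring

lemma Yf_hd (m z : ℝ) (hz : -1 < z) : HasDerivAt (Yf m) (-(m / 2) * Yf m z / (1 + z)) z :=
  rpow_hd _ z hz

lemma Psi_hd (s m A z : ℝ) (hz : -1 < z) :
    HasDerivAt (Psi s m A) (Psi s m A z * ((-(kM s m) + A * (m / 2) * Yf m z) / (1 + z))) z := by
  have h0 : 0 < 1 + z := by linarith
  have h1 := (rpow_hd (-(kM s m)) z hz).mul (((Yf_hd m z hz).const_mul A).neg.exp)
  refine hda h1 (fun _ => rfl) ?_
  simp only [Psi, Pi.neg_apply]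
  field_simp

lemma eF_hd (N m A z : ℝ) (hz : -1 < z) :
    HasDerivAt (eF N m A) (eF N m A z * ((N - 1 - m / 2 - A * m * Yf m z) / (1 + z))) z := by
  have h0 : 0 < 1 + z := by linarith
  have h1 := (rpow_hd (N - 1 - m / 2) z hz).mul (((Yf_hd m z hz).const_mul (2 * A)).exp)
  refine hda h1 (fun _ => rfl) ?_
  simp only [eF]
  field_simp
  ring

lemma ident (s m N A z : ℝ) (hz : -1 < z) (v P : ℝ → ℝ) (P' : ℝ)
    (hv : ∀ᶠ y in 𝓝 z, HasDerivAt v (-(eF N m A y * P y)) y) (hP : HasDerivAt P P' z) :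
    Lop s m N (fun z => Psi s m A z * v z) z
      = -(4 * (1 + z) * Psi s m A z * eF N m A z * (N * P z + z * P'))
        + Qf s m N A z * (Psi s m A z * v z) := by
  have h0 : 0 < 1 + z := by linarith
  set psi : ℝ → ℝ := fun z => (-(kM s m) + A * (m / 2) * Yf m z) / (1 + z) with hpsi
  have hW : ∀ᶠ y in 𝓝 z, HasDerivAt (fun z => Psi s m A z * v z)
      (Psi s m A y * psi y * v y + Psi s m A y * (-(eF N m A y * P y))) y := by
    filter_upwards [hv, isOpen_Ioi.mem_nhds hz] with y hy hy1
    exact (Psi_hd s m A y hy1).mul hy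
  have hd1 : deriv (fun z => Psi s m A z * v z) =ᶠ[𝓝 z] fun y =>
      Psi s m A y * psi y * v y + Psi s m A y * (-(eF N m A y * P y)) := by
    filter_upwards [hW] with y hy using hy.deriv
  have hpd : HasDerivAt psi ((A * (m / 2) * (-(m / 2) * Yf m z / (1 + z)) * (1 + z)
      - (-(kM s m) + A * (m / 2) * Yf m z) * 1) / (1 + z) ^ 2) z := by
    exact (((Yf_hd m z hz).const_mul (A * (m / 2))).const_add (-(kM s m))).div
      ((hasDerivAt_id z).const_add 1) h0.ne'
  have hvz := hv.self_of_nhds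
  have hd2 := (((Psi_hd s m A z hz).mul hpd).mul hvz).add
    ((Psi_hd s m A z hz).mul ((eF_hd N m A z hz).mul hP).neg)
  have hd3 : deriv (deriv (fun z => Psi s m A z * v z)) z = _ :=
    hd1.deriv_eq.trans hd2.deriv
  unfold Lop
  rw [hd3, hd1.self_of_nhds]
  simp only [hpsi, Qf, kM, kP, cZ, Pi.mul_apply, Pi.neg_apply]
  field_simp
  ring

noncomputable def Wab (s m a b z : ℝ) : ℝ := a * (1 + z) ^ (-(kP s m)) + b * (1 + z) ^ (-(kP s m + 1 / 2))

lemma Lop_Wab (s m N a b z : ℝ) (hz : -1 < z) :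
    Lop s m N (Wab s m a b) z
      = (1 + z) ^ (-(kP s m)) / (1 + z) * (a * (cZ s m - 4 * N * kP s m)
        + b * (1 + z) ^ (-(1 / 2) : ℝ) * ((1 + m) * z + (cZ s m - 4 * N * kP s m) - 2 * N)) := by
  have h0 : 0 < 1 + z := by linarith
  have hd : ∀ y : ℝ, -1 < y → HasDerivAt (Wab s m a b)
      (a * (-(kP s m) * (1 + y) ^ (-(kP s m)) / (1 + y))
        + b * (-(kP s m + 1 / 2) * (1 + y) ^ (-(kP s m + 1 / 2)) / (1 + y))) y := fun y hy =>
    ((rpow_hd _ y hy).const_mul a).add ((rpow_hd _ y hy).const_mul b)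
  have hd1 : deriv (Wab s m a b) =ᶠ[𝓝 z] fun y =>
      (a * (-(kP s m) * (1 + y) ^ (-(kP s m)) / (1 + y))
        + b * (-(kP s m + 1 / 2) * (1 + y) ^ (-(kP s m + 1 / 2)) / (1 + y))) := by
    filter_upwards [isOpen_Ioi.mem_nhds hz] with y hy using (hd y hy).deriv
  have hlin : HasDerivAt (fun z : ℝ => 1 + z) 1 z := (hasDerivAt_id z).const_add 1
  have hd2 := ((((rpow_hd (-(kP s m)) z hz).const_mul (-(kP s m))).div hlin h0.ne').const_mul a).add
    ((((rpow_hd (-(kP s m + 1 / 2)) z hz).const_mul (-(kP s m + 1 / 2))).div hlin h0.ne').const_mul b)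
  have hd3 : deriv (deriv (Wab s m a b)) z = _ := hd1.deriv_eq.trans hd2.deriv
  have hsplit : (1 + z) ^ (-(kP s m + 1 / 2)) = (1 + z) ^ (-(kP s m)) * (1 + z) ^ (-(1 / 2) : ℝ) := by
    rw [← Real.rpow_add h0]; congr 1; ring
  unfold Lop
  rw [hd3, hd1.self_of_nhds]
  simp only [Wab, hsplit]
  generalize (1 + z) ^ (-(kP s m)) = R
  generalize (1 + z) ^ (-(1 / 2) : ℝ) = S
  simp only [cZ, kP]
  field_simp
  ring

lemma kP_p (s m p : ℝ) (hs : s * (p - 1) = 2) :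
    kP s m * p = kP s m + 1 + (1 + m) / 4 * (p - 1) := by
  unfold kP
  linear_combination (1 / 2) * hs

lemma super_ineq (s m N p : ℝ) (hs : s * (p - 1) = 2) (hp : 1 < p) (hm : 0 < m) (hN : 0 ≤ N)
    (hκ : 0 < cZ s m - 4 * N * kP s m) :
    ∃ M : ℝ, 1 ≤ M ∧ ∀ z, 0 ≤ z → Lop s m N (Wab s m (2 * M) (-M)) z ≤ (Wab s m (2 * M) (-M) z) ^ p := by
  set κ := cZ s m - 4 * N * kP s m with hκd
  set b := (1 + m) / 4 * (p - 1) with hb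
  have hb0 : 0 < b := by have : 0 < p - 1 := by linarith
                         positivity
  set Z1 := 4 * κ ^ 2 + 1 + 4 * N with hZ1
  set R := (2 * κ + 2 * N) * (1 + Z1) ^ b with hR
  have hR0 : 0 < R := by positivity
  set M := max 1 (R ^ (1 / (p - 1))) with hM
  have hM1 : 1 ≤ M := le_max_left _ _
  have hMR : R ≤ M ^ (p - 1) := by
    have h1 : R = (R ^ (1 / (p - 1))) ^ (p - 1) := by
      rw [← Real.rpow_mul hR0.le, one_div, inv_mul_cancel₀ (by linarith), Real.rpow_one]
    calc R = _ := h1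
      _ ≤ _ := Real.rpow_le_rpow (by positivity) (le_max_right _ _) (by linarith)
  refine ⟨M, hM1, fun z hz => ?_⟩
  have h0 : 0 < 1 + z := by linarith
  have hX1 : 1 ≤ 1 + z := by linarith
  have hMpos : 0 < M := by linarith
  rw [Lop_Wab s m N _ _ z (by linarith)]
  set K := (1 + z) ^ (-(kP s m)) with hK
  have hKpos : 0 < K := Real.rpow_pos_of_pos h0 _
  set S := (1 + z) ^ (-(1 / 2) : ℝ) with hS
  have hSpos : 0 < S := Real.rpow_pos_of_pos h0 _
  have hS1 : S ≤ 1 := Real.rpow_le_one_of_one_le_of_nonpos hX1 (by norm_num)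
  have hW : M * K ≤ Wab s m (2 * M) (-M) z := by
    have hsplit : (1 + z) ^ (-(kP s m + 1 / 2)) = K * S := by
      rw [hK, hS, ← Real.rpow_add h0]; congr 1; ring
    simp only [Wab, hsplit, ← hK]
    have : M * (K * S) ≤ M * K := by
      apply mul_le_mul_of_nonneg_left _ hMpos.le
      nlinarith
    linarith
  have hWp : (M * K) ^ p ≤ (Wab s m (2 * M) (-M) z) ^ p :=
    Real.rpow_le_rpow (by positivity) hW (by linarith)
  have hMK : (M * K) ^ p = M * K / (1 + z) * (M ^ (p - 1) * (1 + z) ^ (-b)) := by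
    rw [Real.mul_rpow hMpos.le hKpos.le, hK, ← Real.rpow_mul h0.le, neg_mul, kP_p s m p hs, ← hb]
    have h1 : M ^ p = M * M ^ (p - 1) := by
      rw [Real.rpow_sub_one hMpos.ne']; field_simp
    have h2 : (1 + z) ^ (-(kP s m + 1 + b)) = (1 + z) ^ (-(kP s m)) / (1 + z) * (1 + z) ^ (-b) := by
      rw [← Real.rpow_sub_one h0.ne', ← Real.rpow_add h0]; congr 1; ring
    rw [h1, h2]; ring
  refine le_trans ?_ hWp
  rw [hMK]
  have hbr : 2 * κ - S * ((1 + m) * z + κ - 2 * N) ≤ M ^ (p - 1) * (1 + z) ^ (-b) := by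
    by_cases hzz : Z1 ≤ z
    · have h1 : 2 * κ ≤ S * ((1 + m) * z + κ - 2 * N) := by
        set q := (1 + z) ^ (1 / 2 : ℝ) with hq
        have hq2 : q ^ 2 = 1 + z := by
          rw [hq, ← Real.rpow_natCast, ← Real.rpow_mul h0.le]; norm_num
        have hqS : S * q = 1 := by
          rw [hS, hq, ← Real.rpow_add h0]; norm_num
        have hqpos : 0 < q := Real.rpow_pos_of_pos h0 _
        have h2 : 2 * κ * q ≤ (1 + m) * z + κ - 2 * N := by
          nlinarith [sq_nonneg (q - 2 * κ), mul_nonneg hm.le hz]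
        calc 2 * κ = S * (2 * κ * q) := by linear_combination (-2 * κ) * hqS
          _ ≤ _ := mul_le_mul_of_nonneg_left h2 hSpos.le
      have : 0 ≤ M ^ (p - 1) * (1 + z) ^ (-b) := by positivity
      linarith
    · push Not at hzz
      have h1 : 2 * κ - S * ((1 + m) * z + κ - 2 * N) ≤ 2 * κ + 2 * N := by
        have h2 : 0 ≤ S * ((1 + m) * z + κ) := by positivity
        nlinarith
      refine h1.trans ?_
      have h3 : (1 + z) ^ b ≤ (1 + Z1) ^ b := Real.rpow_le_rpow h0.le (by linarith) hb0.le
      rw [Real.rpow_neg h0.le, ← div_eq_mul_inv, le_div_iff₀ (by positivity)]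
      calc _ ≤ R := mul_le_mul_of_nonneg_left h3 (by positivity)
        _ ≤ _ := hMR
  calc K / (1 + z) * (2 * M * κ + -M * S * ((1 + m) * z + κ - 2 * N))
      = M * K / (1 + z) * (2 * κ - S * ((1 + m) * z + κ - 2 * N)) := by ring
    _ ≤ _ := mul_le_mul_of_nonneg_left hbr (by positivity)

lemma sub_ineq (s m N p : ℝ) (hs : s * (p - 1) = 2) (hp : 1 < p) (hm : 0 < m)
    (hκ : 0 < cZ s m - 4 * N * kP s m) :
    ∃ ε : ℝ, 0 < ε ∧ ε ≤ 1 ∧ ∀ z, 0 ≤ z → (Wab s m ε 0 z) ^ p ≤ Lop s m N (Wab s m ε 0) z := by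
  set κ := cZ s m - 4 * N * kP s m with hκd
  set b := (1 + m) / 4 * (p - 1) with hb
  have hb0 : 0 < b := by have : 0 < p - 1 := by linarith
                         positivity
  set ε := min 1 (κ ^ (1 / (p - 1))) with hε
  have hε0 : 0 < ε := lt_min one_pos (by positivity)
  have hεκ : ε ^ (p - 1) ≤ κ := by
    have h1 : κ = (κ ^ (1 / (p - 1))) ^ (p - 1) := by
      rw [← Real.rpow_mul hκ.le, one_div, inv_mul_cancel₀ (by linarith), Real.rpow_one]
    conv_rhs => rw [h1]
    exact Real.rpow_le_rpow hε0.le (min_le_right _ _) (by linarith)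
  refine ⟨ε, hε0, min_le_left _ _, fun z hz => ?_⟩
  have h0 : 0 < 1 + z := by linarith
  have hX1 : 1 ≤ 1 + z := by linarith
  rw [Lop_Wab s m N _ _ z (by linarith)]
  simp only [Wab, zero_mul, add_zero]
  set K := (1 + z) ^ (-(kP s m)) with hK
  have hKpos : 0 < K := Real.rpow_pos_of_pos h0 _
  have hMK : (ε * K) ^ p = ε * K / (1 + z) * (ε ^ (p - 1) * (1 + z) ^ (-b)) := by
    rw [Real.mul_rpow hε0.le hKpos.le, hK, ← Real.rpow_mul h0.le, neg_mul, kP_p s m p hs, ← hb]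
    have h1 : ε ^ p = ε * ε ^ (p - 1) := by
      rw [Real.rpow_sub_one hε0.ne']; field_simp
    have h2 : (1 + z) ^ (-(kP s m + 1 + b)) = (1 + z) ^ (-(kP s m)) / (1 + z) * (1 + z) ^ (-b) := by
      rw [← Real.rpow_sub_one h0.ne', ← Real.rpow_add h0]; congr 1; ring
    rw [h1, h2]; ring
  rw [hMK]
  have h3 : (1 + z) ^ (-b) ≤ 1 := Real.rpow_le_one_of_one_le_of_nonpos hX1 (by linarith)
  have h4 : ε ^ (p - 1) * (1 + z) ^ (-b) ≤ κ := by
    have : 0 < ε ^ (p - 1) := Real.rpow_pos_of_pos hε0 _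
    nlinarith
  calc _ ≤ ε * K / (1 + z) * κ := mul_le_mul_of_nonneg_left h4 (by positivity)
    _ = _ := by ring

lemma exA (s m N C b : ℝ) (hm : 0 < m) (hN : 0 < N) (hC : 0 ≤ C) (hb : 0 < b)
    (hκ : 0 < cZ s m - 4 * N * kP s m) :
    ∃ A : ℝ, 0 ≤ A ∧ ∀ z, 0 ≤ z → C * (1 + z) ^ (-b) ≤ (1 + z) * Qf s m N A z := by
  have hlim : Tendsto (fun z : ℝ => C * (1 + z) ^ (-b)) atTop (𝓝 0) := by
    have h1 := (tendsto_rpow_neg_atTop hb).comp (tendsto_atTop_add_const_left atTop (1:ℝ) tendsto_id)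
    simpa using h1.const_mul C
  obtain ⟨Z, hZ⟩ := (hlim.eventually (ge_mem_nhds hκ)).exists_forall_of_atTop
  set Z0 := max Z 0 with hZ0
  have hZ00 : 0 ≤ Z0 := le_max_right _ _
  set y0 := (1 + Z0) ^ (-(m / 2)) with hy0
  have hy0p : 0 < y0 := Real.rpow_pos_of_pos (by linarith) _
  refine ⟨C / (2 * N * m * y0), by positivity, fun z hz => ?_⟩
  set A := C / (2 * N * m * y0) with hA
  have hA0 : 0 ≤ A := by positivity
  have h0 : 0 < 1 + z := by linarith
  have hY : 0 < Yf m z := Real.rpow_pos_of_pos h0 _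
  have hq : (1 + z) * Qf s m N A z = z * A ^ 2 * m ^ 2 * Yf m z ^ 2 + 2 * N * A * m * Yf m z + 2 * N * m
      + (cZ s m - 4 * N * kP s m) := by
    unfold Qf; field_simp
  rw [hq]
  have t1 : 0 ≤ z * A ^ 2 * m ^ 2 * Yf m z ^ 2 := by positivity
  have t2 : 0 ≤ 2 * N * A * m * Yf m z := by positivity
  have t3 : 0 ≤ 2 * N * m := by positivity
  by_cases hzz : Z ≤ z
  · have := hZ z hzz
    linarith
  · push Not at hzz
    have h1 : (1 + z) ^ (-b) ≤ 1 := Real.rpow_le_one_of_one_le_of_nonpos (by linarith) (by linarith)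
    have h2 : y0 ≤ Yf m z := Real.rpow_le_rpow_of_nonpos h0 (by linarith [le_max_left Z 0]) (by linarith)
    have h3 : C = 2 * N * A * m * y0 := by rw [hA]; field_simp
    have h4 : 2 * N * A * m * y0 ≤ 2 * N * A * m * Yf m z := mul_le_mul_of_nonneg_left h2 (by positivity)
    nlinarith

noncomputable def vab (m A a b z : ℝ) : ℝ :=
  (a * (1 + z) ^ (-(m / 2)) + b * (1 + z) ^ (-(m / 2 + 1 / 2))) * Real.exp (A * Yf m z)

noncomputable def Ff (s m N A p z v : ℝ) : ℝ :=
  (Qf s m N A z * v - Psi s m A z ^ (p - 1) * v ^ p) / (4 * (1 + z) * eF N m A z)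

lemma Psi_pos (s m A z : ℝ) (hz : -1 < z) : 0 < Psi s m A z :=
  mul_pos (Real.rpow_pos_of_pos (by linarith) _) (Real.exp_pos _)

lemma eF_pos (N m A z : ℝ) (hz : -1 < z) : 0 < eF N m A z :=
  mul_pos (Real.rpow_pos_of_pos (by linarith) _) (Real.exp_pos _)

lemma rpow_cd (a z : ℝ) (hz : -1 < z) : ContDiffAt ℝ 2 (fun z : ℝ => (1 + z) ^ a) z :=
  ContDiffAt.rpow_const_of_ne (contDiffAt_const.add contDiffAt_id) (by
    have : 0 < 1 + z := by linarith
    exact this.ne')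

lemma Yf_cd (m z : ℝ) (hz : -1 < z) : ContDiffAt ℝ 2 (Yf m) z := rpow_cd _ z hz

lemma Psi_cd (s m A z : ℝ) (hz : -1 < z) : ContDiffAt ℝ 2 (Psi s m A) z :=
  (rpow_cd _ z hz).mul ((contDiffAt_const.mul (Yf_cd m z hz)).neg.exp)

lemma eF_cd (N m A z : ℝ) (hz : -1 < z) : ContDiffAt ℝ 2 (eF N m A) z :=
  (rpow_cd _ z hz).mul ((contDiffAt_const.mul (Yf_cd m z hz)).exp)

lemma vab_cd (m A a b z : ℝ) (hz : -1 < z) : ContDiffAt ℝ 2 (vab m A a b) z :=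
  ((contDiffAt_const.mul (rpow_cd _ z hz)).add (contDiffAt_const.mul (rpow_cd _ z hz))).mul
    ((contDiffAt_const.mul (Yf_cd m z hz)).exp)

lemma Psi_vab (s m A a b z : ℝ) (hz : -1 < z) :
    Psi s m A z * vab m A a b z = Wab s m a b z := by
  have h0 : 0 < 1 + z := by linarith
  have h1 : (1 + z) ^ (-(kP s m)) = (1 + z) ^ (-(kM s m)) * (1 + z) ^ (-(m / 2)) := by
    rw [← Real.rpow_add h0]; congr 1; unfold kP kM; ring
  have h2 : (1 + z) ^ (-(kP s m + 1 / 2)) = (1 + z) ^ (-(kM s m)) * (1 + z) ^ (-(m / 2 + 1 / 2)) := by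
    rw [← Real.rpow_add h0]; congr 1; unfold kP kM; ring
  have h3 : Real.exp (-(A * Yf m z)) * Real.exp (A * Yf m z) = 1 := by
    rw [← Real.exp_add]; simp
  simp only [Psi, vab, Wab, h1, h2]
  linear_combination ((1 + z) ^ (-(kM s m)) * (a * (1 + z) ^ (-(m / 2)) + b * (1 + z) ^ (-(m / 2 + 1 / 2)))) * h3

lemma vab_tendsto (m A a b : ℝ) (hm : 0 < m) : Tendsto (vab m A a b) atTop (𝓝 0) := by
  have hT := tendsto_atTop_add_const_left atTop (1:ℝ) (tendsto_id (α := ℝ) (x := atTop))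
  have h1 := (tendsto_rpow_neg_atTop (y := m / 2) (by linarith)).comp hT
  have h2 := (tendsto_rpow_neg_atTop (y := m / 2 + 1 / 2) (by linarith)).comp hT
  have h3 := ((h1.const_mul a).add (h2.const_mul b)).mul
    ((Real.continuous_exp.tendsto (A * 0)).comp (h1.const_mul A))
  have h4 : (a * 0 + b * 0) * Real.exp (A * 0) = 0 := by simp
  rw [h4] at h3
  exact h3

lemma Ff_eq (s m N A p z v : ℝ) (hz : -1 < z) (hv : 0 ≤ v) :
    Ff s m N A p z v = (Qf s m N A z * (Psi s m A z * v) - (Psi s m A z * v) ^ p)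
      / (4 * (1 + z) * Psi s m A z * eF N m A z) := by
  have h0 : 0 < 1 + z := by linarith
  have h1 := Psi_pos s m A z hz
  have h2 := eF_pos N m A z hz
  rw [Real.mul_rpow h1.le hv]
  have h3 : Psi s m A z ^ p = Psi s m A z * Psi s m A z ^ (p - 1) := by
    rw [Real.rpow_sub_one h1.ne']; field_simp
  rw [h3]; unfold Ff
  field_simp

noncomputable def Pab (N m A a b z : ℝ) : ℝ := -(deriv (vab m A a b) z) / eF N m A z

lemma vab_pack (s m N A a b z : ℝ) (hz : -1 < z) :
    HasDerivAt (vab m A a b) (-(eF N m A z * Pab N m A a b z)) z ∧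
    HasDerivAt (Pab N m A a b) (deriv (Pab N m A a b) z) z ∧
    N * Pab N m A a b z + z * deriv (Pab N m A a b) z
      = (Qf s m N A z * Wab s m a b z - Lop s m N (Wab s m a b) z)
        / (4 * (1 + z) * Psi s m A z * eF N m A z) := by
  have hd := hasDeriv_two _ z (vab_cd m A a b z hz)
  have hev : ∀ᶠ y in 𝓝 z, HasDerivAt (vab m A a b) (-(eF N m A y * Pab N m A a b y)) y := by
    filter_upwards [hd.1, isOpen_Ioi.mem_nhds hz] with y hy hy1
    have := eF_pos N m A y hy1
    have h1 : -(eF N m A y * Pab N m A a b y) = deriv (vab m A a b) y := by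
      unfold Pab; field_simp
    rw [h1]; exact hy
  have hP : HasDerivAt (Pab N m A a b) (deriv (Pab N m A a b) z) z := by
    have h1 : DifferentiableAt ℝ (Pab N m A a b) z :=
      hd.2.differentiableAt.neg.div ((eF_cd N m A z hz).differentiableAt (by norm_num)) (eF_pos N m A z hz).ne'
    exact h1.hasDerivAt
  refine ⟨hev.self_of_nhds, hP, ?_⟩
  have hid := ident s m N A z hz _ _ _ hev hP
  have heq : (fun z => Psi s m A z * vab m A a b z) =ᶠ[𝓝 z] Wab s m a b := by
    filter_upwards [isOpen_Ioi.mem_nhds hz] with y hy using Psi_vab s m A a b y hy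
  have hL : Lop s m N (fun z => Psi s m A z * vab m A a b z) z = Lop s m N (Wab s m a b) z := by
    unfold Lop
    rw [heq.deriv.deriv_eq, heq.deriv_eq, heq.self_of_nhds]
  rw [hL, Psi_vab s m A a b z hz] at hid
  have h0 : 0 < 1 + z := by linarith
  have h1 := Psi_pos s m A z hz
  have h2 := eF_pos N m A z hz
  rw [eq_div_iff (by positivity), hid]
  ring

lemma Ff_cd (s m N A p z v : ℝ) (hz : -1 < z) (hv : 0 < v) :
    ContDiffAt ℝ 1 (Function.uncurry (Ff s m N A p)) (z, v) := by
  have hf : ContDiffAt ℝ 1 (fun q : ℝ × ℝ => q.1) (z, v) := contDiffAt_fst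
  have hs : ContDiffAt ℝ 1 (fun q : ℝ × ℝ => q.2) (z, v) := contDiffAt_snd
  have hc : ∀ g : ℝ → ℝ, ContDiffAt ℝ 2 g z → ContDiffAt ℝ 1 (fun q : ℝ × ℝ => g q.1) (z, v) :=
    fun g hg => ContDiffAt.comp (g := g) (f := fun q : ℝ × ℝ => q.1) (z, v)
      (hg.of_le (by norm_num)) hf
  have h0 : (1:ℝ) + z ≠ 0 := by linarith
  have hY := hc _ (Yf_cd m z hz)
  have hPsi := hc _ (Psi_cd s m A z hz)
  have he := hc _ (eF_cd N m A z hz)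
  have h1 := Psi_pos s m A z hz
  have h2 := eF_pos N m A z hz
  have hQ : ContDiffAt ℝ 1 (fun q : ℝ × ℝ => Qf s m N A q.1) (z, v) := by
    unfold Qf
    refine ContDiffAt.div ?_ (contDiffAt_const.add hf) h0
    exact ((((hf.mul contDiffAt_const).mul contDiffAt_const).mul (hY.pow 2)).add
      (contDiffAt_const.mul hY)).add contDiffAt_const |>.add contDiffAt_const
  change ContDiffAt ℝ 1 (fun q : ℝ × ℝ => (Qf s m N A q.1 * q.2 - Psi s m A q.1 ^ (p - 1) * q.2 ^ p) /
    (4 * (1 + q.1) * eF N m A q.1)) (z, v)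
  refine ContDiffAt.div ((hQ.mul hs).sub ((hPsi.rpow_const_of_ne h1.ne').mul (hs.rpow_const_of_ne hv.ne')))
    ((contDiffAt_const.mul (contDiffAt_const.add hf)).mul he) ?_
  exact mul_ne_zero (mul_ne_zero (by norm_num) h0) h2.ne'

lemma Ff_mono (s m N A p z a b : ℝ) (hz : -1 < z) (hp : 1 < p) (ha : 0 ≤ a) (hab : a ≤ b)
    (h : p * (Psi s m A z * b) ^ (p - 1) ≤ Qf s m N A z) : Ff s m N A p z a ≤ Ff s m N A p z b := by
  rw [Ff_eq s m N A p z a hz ha, Ff_eq s m N A p z b hz (ha.trans hab)]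
  have h0 : 0 < 1 + z := by linarith
  have h1 := Psi_pos s m A z hz
  have h2 := eF_pos N m A z hz
  refine div_le_div_of_nonneg_right ?_ (by positivity)
  set x := Psi s m A z * a with hx
  set y := Psi s m A z * b with hy
  have hx0 : 0 ≤ x := by positivity
  have hxy : x ≤ y := mul_le_mul_of_nonneg_left hab h1.le
  have hkey : y ^ p - x ^ p ≤ p * y ^ (p - 1) * (y - x) := by
    rcases hxy.eq_or_lt with h3 | h3
    · rw [h3]; simp
    · have hy0 : 0 < y := lt_of_le_of_lt hx0 h3
      obtain ⟨c, hc, hcd⟩ := exists_hasDerivAt_eq_slope (fun t : ℝ => t ^ p) (fun t => p * t ^ (p - 1)) h3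
        ((Real.continuous_rpow_const (by linarith)).continuousOn)
        (fun t ht => Real.hasDerivAt_rpow_const (Or.inr hp.le))
      rw [eq_div_iff (by linarith)] at hcd
      rw [← hcd]
      have h5 : c ^ (p - 1) ≤ y ^ (p - 1) := Real.rpow_le_rpow (hx0.trans hc.1.le) hc.2.le (by linarith)
      refine mul_le_mul_of_nonneg_right ?_ (by linarith)
      exact mul_le_mul_of_nonneg_left h5 (by linarith)
  have h6 := mul_le_mul_of_nonneg_right h (sub_nonneg.2 hxy)
  linarith

lemma Wab_bounds (s m M z : ℝ) (hM : 0 < M) (hz : 0 ≤ z) :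
    M * (1 + z) ^ (-(kP s m)) ≤ Wab s m (2 * M) (-M) z ∧
    Wab s m (2 * M) (-M) z ≤ 2 * M * (1 + z) ^ (-(kP s m)) := by
  have h0 : 0 < 1 + z := by linarith
  have h1 : (1 + z) ^ (-(kP s m + 1 / 2)) ≤ (1 + z) ^ (-(kP s m)) :=
    Real.rpow_le_rpow_of_exponent_le (by linarith) (by linarith)
  have h2 : 0 < (1 + z) ^ (-(kP s m + 1 / 2)) := Real.rpow_pos_of_pos h0 _
  unfold Wab
  constructor <;> nlinarith

lemma Pab_nonneg (N m A a z : ℝ) (hm : 0 < m) (hA : 0 ≤ A) (ha : 0 ≤ a) (hz : 0 ≤ z) :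
    0 ≤ Pab N m A a 0 z := by
  have hz1 : -1 < z := by linarith
  have h0 : 0 < 1 + z := by linarith
  have hY : 0 < Yf m z := Real.rpow_pos_of_pos h0 _
  have hd : HasDerivAt (vab m A a 0) ((a * (-(m / 2) * Yf m z / (1 + z))) * Real.exp (A * Yf m z)
      + (a * Yf m z) * (Real.exp (A * Yf m z) * (A * (-(m / 2) * Yf m z / (1 + z))))) z := by
    refine hda (((Yf_hd m z hz1).const_mul a).mul (((Yf_hd m z hz1).const_mul A).exp)) (fun y => ?_) rfl
    simp [vab, Yf]
  unfold Pab
  rw [hd.deriv]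
  refine div_nonneg ?_ (eF_pos N m A z hz1).le
  have : 0 ≤ (a * (m / 2) * Yf m z / (1 + z)) * Real.exp (A * Yf m z) * (1 + A * Yf m z) := by positivity
  calc 0 ≤ _ := this
    _ = _ := by ring

set_option maxHeartbeats 2000000 in
lemma profile_exists (k : ℕ) (s m p N : ℝ) (hNk : N = ((k : ℝ) + 1) / 2) (hs : s * (p - 1) = 2) (hp : 1 < p)
    (hm : 0 < m) (hκ : 0 < cZ s m - 4 * N * kP s m) :
    ∃ (W : ℝ → ℝ) (ε C : ℝ), 0 < ε ∧ 0 < C ∧ ∀ z, 0 ≤ z → ContDiffAt ℝ 2 W z ∧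
      Lop s m N W z = W z ^ p ∧ ε * (1 + z) ^ (-(kP s m)) ≤ W z ∧ W z ≤ C * (1 + z) ^ (-(kP s m)) := by
  have hN : 0 < N := by rw [hNk]; positivity
  obtain ⟨M, hM1, hsup⟩ := super_ineq s m N p hs hp hm hN.le hκ
  obtain ⟨ε, hε0, hε1, hsub⟩ := sub_ineq s m N p hs hp hm hκ
  have hM : 0 < M := by linarith
  set b := (1 + m) / 4 * (p - 1) with hb
  have hb0 : 0 < b := by have : 0 < p - 1 := by linarith
                         positivity
  obtain ⟨A, hA0, hA⟩ := exA s m N (p * (2 * M) ^ (p - 1)) b hm hN (by positivity) hb0 hκ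
  set vp := vab m A (2 * M) (-M) with hvp
  set vm := vab m A ε 0 with hvm
  have hlt : ∀ z : ℝ, 0 ≤ z → -1 < z := fun z hz => by linarith
  have hWp : ∀ z, 0 ≤ z → Psi s m A z * vp z = Wab s m (2 * M) (-M) z := fun z hz => Psi_vab _ _ _ _ _ z (hlt z hz)
  have hWm : ∀ z, 0 ≤ z → Psi s m A z * vm z = ε * (1 + z) ^ (-(kP s m)) := fun z hz => by
    rw [hvm, Psi_vab _ _ _ _ _ z (hlt z hz)]; simp [Wab]
  have hKpos : ∀ z : ℝ, 0 ≤ z → 0 < (1 + z) ^ (-(kP s m)) := fun z hz => Real.rpow_pos_of_pos (by linarith) _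
  have hΨ : ∀ z, 0 ≤ z → 0 < Psi s m A z := fun z hz => Psi_pos _ _ _ z (hlt z hz)
  have hvm0 : ∀ z, 0 ≤ z → 0 < vm z := fun z hz => by
    have h1 : 0 < Psi s m A z * vm z := by rw [hWm z hz]; exact mul_pos hε0 (hKpos z hz)
    exact (mul_pos_iff_of_pos_left (hΨ z hz)).1 h1
  have hvmp : ∀ z, 0 ≤ z → vm z ≤ vp z := fun z hz => by
    refine le_of_mul_le_mul_left ?_ (hΨ z hz)
    rw [hWm z hz, hWp z hz]
    refine le_trans ?_ (Wab_bounds s m M z hM hz).1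
    exact mul_le_mul_of_nonneg_right (by linarith) (hKpos z hz).le
  have hQ : ∀ z, 0 ≤ z → ∀ v, 0 ≤ v → v ≤ vp z → p * (Psi s m A z * v) ^ (p - 1) ≤ Qf s m N A z := by
    intro z hz v hv hvv
    have h0 : 0 < 1 + z := by linarith
    have h1 : Psi s m A z * v ≤ 2 * M * (1 + z) ^ (-(kP s m)) :=
      (mul_le_mul_of_nonneg_left hvv (hΨ z hz).le).trans ((hWp z hz).le.trans (Wab_bounds s m M z hM hz).2)
    have h2 := Real.rpow_le_rpow (mul_nonneg (hΨ z hz).le hv) h1 (by linarith : 0 ≤ p - 1)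
    rw [Real.mul_rpow (by positivity) (hKpos z hz).le, ← Real.rpow_mul h0.le] at h2
    have h3 : -(kP s m) * (p - 1) = -b - 1 := by linear_combination -(kP_p s m p hs)
    rw [h3, Real.rpow_sub_one h0.ne'] at h2
    have h4 := hA z hz
    have h5 : p * ((2 * M) ^ (p - 1) * ((1 + z) ^ (-b) / (1 + z))) ≤ Qf s m N A z := by
      rw [← mul_div_assoc, ← mul_div_assoc, div_le_iff₀ h0]
      linarith
    exact (mul_le_mul_of_nonneg_left h2 (by linarith)).trans h5
  have hz0 : ∀ z : ℝ, 0 ≤ max z 0 := fun z => le_max_right z 0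
  set cl : ℝ → ℝ → ℝ := fun z w => max (vm (max z 0)) (min w (vp (max z 0))) with hcl
  have hclm : ∀ z w, vm (max z 0) ≤ cl z w := fun z w => le_max_left _ _
  have hclp : ∀ z w, cl z w ≤ vp (max z 0) := fun z w => max_le (hvmp _ (hz0 z)) (min_le_right _ _)
  have hvc : ∀ a b : ℝ, Continuous (fun z : ℝ => vab m A a b (max z 0)) := by
    intro a b
    refine continuous_iff_continuousAt.2 fun z => ?_
    exact ContinuousAt.comp (g := vab m A a b) (f := fun z => max z 0)
      (vab_cd m A a b _ (hlt _ (hz0 z))).continuousAt (by fun_prop)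
  have hFc : ∀ (h : ℝ × ℝ → ℝ), Continuous h → (∀ q, 0 < h q) →
      Continuous (fun q : ℝ × ℝ => Ff s m N A p (max q.1 0) (h q)) := by
    intro h hc hpos
    refine continuous_iff_continuousAt.2 fun q => ?_
    have h2 : Continuous (fun q : ℝ × ℝ => (max q.1 0, h q)) := by fun_prop
    exact ContinuousAt.comp (g := Function.uncurry (Ff s m N A p)) (f := fun q : ℝ × ℝ => (max q.1 0, h q))
      (Ff_cd s m N A p _ _ (hlt _ (hz0 q.1)) (hpos q)).continuousAt h2.continuousAt
  have hmono : ∀ z, 0 ≤ z → ∀ a b, 0 ≤ a → a ≤ b → b ≤ vp z → Ff s m N A p z a ≤ Ff s m N A p z b :=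
    fun z hz a b ha hab hbv => Ff_mono s m N A p z a b (hlt z hz) hp ha hab (hQ z hz b (ha.trans hab) hbv)
  have hF0 : ∀ z, 0 ≤ z → ∀ a, 0 ≤ a → a ≤ vp z → 0 ≤ Ff s m N A p z a := by
    intro z hz a ha hav
    have h1 := hmono z hz 0 a le_rfl ha hav
    have h2 : Ff s m N A p z 0 = 0 := by
      unfold Ff; rw [Real.zero_rpow (by linarith)]; simp
    linarith
  have hline : ∀ (h : ℝ → ℝ), Continuous h → (∀ q, 0 < h q) →
      Continuous (fun q : ℝ => Ff s m N A p (max q 0) (h q)) := by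
    intro h hc hpos
    exact (hFc (fun q => h q.1) (by fun_prop) (fun q => hpos q.1)).comp (by fun_prop : Continuous fun q : ℝ => (q, (0:ℝ)))
  have hcd : ∀ z, 0 ≤ z → 0 < 4 * (1 + z) * Psi s m A z * eF N m A z := fun z hz => by
    have := hΨ z hz
    have := eF_pos N m A z (hlt z hz)
    positivity
  have hclc : Continuous (fun q : ℝ × ℝ => cl q.1 q.2) := by
    have h1 : Continuous (fun q : ℝ × ℝ => vm (max q.1 0)) := (hvc ε 0).comp continuous_fst
    have h2 : Continuous (fun q : ℝ × ℝ => vp (max q.1 0)) := (hvc (2 * M) (-M)).comp continuous_fst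
    exact h1.max (continuous_snd.min h2)
  have hGcont : Continuous (Function.uncurry (fun z w => Ff s m N A p (max z 0) (cl z w))) :=
    hFc (fun q => cl q.1 q.2) hclc (fun q => (hvm0 _ (hz0 q.1)).trans_le (hclm _ _))
  obtain ⟨v, hvcont, hvb, hvint⟩ := fp_exists k (fun z w => Ff s m N A p (max z 0) (cl z w))
    (fun z => eF N m A (max z 0))
    (fun z => Ff s m N A p (max z 0) (vp (max z 0))) (fun z => Ff s m N A p (max z 0) (vm (max z 0)))
    vp vm (Pab N m A (2 * M) (-M)) (deriv (Pab N m A (2 * M) (-M))) (Pab N m A ε 0) (deriv (Pab N m A ε 0))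
    hGcont
    (by
      intro z w₁ w₂ h
      refine hmono _ (hz0 z) _ _ ((hvm0 _ (hz0 z)).le.trans (hclm _ _)) ?_ (hclp _ _)
      exact max_le_max_left _ (min_le_min_right _ h))
    (hline _ (hvc _ _) (fun z => (hvm0 _ (hz0 z)).trans_le (hvmp _ (hz0 z))))
    (hline _ (hvc _ _) (fun z => hvm0 _ (hz0 z)))
    (by
      refine continuous_iff_continuousAt.2 fun z => ?_
      exact ContinuousAt.comp (g := eF N m A) (f := fun z => max z 0)
        (eF_cd N m A _ (hlt _ (hz0 z))).continuousAt (by fun_prop))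
    (fun z => (eF_pos N m A _ (hlt _ (hz0 z))).le)
    (fun z => hF0 _ (hz0 z) _ (hvm0 _ (hz0 z)).le (hvmp _ (hz0 z)))
    (fun z w => hmono _ (hz0 z) _ _ ((hvm0 _ (hz0 z)).le.trans (hclm _ _)) (hclp _ _) le_rfl)
    (fun z w => hmono _ (hz0 z) _ _ (hvm0 _ (hz0 z)).le (hclm _ _) (hclp _ _))
    (fun t ht => (vab_pack s m N A _ _ t (hlt t ht)).2.1)
    (fun t ht => (vab_pack s m N A _ _ t (hlt t ht)).2.1)
    (by
      intro t ht
      rw [← hNk, (vab_pack s m N A _ _ t (hlt t ht)).2.2]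
      simp only [max_eq_left ht]
      rw [Ff_eq s m N A p t _ (hlt t ht) ((hvm0 t ht).le.trans (hvmp t ht)), hWp t ht]
      exact div_le_div_of_nonneg_right (by linarith [hsup t ht]) (hcd t ht).le)
    (by
      intro t ht
      rw [← hNk, (vab_pack s m N A _ _ t (hlt t ht)).2.2]
      simp only [max_eq_left ht]
      rw [Ff_eq s m N A p t _ (hlt t ht) (hvm0 t ht).le, hvm, Psi_vab _ _ _ _ _ t (hlt t ht)]
      exact div_le_div_of_nonneg_right (by linarith [hsub t ht]) (hcd t ht).le)
    (fun t ht => Pab_nonneg N m A ε t hm hA0 hε0.le ht)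
    (fun t ht => by
      simp only [max_eq_left ht]
      exact (vab_pack s m N A _ _ t (hlt t ht)).1)
    (fun t ht => by
      simp only [max_eq_left ht]
      exact (vab_pack s m N A _ _ t (hlt t ht)).1)
    (fun t ht => (hvm0 t ht).le.trans (hvmp t ht))
    (vab_tendsto m A _ _ hm) (vab_tendsto m A _ _ hm)
  obtain ⟨v2, P, hv2, hreg⟩ := regularity k (Ff s m N A p) (eF N m A) v
    (fun z hz a ha => Ff_cd s m N A p z a (hlt z hz) ha)
    (fun z hz => ((eF_cd N m A z hz).of_le (by norm_num)).contDiffWithinAt) hvcont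
    (fun z hz => (hvm0 z hz).trans_le (hvb z hz).1)
    (by
      intro η hη
      rw [hvint η hη]
      congr 1
      refine intervalIntegral.integral_congr fun t ht => ?_
      rw [uIcc_of_le hη] at ht
      simp only [max_eq_left ht.1]
      congr 1
      change Dop k (fun y => Ff s m N A p (max y 0) (cl y (v y))) t =
        Dop k (fun z => Ff s m N A p z (v z)) t
      refine Dop_congr k _ _ (fun y hy => ?_) t ht.1
      simp only [hcl, max_eq_left hy]
      rw [min_eq_left (hvb y hy).2, max_eq_right (hvb y hy).1])
  refine ⟨fun z => Psi s m A z * v2 z, ε, 2 * M, hε0, by linarith, fun z hz => ?_⟩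
  obtain ⟨hc2, hev, P', hP', hode⟩ := hreg z hz
  have hvpos : 0 < v z := (hvm0 z hz).trans_le (hvb z hz).1
  refine ⟨(Psi_cd s m A z (hlt z hz)).mul hc2, ?_, ?_, ?_⟩
  · change Lop s m N (fun z => Psi s m A z * v2 z) z = (Psi s m A z * v2 z) ^ p
    rw [ident s m N A z (hlt z hz) v2 P P' hev hP', hNk, hode, ← hNk, hv2 z hz,
      Ff_eq s m N A p z _ (hlt z hz) hvpos.le]
    rw [mul_div_cancel₀ _ (hcd z hz).ne']
    ring
  · change ε * (1 + z) ^ (-(kP s m)) ≤ Psi s m A z * v2 z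
    rw [← hWm z hz, hv2 z hz]
    exact mul_le_mul_of_nonneg_left (hvb z hz).1 (hΨ z hz).le
  · simp only [hv2 z hz]
    refine le_trans (mul_le_mul_of_nonneg_left (hvb z hz).2 (hΨ z hz).le) ?_
    rw [hWp z hz]
    exact (Wab_bounds s m M z hM hz).2


theorem etaV_add_one {n : ℕ} {x : EuclideanSpace ℝ (Fin n)} (hn : 0 < n) (hx : x ∈ halfSpace n) (s a κ : ℝ)
    (hκ : κ = (s + a) / 2) :
    x1 x ^ (-s) * (1 + etaV x) ^ (-κ) = x1 x ^ a * ‖x‖ ^ (-a - s) := by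
  have hx1 : 0 < x1 x := hx
  have hnx : 0 < ‖x‖ := lt_of_lt_of_le hx1 ((le_abs_self _).trans (x1_le_norm hn x))
  have h1 : 1 + etaV x = (‖x‖ / x1 x) ^ (2 : ℝ) := by
    rw [Real.rpow_two, div_pow]; unfold etaV; ring
  rw [h1, ← Real.rpow_mul (by positivity), Real.div_rpow hnx.le hx1.le]
  have e1 : (2 : ℝ) * -κ = -a - s := by rw [hκ]; ring
  rw [e1]
  have e2 : x1 x ^ (-s) = x1 x ^ a * x1 x ^ (-a - s) := by
    rw [← Real.rpow_add hx1]; congr 1; ring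
  have h3 : 0 < x1 x ^ (-a - s) := Real.rpow_pos_of_pos hx1 _
  rw [e2]
  field_simp

theorem sep_exists (n : ℕ) (hn : 2 ≤ n) (μ p : ℝ) (hμ : μ < 1 / 4) (hp1 : 1 < p)
    (hpc : p < 1 + 2 / ((n : ℝ) - 2 + aPlus μ)) :
    ∃ u : EuclideanSpace ℝ (Fin n) → ℝ, IsSepSolPlus n μ p u := by
  obtain ⟨k, rfl⟩ : ∃ k, n = k + 2 := ⟨n - 2, by omega⟩
  have hn0 : 0 < k + 2 := by omega
  have hp0 : 0 < p - 1 := by linarith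
  obtain ⟨s, hsdef⟩ : ∃ s, s = 2 / (p - 1) := ⟨_, rfl⟩
  obtain ⟨m, hmdef⟩ : ∃ m, m = 2 * Real.sqrt (1 / 4 - μ) := ⟨_, rfl⟩
  have hr : 0 < Real.sqrt (1 / 4 - μ) := Real.sqrt_pos.mpr (by linarith)
  have hm : 0 < m := by rw [hmdef]; positivity
  have hα : aPlus μ = (1 + m) / 2 := by rw [hmdef]; unfold aPlus; ring
  have hμm : μ = (1 - m ^ 2) / 4 := by
    rw [hmdef, mul_pow, Real.sq_sqrt (by linarith)]; ring
  have hs : s * (p - 1) = 2 := by rw [hsdef]; field_simp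
  have hs0 : 0 < s := by rw [hsdef]; positivity
  have hgt : (k : ℝ) + (1 + m) / 2 < s := by
    have hk : (0 : ℝ) ≤ k := Nat.cast_nonneg k
    have e : ((k + 2 : ℕ) : ℝ) - 2 + aPlus μ = (k : ℝ) + (1 + m) / 2 := by
      rw [hα]; push_cast; ring
    rw [e] at hpc
    have h0 : 0 < (k : ℝ) + (1 + m) / 2 := by positivity
    have h1 : p - 1 < 2 / ((k : ℝ) + (1 + m) / 2) := by linarith
    rw [lt_div_iff₀ h0] at h1
    rw [hsdef, lt_div_iff₀ hp0]
    linarith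
  have hκ : 0 < cZ s m - 4 * (((k : ℝ) + 1) / 2) * kP s m := by
    have : cZ s m - 4 * (((k : ℝ) + 1) / 2) * kP s m
        = (s + (1 + m) / 2) * (s - (1 + m) / 2 - k) := by
      unfold cZ kP; ring
    rw [this]
    exact mul_pos (by positivity) (by linarith)
  obtain ⟨W, ε, C, hε, hC, hW⟩ := profile_exists k s m p _ rfl hs hp1 hm hκ
  have hkP : kP s m = (s + aPlus μ) / 2 := by rw [hα]; rfl
  have hWpos : ∀ z, 0 ≤ z → 0 < W z := fun z hz =>
    lt_of_lt_of_le (mul_pos hε (Real.rpow_pos_of_pos (by linarith) _)) (hW z hz).2.2.1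
  refine ⟨fun x => x1 x ^ (-s) * W (etaV x), ?_, ?_, ?_, ?_, ?_, ?_⟩
  · intro x hx
    exact (sepU_contDiffAt hx s W (hW _ (etaV_nonneg hn0 hx)).1).contDiffWithinAt
  · intro x hx
    exact mul_pos (Real.rpow_pos_of_pos hx _) (hWpos _ (etaV_nonneg hn0 hx))
  · intro x hx
    have hx1 : 0 < x1 x := hx
    have hz := etaV_nonneg hn0 hx
    rw [lap_formula hn0 hx s W (hW _ hz).1]
    have hL := (hW _ hz).2.1
    unfold Lop cZ at hL
    have e1 : x1 x ^ (-s) = x1 x ^ (-s - 2) * x1 x ^ 2 := by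
      rw [← Real.rpow_two, ← Real.rpow_add hx1]; congr 1; ring
    change _ + _ * (x1 x ^ (-s) * W (etaV x)) = (x1 x ^ (-s) * W (etaV x)) ^ p
    rw [Real.mul_rpow (Real.rpow_pos_of_pos hx1 _).le (hWpos _ hz).le, ← Real.rpow_mul hx1.le]
    have e2 : -s * p = -s - 2 := by linarith
    rw [e2, ← hL, e1, hμm]
    generalize x1 x ^ (-s - 2) = Q
    push_cast
    field_simp
    ring
  · intro x hx y hy h1 h2
    simp only [etaV, h1, h2]
  · intro l hl x hx
    have hx1 : 0 < x1 x := hx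
    have e : etaV (l • x) = etaV x := by
      unfold etaV
      rw [x1_smul hn0, norm_smul, Real.norm_of_nonneg hl.le]
      field_simp
    change x1 (l • x) ^ (-s) * W (etaV (l • x)) = _ * (x1 x ^ (-s) * W (etaV x))
    rw [e, x1_smul hn0, Real.mul_rpow hl.le hx1.le, ← hsdef]
    ring
  · refine ⟨max (1 / ε) C, lt_max_of_lt_right hC, fun x hx => ?_⟩
    have hx1 : 0 < x1 x := hx
    have hz := etaV_nonneg hn0 hx
    have hE := etaV_add_one hn0 hx s (aPlus μ) (kP s m) hkP
    have hxs : 0 < x1 x ^ (-s) := Real.rpow_pos_of_pos hx1 _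
    have hB : 0 < x1 x ^ (-s) * (1 + etaV x) ^ (-(kP s m)) :=
      mul_pos hxs (Real.rpow_pos_of_pos (by linarith) _)
    rw [← hsdef, mul_assoc, mul_assoc, ← hE]
    have hc1 : (max (1 / ε) C)⁻¹ ≤ ε := by
      rw [inv_le_comm₀ (lt_max_of_lt_right hC) hε, ← one_div]
      exact le_max_left _ _
    constructor
    · calc _ ≤ ε * (x1 x ^ (-s) * (1 + etaV x) ^ (-(kP s m))) :=
            mul_le_mul_of_nonneg_right hc1 hB.le
        _ = x1 x ^ (-s) * (ε * (1 + etaV x) ^ (-(kP s m))) := by ring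
        _ ≤ _ := mul_le_mul_of_nonneg_left (hW _ hz).2.2.1 hxs.le
    · calc x1 x ^ (-s) * W (etaV x)
          ≤ x1 x ^ (-s) * (C * (1 + etaV x) ^ (-(kP s m))) :=
            mul_le_mul_of_nonneg_left (hW _ hz).2.2.2 hxs.le
        _ = C * (x1 x ^ (-s) * (1 + etaV x) ^ (-(kP s m))) := by ring
        _ ≤ _ := mul_le_mul_of_nonneg_right (le_max_right _ _) hB.le

end

/-- for `1 < p < p_c` there is a unique separable solution with the
strong singularity at the origin behaving like the small `L_μ`-harmonic. -/
theorem stmt1 (n : ℕ) (hn : 2 ≤ n) (μ p : ℝ) (hμ : μ < 1 / 4) (hp1 : 1 < p)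
    (hpc : p < 1 + 2 / ((n : ℝ) - 2 + aPlus μ)) :
    (∃ u : EuclideanSpace ℝ (Fin n) → ℝ, IsSepSolPlus n μ p u) ∧
    (∀ u₁ u₂ : EuclideanSpace ℝ (Fin n) → ℝ,
      IsSepSolPlus n μ p u₁ → IsSepSolPlus n μ p u₂ → Set.EqOn u₁ u₂ (halfSpace n)) := by
  exact ⟨sep_exists n hn μ p hμ hp1 hpc, fun u₁ u₂ h₁ h₂ => sep_unique hn μ p hμ hp1 u₁ u₂ h₁ h₂⟩
end

section
/- Let n ≥ 2, −∞ < μ < 1/4 and p > p_c := 1 + 2/(n−2+α₊). Then there is no positive classical solution u of Δu + (μ/x₁²)u = u^p on ℝⁿ₊ satisfying, for some c > 0, c⁻¹ x₁^{α₊} |x|^{−α₊−2/(p−1)} ≤ u(x) ≤ c x₁^{α₊} |x|^{−α₊−2/(p−1)} for all x ∈ ℝⁿ₊. -/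
open Real Set

open Filter Topology

/-- `f` is twice differentiable at `0` with second derivative `s`. -/
def HasSecond (f : ℝ → ℝ) (s : ℝ) : Prop :=
  ∃ f' : ℝ → ℝ, (∀ᶠ t in 𝓝 (0 : ℝ), HasDerivAt f (f' t) t) ∧ HasDerivAt f' s 0

lemma HasSecond.add {f g : ℝ → ℝ} {s t : ℝ} (hf : HasSecond f s) (hg : HasSecond g t) :
    HasSecond (fun x => f x + g x) (s + t) := by
  obtain ⟨f', h1, h2⟩ := hf
  obtain ⟨g', h3, h4⟩ := hg
  refine ⟨fun x => f' x + g' x, ?_, h2.add h4⟩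
  filter_upwards [h1, h3] with x a b using a.add b

lemma HasSecond.const_mul {f : ℝ → ℝ} {s : ℝ} (c : ℝ) (hf : HasSecond f s) :
    HasSecond (fun x => c * f x) (c * s) := by
  obtain ⟨f', h1, h2⟩ := hf
  refine ⟨fun x => c * f' x, ?_, h2.const_mul c⟩
  filter_upwards [h1] with x a using a.const_mul c

lemma HasSecond.nonpos {f : ℝ → ℝ} {s : ℝ} (hf : HasSecond f s) (hm : IsLocalMax f 0) :
    s ≤ 0 := by
  obtain ⟨f', h1, h2⟩ := hf
  by_contra! hs
  have e : deriv f =ᶠ[𝓝 0] f' := by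
    filter_upwards [h1] with x a using a.deriv
  have hdd : deriv (deriv f) 0 = s := by rw [e.deriv_eq, h2.deriv]
  have hmin : IsLocalMin f 0 :=
    isLocalMin_of_deriv_deriv_pos (by rw [hdd]; exact hs) hm.deriv_eq_zero
      h1.self_of_nhds.continuousAt
  have hc : f =ᶠ[𝓝 0] fun _ => f 0 := by
    filter_upwards [hm, hmin] with x a b using le_antisymm a b
  have hc1 : deriv f =ᶠ[𝓝 0] fun _ => 0 := by
    have := hc.deriv
    simpa using this
  have : deriv (deriv f) 0 = 0 := by rw [hc1.deriv_eq]; simp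
  linarith

lemma hasSecond_line {n : ℕ} {u : EuclideanSpace ℝ (Fin n) → ℝ}
    {x : EuclideanSpace ℝ (Fin n)} (hu : ContDiffAt ℝ 2 u x) (e : EuclideanSpace ℝ (Fin n)) :
    HasSecond (fun t : ℝ => u (x + t • e)) (iteratedFDeriv ℝ 2 u x ![e, e]) := by
  have hl : ∀ t : ℝ, HasDerivAt (fun t : ℝ => x + t • e) e t := by
    intro t
    simpa using ((hasDerivAt_id t).smul_const e).const_add x
  have hl0 : Tendsto (fun t : ℝ => x + t • e) (𝓝 0) (𝓝 x) := by
    simpa using (hl 0).continuousAt.tendsto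
  refine ⟨fun t => fderiv ℝ u (x + t • e) e, ?_, ?_⟩
  · have h1 : ∀ᶠ y in 𝓝 x, ContDiffAt ℝ 2 u y := hu.eventually (by simp)
    filter_upwards [hl0.eventually h1] with t ht
    exact (ht.differentiableAt (by simp)).hasFDerivAt.comp_hasDerivAt t (hl t)
  · have h2 : DifferentiableAt ℝ (fderiv ℝ u) x :=
      (hu.fderiv_right (m := 1) (by norm_num)).differentiableAt (by simp)
    have h3 : HasFDerivAt (fderiv ℝ u) (fderiv ℝ (fderiv ℝ u) x) (x + (0 : ℝ) • e) := by
      simpa using h2.hasFDerivAt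
    have h4 := h3.comp_hasDerivAt (0 : ℝ) (hl 0)
    have h5 := h4.clm_apply (hasDerivAt_const (0 : ℝ) e)
    rw [iteratedFDeriv_two_apply]
    simpa using h5

lemma hasSecond_model (a k y q d b : ℝ) (hy : 0 < y) (hq : 0 < q) :
    HasSecond (fun t => (y + d * t) ^ a * (q + 2 * b * t + t ^ 2) ^ k)
      (a * (a - 1) * d ^ 2 * y ^ (a - 2) * q ^ k + 4 * a * d * k * b * y ^ (a - 1) * q ^ (k - 1)
        + 4 * k * (k - 1) * y ^ a * b ^ 2 * q ^ (k - 2) + 2 * k * y ^ a * q ^ (k - 1)) := by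
  have hL : ∀ t : ℝ, HasDerivAt (fun t : ℝ => y + d * t) d t := by
    intro t
    simpa using ((hasDerivAt_id t).const_mul d).const_add y
  have hQ : ∀ t : ℝ, HasDerivAt (fun t : ℝ => q + 2 * b * t + t ^ 2) (2 * b + 2 * t) t := by
    intro t
    have := (((hasDerivAt_id t).const_mul (2 * b)).const_add q).add ((hasDerivAt_id t).pow 2)
    refine HasDerivAt.congr_deriv this ?_
    norm_num
  have pL : ∀ᶠ t in 𝓝 (0 : ℝ), 0 < y + d * t :=
    (hL 0).continuousAt.eventually (lt_mem_nhds (by simpa using hy))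
  have pQ : ∀ᶠ t in 𝓝 (0 : ℝ), 0 < q + 2 * b * t + t ^ 2 :=
    (hQ 0).continuousAt.eventually (lt_mem_nhds (by simpa using hq))
  have RL : ∀ (r t : ℝ), 0 < y + d * t →
      HasDerivAt (fun t : ℝ => (y + d * t) ^ r) (d * r * (y + d * t) ^ (r - 1)) t :=
    fun r t h => (hL t).rpow_const (Or.inl h.ne')
  have RQ : ∀ (r t : ℝ), 0 < q + 2 * b * t + t ^ 2 →
      HasDerivAt (fun t : ℝ => (q + 2 * b * t + t ^ 2) ^ r)
        ((2 * b + 2 * t) * r * (q + 2 * b * t + t ^ 2) ^ (r - 1)) t :=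
    fun r t h => (hQ t).rpow_const (Or.inl h.ne')
  refine ⟨fun t => (d * a * (y + d * t) ^ (a - 1)) * (q + 2 * b * t + t ^ 2) ^ k +
    (y + d * t) ^ a * ((2 * b + 2 * t) * k * (q + 2 * b * t + t ^ 2) ^ (k - 1)), ?_, ?_⟩
  · filter_upwards [pL, pQ] with t h1 h2
    exact (RL a t h1).mul (RQ k t h2)
  · have h1 := pL.self_of_nhds
    have h2 := pQ.self_of_nhds
    have hB : HasDerivAt (fun t : ℝ => (2 * b + 2 * t) * k) (2 * k) 0 := by
      have := (((hasDerivAt_id (0 : ℝ)).const_mul 2).const_add (2 * b)).mul_const k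
      simpa using this
    have := (((RL (a - 1) 0 h1).const_mul (d * a)).mul (RQ k 0 h2)).add
      ((RL a 0 h1).mul (hB.mul (RQ (k - 1) 0 h2)))
    refine HasDerivAt.congr_deriv this ?_
    have e1 : a - 1 - 1 = a - 2 := by ring
    have e2 : k - 1 - 1 = k - 2 := by ring
    simp [e1, e2]
    ring

/-- Model function `x₁^a |x|^{2k}`. -/
noncomputable def Wf {n : ℕ} (a k : ℝ) (x : EuclideanSpace ℝ (Fin n)) : ℝ :=
  x1 x ^ a * (‖x‖ ^ 2) ^ k

lemma Wf_second {n : ℕ} (hn : 2 ≤ n) (μ a k : ℝ) (ha : a ^ 2 - a + μ = 0)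
    (hk : k * (4 * a + 4 * k - 4 + 2 * n) = 0) (x : EuclideanSpace ℝ (Fin n))
    (hx : 0 < x1 x) :
    ∃ s : Fin n → ℝ,
      (∀ i, HasSecond (fun t : ℝ => Wf a k (x + t • EuclideanSpace.single i (1 : ℝ))) (s i)) ∧
      ∑ i, s i + μ / (x1 x) ^ 2 * Wf a k x = 0 := by
  have h0 : 0 < n := by omega
  have hx1 : ∀ z : EuclideanSpace ℝ (Fin n), x1 z = z ⟨0, h0⟩ := fun z => by simp [x1, h0]
  have hne : x ≠ 0 := by
    rintro rfl
    rw [hx1] at hx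
    simp at hx
  have hq : 0 < ‖x‖ ^ 2 := by positivity
  set q := ‖x‖ ^ 2 with hqd
  set y := x1 x with hyd
  set d : Fin n → ℝ := fun i => if i = ⟨0, h0⟩ then 1 else 0 with hd
  refine ⟨fun i => a * (a - 1) * d i ^ 2 * y ^ (a - 2) * q ^ k
      + 4 * a * d i * k * x i * y ^ (a - 1) * q ^ (k - 1)
      + 4 * k * (k - 1) * y ^ a * x i ^ 2 * q ^ (k - 2) + 2 * k * y ^ a * q ^ (k - 1), ?_, ?_⟩
  · intro i
    convert hasSecond_model a k y q (d i) (x i) hx hq using 1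
    funext t
    unfold Wf
    have e1 : x1 (x + t • EuclideanSpace.single i (1 : ℝ)) = y + d i * t := by
      rw [hyd, hx1, hx1]
      by_cases h : i = ⟨0, h0⟩
      · simp [hd, h]
      · have h' : ¬ ((⟨0, h0⟩ : Fin n) = i) := fun e => h e.symm
        simp [hd, h, h']
    have e2 : ‖x + t • EuclideanSpace.single i (1 : ℝ)‖ ^ 2 = q + 2 * x i * t + t ^ 2 := by
      rw [norm_add_sq_real, inner_smul_right, EuclideanSpace.inner_single_right, norm_smul]
      simp
      ring
    rw [e1, e2]
  · have hsum : ∑ i, x i ^ 2 = q := by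
      rw [hqd, EuclideanSpace.norm_sq_eq]
      simp
    have hdx : ∑ i, d i * x i = y := by
      rw [hyd, hx1]; simp [hd]
    have hdd : ∑ i, d i ^ 2 = 1 := by
      simp [hd]
    have p1 : y ^ (a - 2) = y ^ a / y ^ 2 := by
      rw [Real.rpow_sub hx]; norm_num
    have p2 : y ^ (a - 1) = y ^ a / y := by
      rw [Real.rpow_sub hx]; norm_num
    have p3 : q ^ (k - 2) = q ^ k / q ^ 2 := by
      rw [Real.rpow_sub hq]; norm_num
    have p4 : q ^ (k - 1) = q ^ k / q := by
      rw [Real.rpow_sub hq]; norm_num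
    have key : ∑ i, (a * (a - 1) * d i ^ 2 * y ^ (a - 2) * q ^ k
      + 4 * a * d i * k * x i * y ^ (a - 1) * q ^ (k - 1)
      + 4 * k * (k - 1) * y ^ a * x i ^ 2 * q ^ (k - 2) + 2 * k * y ^ a * q ^ (k - 1))
      = a * (a - 1) * y ^ (a - 2) * q ^ k * (∑ i, d i ^ 2)
      + 4 * a * k * y ^ (a - 1) * q ^ (k - 1) * (∑ i, d i * x i)
      + 4 * k * (k - 1) * y ^ a * q ^ (k - 2) * (∑ i, x i ^ 2)
      + n * (2 * k * y ^ a * q ^ (k - 1)) := by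
      rw [Finset.sum_add_distrib, Finset.sum_add_distrib, Finset.sum_add_distrib,
        Finset.mul_sum, Finset.mul_sum, Finset.mul_sum]
      simp only [Finset.sum_const, Finset.card_univ, Fintype.card_fin, nsmul_eq_mul]
      congr 1
      congr 1
      congr 1
      all_goals
        apply Finset.sum_congr rfl
        intro i _
        ring
    rw [key, hsum, hdx, hdd, p1, p2, p3, p4]
    unfold Wf
    rw [← hyd, ← hqd]
    have : a * (a - 1) * (y ^ a / y ^ 2) * q ^ k * 1 + 4 * a * k * (y ^ a / y) * (q ^ k / q) * y
        + 4 * k * (k - 1) * y ^ a * (q ^ k / q ^ 2) * q + n * (2 * k * y ^ a * (q ^ k / q))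
        + μ / y ^ 2 * (y ^ a * q ^ k)
        = (a ^ 2 - a + μ) * (y ^ a * q ^ k / y ^ 2)
          + k * (4 * a + 4 * k - 4 + 2 * n) * (y ^ a * q ^ k / q) := by
      field_simp
      ring
    rw [this, ha, hk]
    ring

/-- An interior maximum of `u / U` is impossible. -/
lemma no_max {n : ℕ} (hn : 2 ≤ n) (μ p a : ℝ) (ha : a ^ 2 - a + μ = 0)
    (u : EuclideanSpace ℝ (Fin n) → ℝ) (x : EuclideanSpace ℝ (Fin n)) (hx : 0 < x1 x)
    (ho : halfSpace n ∈ 𝓝 x)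
    (hu : ContDiffAt ℝ 2 u x) (hpos : 0 < u x)
    (heq : lap u x + (μ / (x1 x) ^ 2) * u x = u x ^ p) (M : ℝ)
    (hM : u x = M * (Wf a 0 x + Wf a (-(((n : ℝ) - 2 + 2 * a) / 2)) x + Wf (1 - a) 0 x))
    (hle : ∀ z ∈ halfSpace n,
      u z ≤ M * (Wf a 0 z + Wf a (-(((n : ℝ) - 2 + 2 * a) / 2)) z + Wf (1 - a) 0 z)) :
    False := by
  set k : ℝ := -(((n : ℝ) - 2 + 2 * a) / 2) with hkd
  obtain ⟨s1, hs1, e1⟩ := Wf_second hn μ a 0 ha (by ring) x hx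
  obtain ⟨s2, hs2, e2⟩ := Wf_second hn μ a k ha (by rw [hkd]; ring) x hx
  obtain ⟨s3, hs3, e3⟩ := Wf_second hn μ (1 - a) 0 (by linarith) (by ring) x hx
  have hi : ∀ i : Fin n, iteratedFDeriv ℝ 2 u x
      ![EuclideanSpace.single i 1, EuclideanSpace.single i 1]
      + (-M) * (s1 i + s2 i + s3 i) ≤ 0 := by
    intro i
    refine ((hasSecond_line hu (EuclideanSpace.single i 1)).add
      ((((hs1 i).add (hs2 i)).add (hs3 i)).const_mul (-M))).nonpos ?_
    have hl0 : Tendsto (fun t : ℝ => x + t • EuclideanSpace.single i (1 : ℝ)) (𝓝 0) (𝓝 x) := by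
      have : Continuous (fun t : ℝ => x + t • EuclideanSpace.single i (1 : ℝ)) := by fun_prop
      simpa using this.tendsto 0
    filter_upwards [hl0 ho] with t ht
    have h := hle _ ht
    simp only [zero_smul, add_zero]
    linarith
  have hs : lap u x + (-M) * (∑ i, s1 i + ∑ i, s2 i + ∑ i, s3 i) ≤ 0 := by
    have := Finset.sum_nonpos (fun i (_ : i ∈ Finset.univ) => hi i)
    rw [Finset.sum_add_distrib, ← Finset.mul_sum, Finset.sum_add_distrib,
      Finset.sum_add_distrib] at this
    exact this
  have hup : 0 < u x ^ p := Real.rpow_pos_of_pos hpos p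
  have t1 : ∑ i, s1 i = - (μ / x1 x ^ 2 * Wf a 0 x) := by linarith
  have t2 : ∑ i, s2 i = - (μ / x1 x ^ 2 * Wf a k x) := by linarith
  have t3 : ∑ i, s3 i = - (μ / x1 x ^ 2 * Wf (1 - a) 0 x) := by linarith
  rw [t1, t2, t3] at hs
  rw [← heq] at hup
  have : μ / x1 x ^ 2 * u x = μ / x1 x ^ 2 * (M * (Wf a 0 x + Wf a k x + Wf (1 - a) 0 x)) := by
    rw [← hM]
  rw [this] at hup
  nlinarith

theorem stmt2 (n : ℕ) (hn : 2 ≤ n) (μ p : ℝ) (hμ : μ < 1 / 4)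
    (hpc : 1 + 2 / ((n : ℝ) - 2 + aPlus μ) < p) :
    ¬ ∃ (u : EuclideanSpace ℝ (Fin n) → ℝ) (c : ℝ), 0 < c ∧
      ContDiffOn ℝ 2 u (halfSpace n) ∧
      (∀ x ∈ halfSpace n, 0 < u x) ∧
      (∀ x ∈ halfSpace n, lap u x + (μ / (x1 x) ^ 2) * u x = u x ^ p) ∧
      (∀ x ∈ halfSpace n,
        c⁻¹ * x1 x ^ aPlus μ * ‖x‖ ^ (-(aPlus μ) - 2 / (p - 1)) ≤ u x ∧
        u x ≤ c * x1 x ^ aPlus μ * ‖x‖ ^ (-(aPlus μ) - 2 / (p - 1))) := by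
  rintro ⟨u, c, hc, hu, hpos, heq, hb⟩
  have ha : (aPlus μ) ^ 2 - aPlus μ + μ = 0 := by
    unfold aPlus
    have := Real.sq_sqrt (show (0 : ℝ) ≤ 1 / 4 - μ by linarith)
    nlinarith
  have ha2 : 1 / 2 < aPlus μ := by
    unfold aPlus
    have := Real.sqrt_pos.2 (show (0 : ℝ) < 1 / 4 - μ by linarith)
    linarith
  set a := aPlus μ with had
  have hn' : (2 : ℝ) ≤ n := by exact_mod_cast hn
  have hna : 0 < (n : ℝ) - 2 + a := by linarith
  have hp1 : 0 < p - 1 := by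
    have : 0 < 2 / ((n : ℝ) - 2 + a) := by positivity
    linarith
  have hp2 : 2 / (p - 1) < (n : ℝ) - 2 + a := by
    rw [div_lt_iff₀ hp1]
    have : 2 / ((n : ℝ) - 2 + a) < p - 1 := by linarith
    rw [div_lt_iff₀ hna] at this
    linarith
  have hp3 : 0 < 2 / (p - 1) := by positivity
  obtain ⟨β, hβ⟩ : ∃ β, β = a + 2 / (p - 1) := ⟨_, rfl⟩
  obtain ⟨σ, hσ⟩ : ∃ σ, σ = (n : ℝ) - 2 + 2 * a := ⟨_, rfl⟩
  have hβ0 : 0 < β := by linarith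
  have hβσ : 0 < σ - β := by linarith
  have h0 : 0 < n := by omega
  have hx1 : ∀ z : EuclideanSpace ℝ (Fin n), x1 z = z ⟨0, h0⟩ := fun z => by simp [x1, h0]
  have hx1c : Continuous (x1 : EuclideanSpace ℝ (Fin n) → ℝ) := by
    have : (x1 : EuclideanSpace ℝ (Fin n) → ℝ) = fun z => z ⟨0, h0⟩ := funext hx1
    rw [this]; fun_prop
  have hopen : IsOpen (halfSpace n) := isOpen_lt continuous_const hx1c
  have hnorm : ∀ z ∈ halfSpace n, 0 < ‖z‖ := by
    intro z hz
    rw [norm_pos_iff]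
    rintro rfl
    have : 0 < x1 (0 : EuclideanSpace ℝ (Fin n)) := hz
    rw [hx1] at this
    simp at this
  obtain ⟨U, hU⟩ : ∃ U : EuclideanSpace ℝ (Fin n) → ℝ, U = fun z =>
    Wf a 0 z + Wf a (-(((n : ℝ) - 2 + 2 * a) / 2)) z + Wf (1 - a) 0 z := ⟨_, rfl⟩
  have hUf : ∀ z ∈ halfSpace n,
      U z = x1 z ^ a * (1 + ‖z‖ ^ (-σ) + x1 z ^ (1 - 2 * a)) := by
    intro z hz
    have hz' : 0 < x1 z := hz
    rw [hU]
    simp only [Wf, Real.rpow_zero]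
    have e1 : (‖z‖ ^ 2) ^ (-(((n : ℝ) - 2 + 2 * a) / 2)) = ‖z‖ ^ (-σ) := by
      rw [← Real.rpow_natCast, ← Real.rpow_mul (norm_nonneg z)]
      congr 1
      rw [hσ]; push_cast; ring
    have e2 : x1 z ^ (1 - a) = x1 z ^ a * x1 z ^ (1 - 2 * a) := by
      rw [← Real.rpow_add hz']; congr 1; ring
    rw [e1, e2]; ring
  have hUpos : ∀ z ∈ halfSpace n, 0 < U z := by
    intro z hz
    have hz' : 0 < x1 z := hz
    have := hnorm z hz
    rw [hUf z hz]; positivity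
  have hUc : ContinuousOn U (halfSpace n) := by
    refine ContinuousOn.congr ?_ hUf
    have hA : ∀ r : ℝ, ContinuousOn (fun z : EuclideanSpace ℝ (Fin n) => x1 z ^ r)
        (halfSpace n) := fun r => hx1c.continuousOn.rpow_const
          (fun z hz => Or.inl (ne_of_gt hz))
    have hB : ContinuousOn (fun z : EuclideanSpace ℝ (Fin n) => ‖z‖ ^ (-σ))
        (halfSpace n) := continuous_norm.continuousOn.rpow_const
          (fun z hz => Or.inl (hnorm z hz).ne')
    exact (hA a).mul ((continuousOn_const.add hB).add (hA _))
  have hgc : ContinuousOn (fun z => u z / U z) (halfSpace n) :=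
    hu.continuousOn.div hUc (fun z hz => (hUpos z hz).ne')
  have hw : (EuclideanSpace.single (⟨0, h0⟩ : Fin n) (1 : ℝ)) ∈ halfSpace n := by
    change 0 < x1 _
    rw [hx1]; simp
  obtain ⟨w, hwd⟩ : ∃ w : EuclideanSpace ℝ (Fin n), w ∈ halfSpace n := ⟨_, hw⟩
  obtain ⟨m, hm⟩ : ∃ m, m = u w / U w := ⟨_, rfl⟩
  have hm0 : 0 < m := by rw [hm]; exact div_pos (hpos w hwd) (hUpos w hwd)
  obtain ⟨R, hR⟩ : ∃ R, R = (c / m) ^ β⁻¹ := ⟨_, rfl⟩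
  obtain ⟨r0, hr0⟩ : ∃ r0, r0 = (m / c) ^ (σ - β)⁻¹ := ⟨_, rfl⟩
  obtain ⟨δ, hδ⟩ : ∃ δ, δ = (m * r0 ^ β / c) ^ (2 * a - 1)⁻¹ := ⟨_, rfl⟩
  have hr0p : 0 < r0 := by rw [hr0]; positivity
  have hδp : 0 < δ := by rw [hδ]; positivity
  obtain ⟨K, hK⟩ : ∃ K : Set (EuclideanSpace ℝ (Fin n)),
    K = Metric.closedBall 0 R ∩ {z | δ ≤ x1 z} := ⟨_, rfl⟩
  have hKc : IsCompact K := by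
    rw [hK]
    exact (isCompact_closedBall 0 R).inter_right (isClosed_le continuous_const hx1c)
  have hKs : K ⊆ halfSpace n := by
    intro z hz
    rw [hK] at hz
    exact lt_of_lt_of_le hδp hz.2
  have hin : ∀ z ∈ halfSpace n, m ≤ u z / U z → z ∈ K := by
    intro z hz hmz
    have hz' : 0 < x1 z := hz
    have hr := hnorm z hz
    rw [le_div_iff₀ (hUpos z hz), hUf z hz] at hmz
    have hub := (hb z hz).2
    have e : -a - 2 / (p - 1) = -β := by rw [hβ]; ring
    rw [e] at hub
    have hxa : 0 < x1 z ^ a := by positivity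
    have main : m * (1 + ‖z‖ ^ (-σ) + x1 z ^ (1 - 2 * a)) ≤ c * ‖z‖ ^ (-β) := by
      have : x1 z ^ a * (m * (1 + ‖z‖ ^ (-σ) + x1 z ^ (1 - 2 * a)))
          ≤ x1 z ^ a * (c * ‖z‖ ^ (-β)) := by linarith
      exact le_of_mul_le_mul_left this hxa
    have q1 : 0 < m * ‖z‖ ^ (-σ) := by positivity
    have q2 : 0 < m * x1 z ^ (1 - 2 * a) := by positivity
    have hrb : 0 < ‖z‖ ^ β := by positivity
    have i1 : m * ‖z‖ ^ β ≤ c := by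
      have : m ≤ c * ‖z‖ ^ (-β) := by linarith
      rw [Real.rpow_neg hr.le, ← div_eq_mul_inv, le_div_iff₀ hrb] at this
      exact this
    have i2 : m ≤ c * ‖z‖ ^ (σ - β) := by
      have h : m * ‖z‖ ^ (-σ) ≤ c * ‖z‖ ^ (-β) := by linarith
      have hs : 0 < ‖z‖ ^ σ := by positivity
      have h2 := mul_le_mul_of_nonneg_right h hs.le
      rw [mul_assoc, mul_assoc, ← Real.rpow_add hr, ← Real.rpow_add hr] at h2
      have e3 : -β + σ = σ - β := by ring
      rw [e3] at h2
      simpa using h2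
    have i3 : m * ‖z‖ ^ β ≤ c * x1 z ^ (2 * a - 1) := by
      have h : m * x1 z ^ (1 - 2 * a) ≤ c * ‖z‖ ^ (-β) := by linarith
      have e4 : 1 - 2 * a = -(2 * a - 1) := by ring
      have hx2 : 0 < x1 z ^ (2 * a - 1) := by positivity
      rw [e4, Real.rpow_neg hr.le, Real.rpow_neg hz'.le, ← div_eq_mul_inv, ← div_eq_mul_inv,
        div_le_div_iff₀ hx2 hrb] at h
      exact h
    have j2 : r0 ≤ ‖z‖ := by
      rw [hr0, Real.rpow_inv_le_iff_of_pos (by positivity) hr.le hβσ, div_le_iff₀ hc]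
      linarith
    have j2' : r0 ^ β ≤ ‖z‖ ^ β := Real.rpow_le_rpow hr0p.le j2 hβ0.le
    rw [hK]
    constructor
    · rw [mem_closedBall_zero_iff, hR, Real.le_rpow_inv_iff_of_pos hr.le (by positivity) hβ0,
        le_div_iff₀ hm0]
      linarith
    · change δ ≤ x1 z
      rw [hδ, Real.rpow_inv_le_iff_of_pos (by positivity) hz'.le (by linarith), div_le_iff₀ hc]
      have := mul_le_mul_of_nonneg_left j2' hm0.le
      linarith
  have hwK : w ∈ K := hin w hwd hm.le
  obtain ⟨x, hxK, hxmax⟩ := hKc.exists_isMaxOn ⟨w, hwK⟩ (hgc.mono hKs)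
  have hxh := hKs hxK
  have hmM : m ≤ u x / U x := by rw [hm]; exact hxmax hwK
  have hmax : ∀ z ∈ halfSpace n, u z / U z ≤ u x / U x := by
    intro z hz
    by_cases h : m ≤ u z / U z
    · exact hxmax (hin z hz h)
    · linarith
  refine no_max hn μ p a ha u x hxh (hopen.mem_nhds hxh)
    (hu.contDiffAt (hopen.mem_nhds hxh)) (hpos x hxh) (heq x hxh) (u x / U x) ?_ ?_
  · have := (div_mul_cancel₀ (u x) (hUpos x hxh).ne').symm
    rw [hU] at this ⊢
    exact this
  · intro z hz
    have := (div_le_iff₀ (hUpos z hz)).1 (hmax z hz)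
    rw [hU] at this ⊢
    exact this
end
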